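/- For n ≥ 2 let G(n) := ∑_{1 ≤ i < τ(n)} d_i/d_{i+1}, where 1 = d₁ < … < d_{τ(n)} = n are the divisors of n (and G(1) := 0), and let δ := 1 − (1 + log log 2)/log 2. Then there exist constants c₁, c₂ > 0 such that for all sufficiently large x: c₁·x·(log x)^{1−δ}/(log log x)^{3/2} ≤ x·log x − ∑_{n ≤ x} G(n) ≤ c₂·x·(log x)^{1−δ}/(log log x)^{3/2}. -/

import Mathlib

/-!
# The average of the sum of ratios of consecutive divisors

Since `∑_{n ≤ x} τ(n) = x log x + O(x)`, the deficit `x log x - ∑_{n ≤ x} G(n)` is, up to `O(x)`,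
the sum over `n ≤ x` of `τ(n) - 1 - G(n) = ∑ (1 - d_i / d_{i+1})`. For a single `n` this sum is
comparable to `NN n`, the number of dyadic intervals `[2^t, 2^(t+1))` containing a divisor of `n`:
the gaps inside one interval telescope to a bounded total, and a gap leading from one occupied
interval to another costs a bounded amount, of constant order on average (`gap_bounds`,
`reduction`). It remains to show
`∑_{n ≤ x} NN n ≍ x (log x)^(1-δ) / (log log x)^(3/2)`.

**Logarithmic sums.** Writing `log a = ∑_{p ∣ a} log p` and using the Chebyshev bound, the upper
bound follows from one for `∑ NN a / a` over squarefree `a ≤ x` (`upper_reduction`). For the lower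
bound a sum of `NN a / a` over any set of `a ≤ M` with `M ^ 3 ≤ x` is enough, because each such `a`
may be multiplied by a prime `p > M` (`lower_reduction`).

**Walks.** The primes are cut into blocks of reciprocal sum almost `log 2`, so that the `i`-th block
ends at `lam i` with `log (lam i) ≍ 2 ^ i` (`exists_blocks`, from the theorems of Mertens). A
squarefree number becomes a set `A` of primes, weighted by `1 / ∏ p`, and the number of its elements
among the first `l` blocks, minus `l`, is a walk. The total weight `Z` of the sets whose walk stays
below a barrier satisfies, up to negligible errors, the same recursion as an explicit first-passage
kernel `q` (`q_step_eq`, a binomial identity). Hence walks touching the barrier at the end have mass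
`≍ (e log 2)^V V^(-3/2)`, with uniform upper bounds for other starts and ends
(`Z_le_q`, `Z_ge_q`, `Z_le`).

**Upper bound.** Let `j` be the time at which the walk of `A` is maximal. The `k` primes above block
`j` multiply `NN` by at most `2 · 2^k`, and the part of `A` below contributes the logarithm of its
product, on average `O(2^j)`. The walks before and after `j` are independent and stay below
barriers, so summing over `j` gives `TT x ≪ (2 e log 2)^V V^(-3/2)` for `x ≤ lam V`
(`TT_upper`).

**Lower bound.** By Cauchy–Schwarz, `4^V ≤ NN(∏ A) · #coll A` for a set `A` of `V` primes, where
`coll A` consists of the pairs of subsets of `A` whose products share a dyadic interval. Over walks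
below the barrier that end on it, the mean of `#coll A` is `≪ 2^V`: given a pair of distinct subsets,
the largest prime in which they differ is confined to a short interval by the rest
(`coll_le`, `near_block`, `crossing`, `coll_sum`). Therefore `NN ≫ 2^V` on average over these sets,
also after discarding those with too large a product (`TT_lower`).

With `2^V ≍ log x`, both bounds have the shape `(2 e log 2)^V V^(-3/2)`, and
`2 e log 2 = 2^(2-δ)` (`base_pow`). Dividing by `log x` leaves `(log x)^(1-δ) / (log log x)^(3/2)`.
-/

open Filter Topology
open scoped Classical

/-- `G(n) = ∑_{1 ≤ i < τ(n)} d_i / d_{i+1}`, where `d_1 < d_2 < ⋯ < d_{τ(n)}`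
are the divisors of `n` (with `G(1) = 0`). -/
noncomputable def Gfun (n : ℕ) : ℝ :=
  let l := n.divisors.sort (· ≤ ·)
  ((l.zip l.tail).map (fun p => (p.1 : ℝ) / (p.2 : ℝ))).sum

/-- The Erdős–Ford–Tenenbaum constant `δ = 1 - (1 + log log 2)/log 2`. -/
noncomputable def deltaEFT : ℝ := 1 - (1 + Real.log (Real.log 2)) / Real.log 2

namespace EFT

/-! ### The first-passage kernel -/

/-- The first-passage kernel: `e ^ n` times the probability (Borel–Tanner) that the walk started at
`h` with steps `-1 + Poisson(1)` first reaches `0` at time `n`. It vanishes when `h > n` and, through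
the factor `h` (or division by zero), when `n = 0`. -/
noncomputable def q (n h : ℕ) : ℝ :=
  if h ≤ n then (h : ℝ) * (n : ℝ) ^ (n - h) / (n * (n - h).factorial) else 0

lemma q_nonneg (n h : ℕ) : 0 ≤ q n h := by
  unfold q; split_ifs <;> positivity

lemma q_zero (n : ℕ) : q n 0 = 0 := by
  unfold q; simp

lemma q_of_lt {n h : ℕ} (hn : n < h) : q n h = 0 := by
  unfold q; rw [if_neg (by omega)]

lemma sum_choose_mul (x : ℝ) (m : ℕ) :
    ∑ b ∈ Finset.range (m + 1), (m.choose b : ℝ) * x ^ (m - b) = (x + 1) ^ m := by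
  rw [add_comm x 1, add_pow]
  refine Finset.sum_congr rfl fun b _ => ?_
  simp [mul_comm]

lemma sum_choose_mul_id (x : ℝ) (m : ℕ) :
    ∑ b ∈ Finset.range (m + 2), ((m + 1).choose b : ℝ) * b * x ^ (m + 1 - b)
      = (m + 1) * (x + 1) ^ m := by
  rw [Finset.sum_range_succ']
  simp only [Nat.cast_zero, mul_zero, zero_mul, add_zero]
  rw [← sum_choose_mul, Finset.mul_sum]
  refine Finset.sum_congr rfl fun b _ => ?_
  have h := Nat.add_one_mul_choose_eq m b
  have h' : ((m : ℝ) + 1) * (m.choose b : ℝ) = ((m + 1).choose (b + 1) : ℝ) * (b + 1) := by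
    exact_mod_cast h
  have e : m + 1 - (b + 1) = m - b := by omega
  rw [e]
  push_cast
  rw [← h']
  ring

/-- The kernel satisfies the recursion obtained by conditioning on the first step, `b` being the
Poisson variable; this amounts to the binomial theorem and its derivative. -/
lemma q_step_eq (n g M : ℕ) (hn : 1 ≤ n) (hM : n < g + M) :
    ∑ b ∈ Finset.range M, (1 / (b.factorial : ℝ)) * q n (g + b) = q (n + 1) (g + 1) := by
  by_cases hg : n < g
  · rw [q_of_lt (by omega)]
    refine Finset.sum_eq_zero fun b _ => ?_
    rw [q_of_lt (by omega), mul_zero]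
  push Not at hg
  obtain ⟨m, rfl⟩ := Nat.exists_eq_add_of_le hg
  have hsub : Finset.range (m + 1) ⊆ Finset.range M := by
    intro b; simp only [Finset.mem_range]; omega
  rw [← Finset.sum_subset hsub (fun b _ hb => by
    simp only [Finset.mem_range, not_lt] at hb
    rw [q_of_lt (by omega), mul_zero])]
  have hn0 : ((g + m : ℕ) : ℝ) ≠ 0 := by
    have : 0 < g + m := by omega
    positivity
  have hterm : ∀ b ∈ Finset.range (m + 1), (1 / (b.factorial : ℝ)) * q (g + m) (g + b)
      = (1 / (((g + m : ℕ) : ℝ) * m.factorial)) *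
        (g * ((m.choose b : ℝ) * ((g + m : ℕ) : ℝ) ^ (m - b))
          + (m.choose b : ℝ) * b * ((g + m : ℕ) : ℝ) ^ (m - b)) := by
    intro b hb
    have hb' : b ≤ m := by simp only [Finset.mem_range] at hb; omega
    have hq : q (g + m) (g + b)
        = ((g + b : ℕ) : ℝ) * ((g + m : ℕ) : ℝ) ^ (m - b) / ((g + m : ℕ) * (m - b).factorial) := by
      unfold q
      rw [if_pos (by omega)]
      have : g + m - (g + b) = m - b := by omega
      rw [this]
    rw [hq, Nat.choose_eq_factorial_div_factorial hb',
      Nat.cast_div (Nat.factorial_mul_factorial_dvd_factorial hb') (by positivity)]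
    have h1 : (b.factorial : ℝ) ≠ 0 := by positivity
    have h2 : ((m - b).factorial : ℝ) ≠ 0 := by positivity
    have h3 : (m.factorial : ℝ) ≠ 0 := by positivity
    push_cast
    push_cast at hn0
    field_simp
  rw [Finset.sum_congr rfl hterm, ← Finset.mul_sum, Finset.sum_add_distrib, ← Finset.mul_sum,
    sum_choose_mul]
  unfold q
  rw [if_pos (by omega)]
  have e : g + m + 1 - (g + 1) = m := by omega
  rw [e]
  have h3 : (m.factorial : ℝ) ≠ 0 := by positivity
  have h4 : ((g : ℝ) + m + 1) ≠ 0 := by positivity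
  push_cast
  push_cast at hn0
  rcases m with _ | m
  · simp at hn0 ⊢
    field_simp
  · rw [sum_choose_mul_id]
    push_cast at *
    field_simp
    ring

lemma q_step_le (n g M : ℕ) (hn : 1 ≤ n) :
    ∑ b ∈ Finset.range M, (1 / (b.factorial : ℝ)) * q n (g + b) ≤ q (n + 1) (g + 1) := by
  rw [← q_step_eq n g (M + n + 1) hn (by omega)]
  refine Finset.sum_le_sum_of_subset_of_nonneg ?_ ?_
  · intro b; simp only [Finset.mem_range]; omega
  · intro b _ _
    have := q_nonneg n (g + b)
    positivity

/-- The decay factor `(m + 1) ^ (-3/2)` of ballot-type probabilities. -/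
noncomputable def dd (m : ℕ) : ℝ := 1 / (((m : ℝ) + 1) * √((m : ℝ) + 1))

lemma dd_pos (m : ℕ) : 0 < dd m := by unfold dd; positivity

lemma dd_anti {m n : ℕ} (h : m ≤ n) : dd n ≤ dd m := by
  unfold dd
  have : (m : ℝ) ≤ n := by exact_mod_cast h
  gcongr

lemma factorial_le (n : ℕ) (hn : 1 ≤ n) :
    (n.factorial : ℝ) ≤ Real.exp 1 * √n * ((n : ℝ) ^ n / Real.exp n) := by
  obtain ⟨m, rfl⟩ : ∃ m, n = m + 1 := ⟨n - 1, by omega⟩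
  have h := Stirling.stirlingSeq'_antitone (Nat.zero_le m)
  simp only [Function.comp, Nat.succ_eq_add_one, zero_add, Stirling.stirlingSeq_one] at h
  unfold Stirling.stirlingSeq at h
  have hp : (0 : ℝ) < ((m + 1 : ℕ) : ℝ) := by positivity
  rw [div_le_iff₀ (by positivity)] at h
  refine h.trans (le_of_eq ?_)
  rw [Real.sqrt_mul (by norm_num), div_pow, ← Real.exp_nat_mul]
  have : √(2 : ℝ) ≠ 0 := by positivity
  field_simp

lemma le_factorial (n : ℕ) (hn : 1 ≤ n) :
    √n * ((n : ℝ) ^ n / Real.exp n) ≤ (n.factorial : ℝ) := by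
  refine le_trans ?_ (Stirling.le_factorial_stirling n)
  rw [div_pow, ← Real.exp_nat_mul, mul_one]
  have : (n : ℝ) ≤ 2 * Real.pi * n := by
    have := Real.pi_gt_three
    have h0 : (0 : ℝ) ≤ n := by positivity
    nlinarith
  gcongr

/-- Upper bound for the kernel, from Stirling and `(m + 1)! ≤ (m + 1 - h)! (m + 1) ^ h`. -/
lemma q_le (m h : ℕ) : q (m + 1) h ≤ h * Real.exp (m + 1) * dd m := by
  by_cases hh : h ≤ m + 1
  swap
  · rw [q_of_lt (by omega)]
    have := dd_pos m
    positivity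
  have h1 := le_factorial (m + 1) (by omega)
  have h2 : ((m + 1).factorial : ℝ) ≤ (m + 1 - h).factorial * ((m + 1 : ℕ) : ℝ) ^ h := by
    have : (m + 1).factorial = (m + 1 - h).factorial * (m + 1).descFactorial h :=
      (Nat.factorial_mul_descFactorial hh).symm
    rw [this]
    have h5 := Nat.descFactorial_le_pow (m + 1) h
    exact_mod_cast Nat.mul_le_mul_left _ h5
  unfold q dd
  rw [if_pos hh]
  have hpow : ((m + 1 : ℕ) : ℝ) ^ (m + 1) = ((m + 1 : ℕ) : ℝ) ^ (m + 1 - h) * ((m + 1 : ℕ) : ℝ) ^ h := by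
    rw [← pow_add]; congr 1; omega
  have h6 := h1.trans h2
  have hN : (0 : ℝ) < ((m + 1 : ℕ) : ℝ) := by positivity
  have hs : (0 : ℝ) < √((m + 1 : ℕ) : ℝ) := by positivity
  rw [hpow] at h6
  have hP : (0 : ℝ) < ((m + 1 : ℕ) : ℝ) ^ h := by positivity
  have h7 : √((m + 1 : ℕ) : ℝ) * ((m + 1 : ℕ) : ℝ) ^ (m + 1 - h) / Real.exp ((m + 1 : ℕ) : ℝ) ≤ (m + 1 - h).factorial := by
    refine le_of_mul_le_mul_right (le_trans (le_of_eq ?_) h6) hP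
    ring
  rw [div_le_iff₀ (by positivity)] at h7 ⊢
  push_cast at *
  have e : (h : ℝ) * Real.exp (m + 1) * (1 / (((m : ℝ) + 1) * √((m : ℝ) + 1))) * (((m : ℝ) + 1) * (m + 1 - h).factorial)
    = h * ((m + 1 - h).factorial * Real.exp (m + 1)) / √((m : ℝ) + 1) := by
    field_simp
  rw [e, le_div_iff₀ hs]
  nlinarith [mul_le_mul_of_nonneg_left h7 (Nat.cast_nonneg (α := ℝ) h)]

/-- For `h = 1` the upper bound `q_le` is sharp up to a constant. -/
lemma q_ge_one (m : ℕ) : Real.exp m * dd m ≤ q (m + 1) 1 := by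
  have h1 := factorial_le (m + 1) (by omega)
  unfold q dd
  rw [if_pos (by omega), Nat.add_sub_cancel, Nat.factorial_succ] at *
  push_cast at *
  have hs : (0 : ℝ) < √((m : ℝ) + 1) := by positivity
  rw [mul_one_div, div_le_div_iff₀ (by positivity) (by positivity)]
  have e := Real.exp_add (m : ℝ) 1
  have : Real.exp m * (((m : ℝ) + 1) * m.factorial) ≤ √((m : ℝ) + 1) * (m + 1) ^ (m + 1) := by
    calc _ ≤ Real.exp m * (Real.exp 1 * √((m : ℝ) + 1) * (((m : ℝ) + 1) ^ (m + 1) / Real.exp (m + 1))) := by gcongr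
      _ = _ := by rw [e]; field_simp
  calc _ ≤ √((m : ℝ) + 1) * (m + 1) ^ (m + 1) := this
    _ = _ := by ring

/-- Lower bound for the kernel at time `2 * c`, the time at which walks below a barrier at height `c`
are compared with it. -/
lemma q_two_ge (c : ℕ) (hc : 1 ≤ c) :
    (2 * Real.exp 1) ^ c / (2 * Real.exp 1 * c) ≤ q (2 * c) c := by
  have h1 := factorial_le c hc
  have hc' : (1 : ℝ) ≤ c := by exact_mod_cast hc
  have hs : √(c : ℝ) ≤ c := by
    rw [Real.sqrt_le_left (by positivity)]
    nlinarith
  unfold q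
  rw [if_pos (by omega)]
  have e : 2 * c - c = c := by omega
  rw [e]
  push_cast
  rw [div_le_div_iff₀ (by positivity) (by positivity), mul_pow, mul_pow, ← Real.exp_nat_mul, mul_one]
  have : Real.exp c * (c.factorial : ℝ) ≤ Real.exp 1 * c * (c : ℝ) ^ c := by
    calc _ ≤ Real.exp c * (Real.exp 1 * √(c : ℝ) * ((c : ℝ) ^ c / Real.exp c)) := by gcongr
      _ = Real.exp 1 * √(c : ℝ) * (c : ℝ) ^ c := by field_simp
      _ ≤ _ := by gcongr
  calc _ = 2 ^ c * 2 * c * (Real.exp c * (c.factorial : ℝ)) := by ring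
    _ ≤ 2 ^ c * 2 * c * (Real.exp 1 * c * (c : ℝ) ^ c) := by gcongr
    _ = _ := by ring

/-- Bound for the walk kernel with start `c` and final distance `h`. -/
lemma q_quot_le (m c h : ℕ) (hc : 1 ≤ c) :
    q (m + 2 * c) h / q (2 * c) c ≤
      2 * Real.exp 1 * c * (Real.exp 1 / 2) ^ c * h * Real.exp m * dd m := by
  have h1 := q_two_ge c hc
  have hc' : (1 : ℝ) ≤ c := by exact_mod_cast hc
  have hpos : 0 < (2 * Real.exp 1) ^ c / (2 * Real.exp 1 * c) := by positivity
  have h2 := q_le (m + 2 * c - 1) h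
  have e : m + 2 * c - 1 + 1 = m + 2 * c := by omega
  rw [e] at h2
  have h3 : dd (m + 2 * c - 1) ≤ dd m := dd_anti (by omega)
  have e2 : ((m + 2 * c - 1 : ℕ) : ℝ) + 1 = m + 2 * c := by
    have : ((m + 2 * c - 1 + 1 : ℕ) : ℝ) = m + 2 * c := by rw [e]; push_cast; ring
    push_cast at this
    exact this
  rw [e2] at h2
  have hd := dd_pos m
  have hd2 := dd_pos (m + 2 * c - 1)
  calc q (m + 2 * c) h / q (2 * c) c
      ≤ (h * Real.exp (m + 2 * c) * dd m) / ((2 * Real.exp 1) ^ c / (2 * Real.exp 1 * c)) := by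
        gcongr
        exact h2.trans (by gcongr)
    _ = _ := by
        have : Real.exp (m + 2 * c) = Real.exp m * (Real.exp 1 ^ c * Real.exp 1 ^ c) := by
          rw [Real.exp_add, two_mul, Real.exp_add, ← Real.exp_nat_mul, mul_one]
        rw [this, mul_pow, div_pow]
        have : (2:ℝ) ^ c ≠ 0 := by positivity
        have : Real.exp 1 ^ c ≠ 0 := by positivity
        field_simp

/-- One of `j` and `V - j` is at least `V / 2`. -/
lemma dd_conv (V j : ℕ) (hj : j ≤ V) : dd j * dd (V - j) ≤ 4 * dd V * (dd j + dd (V - j)) := by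
  have key : ∀ i : ℕ, V ≤ 2 * i → dd i ≤ 4 * dd V := by
    intro i hi
    unfold dd
    have h1 : (V : ℝ) + 1 ≤ 2 * (i + 1) := by
      have : (V : ℝ) ≤ 2 * i := by exact_mod_cast hi
      linarith
    have h2 : √((V : ℝ) + 1) ≤ 2 * √((i : ℝ) + 1) := by
      rw [Real.sqrt_le_left (by positivity), mul_pow, Real.sq_sqrt (by positivity)]
      have : (0 : ℝ) ≤ i := by positivity
      linarith
    rw [mul_one_div, div_le_div_iff₀ (by positivity) (by positivity)]
    have := mul_le_mul h1 h2 (by positivity) (by positivity)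
    linarith
  have hd := dd_pos j
  have hd2 := dd_pos (V - j)
  have hd3 := dd_pos V
  rcases le_total V (2 * j) with h | h
  · have := key j h
    nlinarith [mul_pos hd3 hd]
  · have := key (V - j) (by omega)
    nlinarith [mul_pos hd3 hd2]

lemma summable_dd : Summable dd := by
  have h := (Real.summable_nat_rpow_inv (p := 3 / 2)).mpr (by norm_num)
  have h2 := (summable_nat_add_iff 1).mpr h
  refine h2.congr fun n => ?_
  unfold dd
  push_cast
  rw [one_div, show (3 / 2 : ℝ) = 1 + 1 / 2 by norm_num, Real.rpow_add (by positivity),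
    Real.rpow_one, Real.sqrt_eq_rpow]

/-- The sequence `dd` is stable under convolution, because it is summable and regularly decreasing. -/
lemma dd_conv_sum : ∃ C : ℝ, 0 < C ∧ ∀ V : ℕ,
    ∑ j ∈ Finset.range (V + 1), dd j * dd (V - j) ≤ C * dd V := by
  have h0 : 0 < ∑' n, dd n := summable_dd.tsum_pos (fun n => (dd_pos n).le) 0 (dd_pos 0)
  refine ⟨8 * ∑' n, dd n, by positivity, fun V => ?_⟩
  have h1 : ∑ j ∈ Finset.range (V + 1), dd j ≤ ∑' n, dd n :=
    summable_dd.sum_le_tsum _ (fun n _ => (dd_pos n).le)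
  have h2 : ∑ j ∈ Finset.range (V + 1), dd (V - j) = ∑ j ∈ Finset.range (V + 1), dd j := by
    have := Finset.sum_range_reflect dd (V + 1)
    simpa using this
  calc _ ≤ ∑ j ∈ Finset.range (V + 1), 4 * dd V * (dd j + dd (V - j)) := by
        refine Finset.sum_le_sum fun j hj => dd_conv V j ?_
        simp only [Finset.mem_range] at hj; omega
    _ = 8 * (∑ j ∈ Finset.range (V + 1), dd j) * dd V := by
        rw [← Finset.mul_sum, Finset.sum_add_distrib, h2]; ring
    _ ≤ _ := by
        have := dd_pos V
        gcongr

/-! ### Weighted sums over sets of primes -/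

/-- The weight `1 / ∏ p` of a set of primes, that is `1 / a` for the squarefree `a = ∏ p`. -/
noncomputable def wt (A : Finset ℕ) : ℝ := ∏ p ∈ A, (1 / (p : ℝ))

lemma wt_nonneg (A : Finset ℕ) : 0 ≤ wt A := Finset.prod_nonneg fun _ _ => by positivity

lemma wt_union {A B : Finset ℕ} (h : Disjoint A B) : wt (A ∪ B) = wt A * wt B :=
  Finset.prod_union h

lemma wt_insert {A : Finset ℕ} {p : ℕ} (h : p ∉ A) : wt (insert p A) = 1 / (p : ℝ) * wt A :=
  Finset.prod_insert h

lemma wt_empty : wt ∅ = 1 := by simp [wt]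

lemma wt_eq (A : Finset ℕ) : wt A = 1 / ((∏ p ∈ A, p : ℕ) : ℝ) := by
  unfold wt; simp

/-- A set together with one of its elements is the same as an element together with a set avoiding it. -/
lemma peel (U : Finset ℕ) (F : ℕ → Finset ℕ → ℝ) :
    ∑ A ∈ U.powerset, ∑ p ∈ A, F p (A.erase p) = ∑ p ∈ U, ∑ A ∈ (U.erase p).powerset, F p A := by
  rw [Finset.sum_sigma', Finset.sum_sigma']
  refine Finset.sum_bij' (fun x _ => ⟨x.2, x.1.erase x.2⟩) (fun x _ => ⟨insert x.1 x.2, x.1⟩)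
    ?_ ?_ ?_ ?_ ?_
  · rintro ⟨A, p⟩ h
    simp only [Finset.mem_sigma, Finset.mem_powerset] at h ⊢
    exact ⟨h.1 h.2, Finset.erase_subset_erase _ h.1⟩
  · rintro ⟨p, A⟩ h
    simp only [Finset.mem_sigma, Finset.mem_powerset] at h ⊢
    exact ⟨Finset.insert_subset h.1 (h.2.trans (Finset.erase_subset _ _)), Finset.mem_insert_self _ _⟩
  · rintro ⟨A, p⟩ h
    simp only [Finset.mem_sigma, Finset.mem_powerset] at h ⊢
    simp [Finset.insert_erase h.2]
  · rintro ⟨p, A⟩ h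
    simp only [Finset.mem_sigma, Finset.mem_powerset] at h ⊢
    have : p ∉ A := fun hp => by simpa using h.2 hp
    simp [Finset.erase_insert this]
  · rintro ⟨A, p⟩ h
    rfl

/-- The elementary symmetric sum of degree `b` of the reciprocals of the elements of `D`. -/
noncomputable def esum (D : Finset ℕ) (b : ℕ) : ℝ := ∑ A ∈ D.powersetCard b, wt A

/-- The sum of the reciprocals of the elements of `D`. -/
noncomputable def ssum (D : Finset ℕ) : ℝ := ∑ p ∈ D, 1 / (p : ℝ)

lemma esum_nonneg (D : Finset ℕ) (b : ℕ) : 0 ≤ esum D b := Finset.sum_nonneg fun _ _ => wt_nonneg _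

lemma esum_zero (D : Finset ℕ) : esum D 0 = 1 := by simp [esum, wt_empty]

lemma esum_eq (D : Finset ℕ) (b : ℕ) :
    esum D b = ∑ A ∈ D.powerset, if A.card = b then wt A else 0 := by
  rw [esum, Finset.powersetCard_eq_filter, Finset.sum_filter]

lemma esum_mono {D E : Finset ℕ} (h : D ⊆ E) (b : ℕ) : esum D b ≤ esum E b :=
  Finset.sum_le_sum_of_subset_of_nonneg (Finset.powersetCard_mono h) fun _ _ _ => wt_nonneg _

/-- Newton-type recursion: each set of `b + 1` elements arises from `b + 1` choices of a marked one. -/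
lemma esum_succ (D : Finset ℕ) (b : ℕ) :
    (b + 1 : ℝ) * esum D (b + 1) = ∑ p ∈ D, 1 / (p : ℝ) * esum (D.erase p) b := by
  have h := peel D (fun p A => if A.card = b then 1 / (p : ℝ) * wt A else 0)
  have h1 : ∑ A ∈ D.powerset, ∑ p ∈ A,
      (if (A.erase p).card = b then 1 / (p : ℝ) * wt (A.erase p) else 0)
      = (b + 1 : ℝ) * esum D (b + 1) := by
    rw [esum_eq, Finset.mul_sum]
    refine Finset.sum_congr rfl fun A _ => ?_
    have : ∀ p ∈ A, (if (A.erase p).card = b then 1 / (p : ℝ) * wt (A.erase p) else 0)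
        = if A.card = b + 1 then wt A else 0 := by
      intro p hp
      have hc := Finset.card_erase_add_one hp
      have hw : wt A = 1 / (p : ℝ) * wt (A.erase p) := by
        rw [← wt_insert (Finset.notMem_erase p A), Finset.insert_erase hp]
      by_cases hb : A.card = b + 1
      · rw [if_pos hb, if_pos (by omega), hw]
      · rw [if_neg hb, if_neg (by omega)]
    rw [Finset.sum_congr rfl this, Finset.sum_const, nsmul_eq_mul]
    split_ifs with hb
    · rw [hb]; push_cast; ring
    · simp
  rw [← h1, h]
  refine Finset.sum_congr rfl fun p _ => ?_
  rw [esum_eq, Finset.mul_sum]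
  refine Finset.sum_congr rfl fun A _ => ?_
  split_ifs <;> simp

/-- Elementary symmetric sums are dominated by the terms of the exponential series. -/
lemma esum_le (D : Finset ℕ) (b : ℕ) {s : ℝ} (hs : ssum D ≤ s) :
    esum D b ≤ s ^ b / b.factorial := by
  have hS : 0 ≤ ssum D := Finset.sum_nonneg fun _ _ => by positivity
  have hs0 : 0 ≤ s := hS.trans hs
  induction b with
  | zero => simp [esum_zero]
  | succ b ih =>
    have h := esum_succ D b
    have h2 : ∑ p ∈ D, 1 / (p : ℝ) * esum (D.erase p) b ≤ ssum D * esum D b := by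
      rw [ssum, Finset.sum_mul]
      refine Finset.sum_le_sum fun p _ => ?_
      have := esum_mono (Finset.erase_subset p D) b
      gcongr
    have h3 : ssum D * esum D b ≤ s * (s ^ b / b.factorial) := by
      have := esum_nonneg D b
      gcongr
    rw [Nat.factorial_succ]
    push_cast
    have : (b + 1 : ℝ) * esum D (b + 1) ≤ s * (s ^ b / b.factorial) := by linarith
    rw [le_div_iff₀ (by positivity)]
    have h4 : (b.factorial : ℝ) ≠ 0 := by positivity
    calc esum D (b + 1) * ((b + 1) * b.factorial)
        = ((b + 1 : ℝ) * esum D (b + 1)) * b.factorial := by ring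
      _ ≤ (s * (s ^ b / b.factorial)) * b.factorial := by gcongr
      _ = _ := by field_simp; ring

/-- Lower bound for elementary symmetric sums: deleting an element lowers the reciprocal sum by at
most `μ`, and at most `b` elements get deleted in the recursion `esum_succ`. -/
lemma esum_ge (b : ℕ) {μ : ℝ} (hμ : 0 ≤ μ) : ∀ (D : Finset ℕ) (_ : ∀ p ∈ D, 1 / (p : ℝ) ≤ μ)
    (_ : b * μ ≤ ssum D), (ssum D - b * μ) ^ b / b.factorial ≤ esum D b := by
  induction b with
  | zero => intro D _ _; simp [esum_zero]
  | succ b ih =>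
    intro D hD hS
    have h := esum_succ D b
    push_cast at hS ⊢
    have hb : (0 : ℝ) ≤ b := by positivity
    have h2 : ssum D * ((ssum D - (b + 1) * μ) ^ b / b.factorial)
        ≤ ∑ p ∈ D, 1 / (p : ℝ) * esum (D.erase p) b := by
      have hgen : ∀ y : ℝ, ssum D * y = ∑ p ∈ D, 1 / (p : ℝ) * y := fun y => by
        rw [ssum, Finset.sum_mul]
      rw [hgen]
      refine Finset.sum_le_sum fun p hp => ?_
      have hp1 := hD p hp
      have hse : ssum (D.erase p) = ssum D - 1 / (p : ℝ) := by
        unfold ssum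
        rw [← Finset.add_sum_erase D _ hp]; ring
      have := ih (D.erase p) (fun r hr => hD r (Finset.mem_of_mem_erase hr)) (by rw [hse]; linarith)
      rw [hse] at this
      refine mul_le_mul_of_nonneg_left (le_trans ?_ this) (by positivity)
      have : 0 ≤ ssum D - (b + 1) * μ := by linarith
      exact div_le_div_of_nonneg_right (pow_le_pow_left₀ this (by linarith) b) (by positivity)
    have h3 : (ssum D - (b + 1) * μ) * ((ssum D - (b + 1) * μ) ^ b / b.factorial) ≤
        ssum D * ((ssum D - (b + 1) * μ) ^ b / b.factorial) := by
      have : 0 ≤ ssum D - (b + 1) * μ := by linarith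
      refine mul_le_mul_of_nonneg_right ?_ (by positivity)
      nlinarith
    rw [Nat.factorial_succ]
    push_cast
    have h4 : (b.factorial : ℝ) ≠ 0 := by positivity
    rw [div_le_iff₀ (by positivity)]
    calc (ssum D - (b + 1) * μ) ^ (b + 1)
        = ((ssum D - (b + 1) * μ) * ((ssum D - (b + 1) * μ) ^ b / b.factorial)) * b.factorial := by
          field_simp; ring
      _ ≤ ((b + 1 : ℝ) * esum D (b + 1)) * b.factorial := by
          rw [h]
          exact mul_le_mul_of_nonneg_right (h3.trans h2) (by positivity)
      _ = _ := by ring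

/-- Distinctness of the primes costs only a factor `1 - 2 b (b + 1) μ`. -/
lemma esum_ge' (b : ℕ) {μ s : ℝ} (hμ : 0 ≤ μ) (hs : 1 / 2 ≤ s) (D : Finset ℕ)
    (hD : ∀ p ∈ D, 1 / (p : ℝ) ≤ μ) (hS : s - μ ≤ ssum D) :
    (1 - 2 * b * (b + 1) * μ) * (s ^ b / b.factorial) ≤ esum D b := by
  rcases Nat.eq_zero_or_pos b with rfl | hb
  · simp [esum_zero]
  have hb1 : (1 : ℝ) ≤ b := by exact_mod_cast hb
  by_cases hc : (b + 1) * μ ≤ s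
  · have h := esum_ge b hμ D hD (by linarith)
    refine le_trans ?_ h
    rw [mul_div_assoc']
    gcongr
    have h1 : (1 - (b + 1) * μ / s) ≥ 0 := by
      rw [ge_iff_le, sub_nonneg, div_le_one (by linarith)]; exact hc
    have h2 := one_add_mul_le_pow (a := -((b + 1) * μ / s)) (by linarith) b
    have h3 : 1 - 2 * b * (b + 1) * μ ≤ 1 + b * -((b + 1) * μ / s) := by
      have : (b + 1) * μ / s ≤ 2 * ((b + 1) * μ) := by
        rw [div_le_iff₀ (by linarith)]
        have : 0 ≤ (b + 1) * μ := by positivity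
        nlinarith
      nlinarith
    calc (1 - 2 * b * (b + 1) * μ) * s ^ b ≤ (1 + -((b + 1) * μ / s)) ^ b * s ^ b := by
          gcongr
          exact h3.trans h2
      _ = (s - (b + 1) * μ) ^ b := by
          rw [← mul_pow]; congr 1
          have : s ≠ 0 := by linarith
          field_simp; ring
      _ ≤ _ := by
          refine pow_le_pow_left₀ (by linarith) ?_ b
          linarith
  · push Not at hc
    refine le_trans ?_ (esum_nonneg D b)
    refine mul_nonpos_of_nonpos_of_nonneg ?_ (by positivity)
    nlinarith

/-! ### Walks -/

/-- Sets `A` of `k` elements in the blocks `j+1, …, j+m`, where `P i` is the union of the first `i`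
blocks, whose counting walk stays below a barrier: `A` has fewer than `l + c` elements in `P (j + l)`
for all `l ≤ m`. -/
noncomputable def paths (P : ℕ → Finset ℕ) (j m c k : ℕ) : Finset (Finset ℕ) :=
  (P (j + m) \ P j).powerset.filter
    (fun A => A.card = k ∧ ∀ l ≤ m, (A ∩ P (j + l)).card < l + c)

/-- The total weight of `paths P j m c k`. -/
noncomputable def Z (P : ℕ → Finset ℕ) (j m c k : ℕ) : ℝ := ∑ A ∈ paths P j m c k, wt A

lemma mem_paths {P : ℕ → Finset ℕ} {j m c k : ℕ} {A : Finset ℕ} :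
    A ∈ paths P j m c k ↔ A ⊆ P (j + m) \ P j ∧ A.card = k ∧
      ∀ l ≤ m, (A ∩ P (j + l)).card < l + c := by
  simp [paths]

lemma Z_nonneg (P : ℕ → Finset ℕ) (j m c k : ℕ) : 0 ≤ Z P j m c k :=
  Finset.sum_nonneg fun _ _ => wt_nonneg _

lemma Z_zero_of_le {P : ℕ → Finset ℕ} {j m c k : ℕ} (h : m + c ≤ k) : Z P j m c k = 0 := by
  unfold Z
  refine Finset.sum_eq_zero fun A hA => ?_
  rw [mem_paths] at hA
  have h1 := hA.2.2 m le_rfl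
  rw [Finset.inter_eq_left.mpr (hA.1.trans Finset.sdiff_subset), hA.2.1] at h1
  omega

lemma Z_base (P : ℕ → Finset ℕ) (j c k : ℕ) (hc : 1 ≤ c) :
    Z P j 0 c k = if k = 0 then 1 else 0 := by
  unfold Z
  have : paths P j 0 c k = if k = 0 then {∅} else ∅ := by
    ext A
    rw [mem_paths]
    simp only [add_zero, Finset.sdiff_self, Finset.subset_empty, nonpos_iff_eq_zero]
    split_ifs with hk
    · simp only [Finset.mem_singleton]
      constructor
      · exact fun h => h.1
      · rintro rfl
        refine ⟨rfl, by simp [hk], ?_⟩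
        rintro l rfl
        simp; omega
    · simp only [Finset.notMem_empty, iff_false]
      rintro ⟨rfl, h, _⟩
      simp at h; omega
  rw [this]
  split_ifs <;> simp [wt_empty]

/-- Splitting off the `b` elements of the last block. The barrier at the last time is the condition
`k < m + 1 + c`, so the rest is free to be any path of length `m`. -/
lemma Z_succ {P : ℕ → Finset ℕ} (hP : Monotone P) (j m c k : ℕ) (hk : k < m + 1 + c) :
    Z P j (m + 1) c k
      = ∑ b ∈ Finset.range (k + 1), esum (P (j + m + 1) \ P (j + m)) b * Z P j m c (k - b) := by
  have hmap : ∀ A ∈ paths P j (m + 1) c k,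
      (A ∩ (P (j + m + 1) \ P (j + m))).card ∈ Finset.range (k + 1) := by
    intro A hA
    rw [mem_paths] at hA
    have := Finset.card_le_card (Finset.inter_subset_left (s₁ := A) (s₂ := (P (j + m + 1) \ P (j + m))))
    simp only [Finset.mem_range]
    omega
  unfold Z
  rw [← Finset.sum_fiberwise_of_maps_to hmap]
  refine Finset.sum_congr rfl fun b hb => ?_
  have hbk : b ≤ k := by simp only [Finset.mem_range] at hb; omega
  unfold esum
  rw [Finset.sum_mul_sum, ← Finset.sum_product']
  have hmono : P (j + m) ⊆ P (j + m + 1) := hP (by omega)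
  have hPj : P j ⊆ P (j + m) := hP (by omega)
  refine Finset.sum_bij' (fun A _ => (A ∩ (P (j + m + 1) \ P (j + m)), A ∩ P (j + m)))
    (fun x _ => x.2 ∪ x.1) ?_ ?_ ?_ ?_ ?_
  · intro A hA
    rw [Finset.mem_filter, mem_paths] at hA
    obtain ⟨⟨hA1, hA2, hA3⟩, hA4⟩ := hA
    rw [Finset.mem_product, Finset.mem_powersetCard, mem_paths]
    refine ⟨⟨Finset.inter_subset_right, hA4⟩, ?_, ?_, ?_⟩
    · intro p hp
      have h1 := hA1 (Finset.mem_inter.mp hp).1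
      have h2 := (Finset.mem_inter.mp hp).2
      simp only [Finset.mem_sdiff] at h1 ⊢
      exact ⟨h2, h1.2⟩
    · have hdis : Disjoint (A ∩ (P (j + m + 1) \ P (j + m))) (A ∩ P (j + m)) := by
        rw [Finset.disjoint_left]
        intro p h1 h2
        simp only [Finset.mem_inter, Finset.mem_sdiff] at h1 h2
        exact h1.2.2 h2.2
      have hun : (A ∩ (P (j + m + 1) \ P (j + m))) ∪ (A ∩ P (j + m)) = A := by
        ext p
        simp only [Finset.mem_union, Finset.mem_inter, Finset.mem_sdiff]
        constructor
        · tauto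
        · intro hp
          have h1 := hA1 hp
          simp only [Finset.mem_sdiff] at h1
          have : p ∈ P (j + m + 1) := h1.1
          tauto
      have := Finset.card_union_of_disjoint hdis
      rw [hun, hA4, hA2] at this
      simp only
      omega
    · intro l hl
      have : A ∩ P (j + m) ∩ P (j + l) = A ∩ P (j + l) := by
        rw [Finset.inter_assoc, Finset.inter_eq_right.mpr (hP (by omega : j + l ≤ j + m))]
      simp only
      rw [this]
      exact hA3 l (by omega)
  · rintro ⟨B, A⟩ hx
    rw [Finset.mem_product, Finset.mem_powersetCard, mem_paths] at hx
    obtain ⟨⟨hB1, hB2⟩, hA1, hA2, hA3⟩ := hx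
    simp only at hB1 hB2 hA1 hA2 hA3 ⊢
    have hdis : Disjoint A B := by
      rw [Finset.disjoint_left]
      intro p h1 h2
      have h3 := hA1 h1
      have h4 := hB1 h2
      simp only [Finset.mem_sdiff] at h3 h4
      exact h4.2 h3.1
    have hint : (A ∪ B) ∩ (P (j + m + 1) \ P (j + m)) = B := by
      ext p
      simp only [Finset.mem_union, Finset.mem_inter, Finset.mem_sdiff]
      constructor
      · rintro ⟨h1 | h1, h2⟩
        · have h3 := hA1 h1
          simp only [Finset.mem_sdiff] at h3
          exact absurd h3.1 h2.2
        · exact h1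
      · intro hp
        have h4 := hB1 hp
        simp only [Finset.mem_sdiff] at h4
        exact ⟨Or.inr hp, h4⟩
    rw [Finset.mem_filter, mem_paths, hint]
    refine ⟨⟨?_, ?_, ?_⟩, hB2⟩
    · intro p hp
      rcases Finset.mem_union.mp hp with h | h
      · have h3 := hA1 h
        simp only [Finset.mem_sdiff] at h3 ⊢
        exact ⟨hmono h3.1, h3.2⟩
      · have h3 := hB1 h
        simp only [Finset.mem_sdiff] at h3 ⊢
        exact ⟨h3.1, fun hh => h3.2 (hPj hh)⟩
    · rw [Finset.card_union_of_disjoint hdis]; omega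
    · intro l hl
      rcases Nat.lt_or_ge m l with h | h
      · refine lt_of_le_of_lt (Finset.card_le_card Finset.inter_subset_left) ?_
        rw [Finset.card_union_of_disjoint hdis]; omega
      · have : (A ∪ B) ∩ P (j + l) = A ∩ P (j + l) := by
          ext p
          simp only [Finset.mem_union, Finset.mem_inter]
          constructor
          · rintro ⟨h1 | h1, h2⟩
            · exact ⟨h1, h2⟩
            · have h3 := hB1 h1
              simp only [Finset.mem_sdiff] at h3
              exact absurd (hP (by omega : j + l ≤ j + m) h2) h3.2
          · tauto
        rw [this]
        exact hA3 l h
  · intro A hA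
    rw [Finset.mem_filter, mem_paths] at hA
    obtain ⟨⟨hA1, -, -⟩, -⟩ := hA
    ext p
    simp only [Finset.mem_union, Finset.mem_inter, Finset.mem_sdiff]
    constructor
    · tauto
    · intro hp
      have h1 := hA1 hp
      simp only [Finset.mem_sdiff] at h1
      have : p ∈ P (j + m + 1) := h1.1
      tauto
  · rintro ⟨B, A⟩ hx
    rw [Finset.mem_product, Finset.mem_powersetCard, mem_paths] at hx
    obtain ⟨⟨hB1, hB2⟩, hA1, hA2, hA3⟩ := hx
    simp only at hB1 hA1 ⊢
    have e1 : (A ∪ B) ∩ (P (j + m + 1) \ P (j + m)) = B := by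
      ext p
      have h3 := @hA1 p
      have h4 := @hB1 p
      simp only [Finset.mem_sdiff] at h3 h4
      simp only [Finset.mem_union, Finset.mem_inter, Finset.mem_sdiff]
      tauto
    have e2 : (A ∪ B) ∩ P (j + m) = A := by
      ext p
      have h3 := @hA1 p
      have h4 := @hB1 p
      simp only [Finset.mem_sdiff] at h3 h4
      simp only [Finset.mem_union, Finset.mem_inter]
      tauto
    rw [e1, e2]
  · intro A hA
    rw [Finset.mem_filter, mem_paths] at hA
    obtain ⟨⟨hA1, -, -⟩, -⟩ := hA
    simp only
    rw [← wt_union]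
    · congr 1
      ext p
      simp only [Finset.mem_union, Finset.mem_inter, Finset.mem_sdiff]
      have h1 := @hA1 p
      simp only [Finset.mem_sdiff] at h1
      have e : j + (m + 1) = j + m + 1 := rfl
      rw [e] at h1
      tauto
    · rw [Finset.disjoint_left]
      intro p h1 h2
      simp only [Finset.mem_inter, Finset.mem_sdiff] at h1 h2
      exact h1.2.2 h2.2

/-- The walk sums are dominated by the first-passage kernel. Its time may be shifted by any `t` with
`q t c > 0`: both sides obey the same recursion in `m`, and they agree at `m = k = 0`. -/
lemma Z_le_q {P : ℕ → Finset ℕ} (hP : Monotone P) {s : ℝ} (hs : 0 ≤ s) (j c t : ℕ) (hc : 1 ≤ c)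
    (ht : 1 ≤ t) (hq : 0 < q t c) (m : ℕ) :
    ∀ (_ : ∀ i < m, ssum (P (j + i + 1) \ P (j + i)) ≤ s) (k : ℕ),
      Z P j m c k ≤ s ^ k * (q (m + t) (m + c - k) / q t c) := by
  induction m with
  | zero =>
    intro _ k
    rw [Z_base _ _ _ _ hc]
    split_ifs with hk
    · subst hk
      simp [hq.ne']
    · have := q_nonneg (0 + t) (0 + c - k)
      positivity
  | succ m ih =>
    intro hS k
    have hnn := q_nonneg (m + 1 + t) (m + 1 + c - k)
    by_cases hk : k < m + 1 + c
    · rw [Z_succ hP _ _ _ _ hk]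
      have h1 : ∀ b ∈ Finset.range (k + 1),
          esum (P (j + m + 1) \ P (j + m)) b * Z P j m c (k - b) ≤
            s ^ k / q t c * ((1 / (b.factorial : ℝ)) * q (m + t) (m + c - k + b)) := by
        intro b hb
        have hbk : b ≤ k := by simp only [Finset.mem_range] at hb; omega
        have h2 := esum_le (P (j + m + 1) \ P (j + m)) b (hS m (by omega))
        have h3 := ih (fun i hi => hS i (by omega)) (k - b)
        have e : m + c - (k - b) = m + c - k + b := by omega
        rw [e] at h3
        have h4 := Z_nonneg P j m c (k - b)
        calc _ ≤ (s ^ b / b.factorial) * (s ^ (k - b) * (q (m + t) (m + c - k + b) / q t c)) := by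
              gcongr
          _ = _ := by
              have : s ^ k = s ^ b * s ^ (k - b) := by rw [← pow_add]; congr 1; omega
              rw [this]; ring
      refine (Finset.sum_le_sum h1).trans ?_
      rw [← Finset.mul_sum]
      have h5 := q_step_le (m + t) (m + c - k) (k + 1) (by omega)
      have e1 : m + t + 1 = m + 1 + t := by ring
      have e2 : m + c - k + 1 = m + 1 + c - k := by omega
      rw [e1, e2] at h5
      calc _ ≤ s ^ k / q t c * q (m + 1 + t) (m + 1 + c - k) := by gcongr
        _ = _ := by ring
    · rw [Z_zero_of_le (by omega)]
      positivity

/-- Matching lower bound for the barrier `c = 1`. The error `μ i` measures both the deficit of the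
reciprocal sum of a block and the size of the reciprocals in it; at most `i + 1` elements are taken
from the block with index `i`, so the relative losses of `esum_ge'` add up to the sum subtracted here. -/
lemma Z_ge_q {P : ℕ → Finset ℕ} (hP : Monotone P) {s : ℝ} (hs : 1 / 2 ≤ s) (j : ℕ) (μ : ℕ → ℝ)
    (hμ : ∀ i, 0 ≤ μ i)
    (m : ℕ) :
    ∀ (_ : ∀ i < m, s - μ i ≤ ssum (P (j + i + 1) \ P (j + i)))
      (_ : ∀ i < m, ∀ p ∈ P (j + i + 1) \ P (j + i), 1 / (p : ℝ) ≤ μ i)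
      (_ : ∑ i ∈ Finset.range m, 2 * ((i : ℝ) + 1) * (i + 2) * μ i ≤ 1) (k : ℕ),
      (1 - ∑ i ∈ Finset.range m, 2 * ((i : ℝ) + 1) * (i + 2) * μ i) *
        (s ^ k * q (m + 1) (m + 1 - k)) ≤ Z P j m 1 k := by
  induction m with
  | zero =>
    intro _ _ _ k
    rw [Z_base _ _ _ _ le_rfl]
    split_ifs with hk
    · subst hk
      simp [q]
    · have : 0 + 1 - k = 0 := by omega
      rw [this, q_zero]; simp
  | succ m ih =>
    intro hS hp hμs k
    rw [Finset.sum_range_succ] at hμs ⊢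
    set σ := ∑ i ∈ Finset.range m, 2 * ((i : ℝ) + 1) * (i + 2) * μ i with hσ
    have hσ0 : 0 ≤ σ := Finset.sum_nonneg fun i _ => by have := hμ i; positivity
    have hτ : 0 ≤ 2 * ((m : ℝ) + 1) * (m + 2) * μ m := by have := hμ m; positivity
    set τ := 2 * ((m : ℝ) + 1) * (m + 2) * μ m with hτd
    have hσ1 : σ ≤ 1 := by linarith
    by_cases hk : k < m + 1 + 1
    · rw [Z_succ hP _ _ _ _ hk]
      have h1 : ∀ b ∈ Finset.range (k + 1),
          (1 - (σ + τ)) * s ^ k * ((1 / (b.factorial : ℝ)) * q (m + 1) (m + 1 - k + b)) ≤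
          esum (P (j + m + 1) \ P (j + m)) b * Z P j m 1 (k - b) := by
        intro b hb
        have hbk : b ≤ k := by simp only [Finset.mem_range] at hb; omega
        have h2 := esum_ge' b (hμ m) hs (P (j + m + 1) \ P (j + m)) (hp m (by omega))
          (hS m (by omega))
        have h3 := ih (fun i hi => hS i (by omega)) (fun i hi => hp i (by omega)) hσ1 (k - b)
        have e : m + 1 - (k - b) = m + 1 - k + b := by omega
        rw [e] at h3
        have hbm : (b : ℝ) ≤ m + 1 := by
          have : b ≤ m + 1 := by omega
          exact_mod_cast this
        have hlow : (1 - τ) * (s ^ b / b.factorial) ≤ esum (P (j + m + 1) \ P (j + m)) b := by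
          refine le_trans ?_ h2
          refine mul_le_mul_of_nonneg_right ?_ (by positivity)
          rw [hτd]
          have h5 : 2 * (b : ℝ) * (b + 1) ≤ 2 * (m + 1) * (m + 2) := by
            have : (0 : ℝ) ≤ b := by positivity
            nlinarith
          have := mul_le_mul_of_nonneg_right h5 (hμ m)
          linarith
        have hsk : s ^ k = s ^ b * s ^ (k - b) := by rw [← pow_add]; congr 1; omega
        have hqn := q_nonneg (m + 1) (m + 1 - k + b)
        have hτ1 : 0 ≤ 1 - τ := by linarith
        have hσ1' : 0 ≤ 1 - σ := by linarith
        calc (1 - (σ + τ)) * s ^ k * ((1 / (b.factorial : ℝ)) * q (m + 1) (m + 1 - k + b))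
            ≤ ((1 - τ) * (1 - σ)) * s ^ k * ((1 / (b.factorial : ℝ)) * q (m + 1) (m + 1 - k + b)) := by
              gcongr
              nlinarith
          _ = ((1 - τ) * (s ^ b / b.factorial)) *
              ((1 - σ) * (s ^ (k - b) * q (m + 1) (m + 1 - k + b))) := by rw [hsk]; ring
          _ ≤ _ := by
              refine mul_le_mul hlow h3 (by positivity) (esum_nonneg _ _)
      refine le_trans (le_of_eq ?_) (Finset.sum_le_sum h1)
      rw [← Finset.mul_sum, q_step_eq (m + 1) (m + 1 - k) (k + 1) (by omega) (by omega)]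
      have e2 : m + 1 - k + 1 = m + 1 + 1 - k := by omega
      rw [e2]
      ring
    · have : m + 1 + 1 - k = 0 := by omega
      rw [this, q_zero, mul_zero, mul_zero]
      exact Z_nonneg _ _ _ _ _

/-- The uniform ballot-type bound. The shift `t = 2 * c` in `Z_le_q` produces the factor
`(e / 2) ^ c`, small enough to be summed against `(log 2) ^ c`. -/
lemma Z_le {P : ℕ → Finset ℕ} (hP : Monotone P) {s : ℝ} (hs : 0 ≤ s)
    (hS : ∀ i, ssum (P (i + 1) \ P i) ≤ s) (j m c k : ℕ) (hc : 1 ≤ c) :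
    Z P j m c k ≤ s ^ k *
      (2 * Real.exp 1 * c * (Real.exp 1 / 2) ^ c * (m + c - k : ℕ) * Real.exp m * dd m) := by
  have hq : 0 < q (2 * c) c := by
    refine lt_of_lt_of_le ?_ (q_two_ge c hc)
    have : (0 : ℝ) < c := by exact_mod_cast hc
    positivity
  refine (Z_le_q hP hs j c (2 * c) hc (by omega) hq m (fun i _ => hS _) k).trans ?_
  gcongr
  exact q_quot_le m c _ hc

/-! ### Theorems of Mertens -/

/-- The primes up to `n`. -/
noncomputable def pr (n : ℕ) : Finset ℕ := (Finset.Icc 0 n).filter Nat.Prime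

lemma mem_pr {n p : ℕ} : p ∈ pr n ↔ p ≤ n ∧ p.Prime := by simp [pr]

lemma pr_mono : Monotone pr := fun a b h p hp => by
  rw [mem_pr] at hp ⊢; exact ⟨hp.1.trans h, hp.2⟩

lemma theta_eq (n : ℕ) : Chebyshev.theta n = ∑ p ∈ pr n, Real.log p := by
  rw [Chebyshev.theta_eq_sum_Icc, Nat.floor_natCast]; rfl

lemma theta_le (n : ℕ) : ∑ p ∈ pr n, Real.log p ≤ Real.log 4 * n := by
  rw [← theta_eq]; exact Chebyshev.theta_le_log4_mul_x (by positivity)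

/-- The logarithm of the prime factorisation of `n!`. -/
lemma log_factorial_eq (n : ℕ) :
    Real.log (n.factorial) = ∑ p ∈ pr n, (n.factorial.factorization p : ℝ) * Real.log p := by
  rw [Real.log_nat_eq_sum_factorization, Finsupp.sum]
  refine Finset.sum_subset ?_ ?_
  · intro p hp
    rw [Nat.support_factorization, Nat.mem_primeFactors] at hp
    rw [mem_pr]; exact ⟨(hp.1.dvd_factorial).1 hp.2.1, hp.1⟩
  · intro p _ hp
    rw [Finsupp.notMem_support_iff.1 hp]; simp

lemma fac_val_ge {n p : ℕ} (hp : p.Prime) :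
    (n : ℝ) / p - 1 ≤ n.factorial.factorization p := by
  have h1 : n / p ≤ n.factorial.factorization p := by
    rw [Nat.factorization_factorial hp (b := Nat.log p n + 2) (by omega)]
    have := Finset.single_le_sum (f := fun i => n / p ^ i) (s := Finset.Ico 1 (Nat.log p n + 2))
      (fun _ _ => Nat.zero_le _) (a := 1) (by simp)
    simpa using this
  have h2 : (n : ℝ) / p < (n / p : ℕ) + 1 := by
    rw [← Nat.floor_div_eq_div (K := ℝ)]
    exact Nat.lt_floor_add_one _
  have h3 : ((n / p : ℕ) : ℝ) ≤ n.factorial.factorization p := by exact_mod_cast h1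
  linarith

lemma fac_val_le {n p : ℕ} (hp : p.Prime) :
    (n.factorial.factorization p : ℝ) ≤ n / (p - 1 : ℝ) := by
  have h := Nat.sub_one_mul_factorization_factorial (n := n) hp
  have h1 : (p - 1) * n.factorial.factorization p ≤ n := by omega
  have h2 : (1 : ℝ) < p := by exact_mod_cast hp.one_lt
  rw [le_div_iff₀ (by linarith)]
  have h3 : (((p - 1 : ℕ) : ℝ)) * n.factorial.factorization p ≤ n := by exact_mod_cast h1
  rw [Nat.cast_sub hp.one_lt.le] at h3
  push_cast at h3; linarith

lemma log_le_two_sqrt {x : ℝ} (hx : 0 < x) : Real.log x ≤ 2 * √x := by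
  have h := Real.log_le_sub_one_of_pos (Real.sqrt_pos.2 hx)
  rw [Real.log_sqrt hx.le] at h
  linarith

lemma sum_pr_dd (n : ℕ) : ∑ p ∈ pr n, dd (p - 1) ≤ ∑' m, dd m := by
  have h : ∑ p ∈ pr n, dd (p - 1) = ∑ m ∈ (pr n).image (fun p => p - 1), dd m := by
    rw [Finset.sum_image]
    intro a ha b hb hab
    have h1 := (mem_pr.1 ha).2.pos
    have h2 := (mem_pr.1 hb).2.pos
    simp only at hab
    omega
  rw [h]
  exact summable_dd.sum_le_tsum _ (fun m _ => (dd_pos m).le)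

/-- The tail from higher prime powers in Legendre's formula is summable. -/
lemma log_div_le {p : ℕ} (hp : p.Prime) :
    Real.log p / (p - 1 : ℝ) ≤ Real.log p / p + 4 * dd (p - 1) := by
  have h2 : (2 : ℝ) ≤ p := by exact_mod_cast hp.two_le
  have h0 : (0 : ℝ) < p := by linarith
  have hl := log_le_two_sqrt h0
  have e : dd (p - 1) = 1 / (p * √p) := by
    unfold dd
    rw [Nat.cast_sub hp.one_lt.le]; norm_num
  rw [e, ← sub_le_iff_le_add']
  have hs : √(p : ℝ) * √p = p := Real.mul_self_sqrt h0.le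
  have hs0 : 0 < √(p : ℝ) := Real.sqrt_pos.2 h0
  have : Real.log p / (p - 1 : ℝ) - Real.log p / p = Real.log p / (p * (p - 1)) := by
    have : (p - 1 : ℝ) ≠ 0 := by linarith
    field_simp; ring
  rw [this]
  calc Real.log p / (p * (p - 1)) ≤ 2 * √p / (p * (p / 2)) := by
        have h3 : (p : ℝ) / 2 ≤ p - 1 := by linarith
        have h4 : (0 : ℝ) < p * (p / 2) := by positivity
        have h5 : 0 ≤ Real.log p := Real.log_nonneg (by linarith)
        gcongr
    _ = 4 * (1 / (p * √p)) := by
        field_simp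
        nlinarith [hs]

/-- The first theorem of Mertens, obtained by comparing `log n! = n log n + O(n)` with the prime
factorisation of `n!`. -/
lemma mertens_one : ∃ K : ℝ, 0 < K ∧ ∀ n : ℕ, 1 ≤ n →
    |(∑ p ∈ pr n, Real.log p / p) - Real.log n| ≤ K := by
  have hT : 0 ≤ ∑' m, dd m := tsum_nonneg fun m => (dd_pos m).le
  refine ⟨1 + 4 * (∑' m, dd m) + Real.log 4, by
    have := Real.log_pos (x := 4) (by norm_num)
    positivity, fun n hn => ?_⟩
  have hn0 : (0 : ℝ) < n := by exact_mod_cast hn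
  have hlogp : ∀ p ∈ pr n, 0 ≤ Real.log p := fun p _ => Real.log_natCast_nonneg p
  have hub : Real.log n.factorial ≤ n * Real.log n := by
    have : (n.factorial : ℝ) ≤ (n : ℝ) ^ n := by exact_mod_cast Nat.factorial_le_pow n
    have h := Real.log_le_log (by positivity) this
    rwa [Real.log_pow] at h
  have hlb : n * Real.log n - n ≤ Real.log n.factorial := by
    have h := le_factorial n hn
    have h1 : (1 : ℝ) ≤ √n := Real.one_le_sqrt.2 (by exact_mod_cast hn)
    have h2 : (n : ℝ) ^ n / Real.exp n ≤ n.factorial := by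
      refine le_trans ?_ h
      have : 0 ≤ (n : ℝ) ^ n / Real.exp n := by positivity
      nlinarith
    have h3 := Real.log_le_log (by positivity) h2
    rwa [Real.log_div (by positivity) (by positivity), Real.log_pow, Real.log_exp] at h3
  rw [log_factorial_eq] at hub hlb
  have h1 : n * (∑ p ∈ pr n, Real.log p / p) - Real.log 4 * n ≤
      ∑ p ∈ pr n, (n.factorial.factorization p : ℝ) * Real.log p := by
    have := theta_le n
    have h2 : ∑ p ∈ pr n, ((n : ℝ) / p - 1) * Real.log p ≤
      ∑ p ∈ pr n, (n.factorial.factorization p : ℝ) * Real.log p :=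
      Finset.sum_le_sum fun p hp =>
        mul_le_mul_of_nonneg_right (fac_val_ge (mem_pr.1 hp).2) (hlogp p hp)
    have h3 : ∑ p ∈ pr n, ((n : ℝ) / p - 1) * Real.log p =
        n * (∑ p ∈ pr n, Real.log p / p) - ∑ p ∈ pr n, Real.log p := by
      rw [Finset.mul_sum, ← Finset.sum_sub_distrib]
      exact Finset.sum_congr rfl fun p _ => by ring
    linarith
  have h2 : ∑ p ∈ pr n, (n.factorial.factorization p : ℝ) * Real.log p ≤
      n * ((∑ p ∈ pr n, Real.log p / p) + 4 * ∑' m, dd m) := by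
    have h3 : (∑ p ∈ pr n, Real.log p / (p - 1 : ℝ)) ≤
        (∑ p ∈ pr n, Real.log p / p) + 4 * ∑' m, dd m := by
      calc _ ≤ ∑ p ∈ pr n, (Real.log p / p + 4 * dd (p - 1)) :=
            Finset.sum_le_sum fun p hp => log_div_le (mem_pr.1 hp).2
        _ ≤ _ := by
            rw [Finset.sum_add_distrib, ← Finset.mul_sum]
            linarith [sum_pr_dd n]
    refine le_trans ?_ (mul_le_mul_of_nonneg_left h3 hn0.le)
    rw [Finset.mul_sum]
    refine Finset.sum_le_sum fun p hp => ?_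
    calc _ ≤ n / (p - 1 : ℝ) * Real.log p :=
          mul_le_mul_of_nonneg_right (fac_val_le (mem_pr.1 hp).2) (hlogp p hp)
      _ = _ := by ring
  have h4 := Real.log_pos (x := 4) (by norm_num)
  rw [abs_le]
  constructor
  · have : (n : ℝ) * (Real.log n - 1) ≤ n * ((∑ p ∈ pr n, Real.log p / p) + 4 * ∑' m, dd m) := by
      linarith
    have := le_of_mul_le_mul_left this hn0
    linarith
  · have : (n : ℝ) * ((∑ p ∈ pr n, Real.log p / p) - Real.log 4) ≤ n * Real.log n := by linarith
    have := le_of_mul_le_mul_left this hn0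
    linarith

lemma pr_succ (n : ℕ) (f : ℕ → ℝ) :
    ∑ p ∈ pr (n + 1), f p = ∑ p ∈ pr n, f p + if (n + 1).Prime then f (n + 1) else 0 := by
  have h : pr (n + 1) = if (n + 1).Prime then insert (n + 1) (pr n) else pr n := by
    ext p
    split_ifs with h
    · simp only [Finset.mem_insert, mem_pr]
      constructor
      · rintro ⟨h1, h2⟩
        by_cases h3 : p = n + 1
        · exact Or.inl h3
        · exact Or.inr ⟨by omega, h2⟩
      · rintro (h1 | h1)
        · subst h1; exact ⟨le_rfl, h⟩
        · exact ⟨by omega, h1.2⟩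
    · simp only [mem_pr]
      constructor
      · rintro ⟨h1, h2⟩
        have : p ≠ n + 1 := by rintro rfl; exact h h2
        exact ⟨by omega, h2⟩
      · rintro h1; exact ⟨by omega, h1.2⟩
  rw [h]
  split_ifs with h1
  · rw [Finset.sum_insert (by simp [mem_pr])]; ring
  · ring

/-- The second theorem of Mertens, up to a bounded error. Partial summation takes the form of a bound
for the increments of `E(n) - log log n - (A(n) - log n) / log n` by those of `-(K + 1) / log n`,
where `A(n) = ∑_{p ≤ n} log p / p` and `E(n) = ∑_{p ≤ n} 1 / p`. -/
lemma mertens_two : ∃ C : ℝ, 0 < C ∧ ∀ n : ℕ, 2 ≤ n →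
    |ssum (pr n) - Real.log (Real.log n)| ≤ C := by
  obtain ⟨K, hK, hA⟩ := mertens_one
  set A : ℕ → ℝ := fun n => ∑ p ∈ pr n, Real.log p / p with hAd
  set Φ : ℕ → ℝ := fun n => ssum (pr n) - Real.log (Real.log n) - (A n - Real.log n) / Real.log n
    with hΦ
  have hl2 : 0 < Real.log 2 := Real.log_pos (by norm_num)
  have key : ∀ n : ℕ, 2 ≤ n →
      |Φ (n + 1) - Φ n| ≤ (K + 1) * (1 / Real.log n - 1 / Real.log (n + 1 : ℕ)) := by
    intro n hn
    have hn2 : (2 : ℝ) ≤ n := by exact_mod_cast hn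
    set x := Real.log n with hx
    set y := Real.log (n + 1 : ℕ) with hy
    have hx0 : 0 < x := Real.log_pos (by linarith)
    have hxy : x < y := Real.log_lt_log (by linarith) (by push_cast; linarith)
    have hy0 : 0 < y := hx0.trans hxy
    have hyx1 : y - x ≤ 1 := by
      rw [hx, hy, ← Real.log_div (by positivity) (by positivity)]
      refine (Real.log_le_sub_one_of_pos (by positivity)).trans ?_
      push_cast
      rw [add_div, div_self (by linarith), add_sub_cancel_left, div_le_one (by linarith)]
      linarith
    obtain ⟨e, he1, he2⟩ : ∃ e : ℝ, ssum (pr (n + 1)) = ssum (pr n) + e ∧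
        A (n + 1) = A n + e * y := by
      refine ⟨if (n + 1).Prime then 1 / ((n + 1 : ℕ) : ℝ) else 0, pr_succ n _, ?_⟩
      rw [hAd]; simp only
      rw [pr_succ n]
      congr 1
      split_ifs <;> ring
    have hR : |A n - x| ≤ K := hA n (by omega)
    have hlog : Real.log (y / x) = Real.log y - Real.log x :=
      Real.log_div hy0.ne' hx0.ne'
    have hd : Φ (n + 1) - Φ n = ((y - x) / y - Real.log (y / x)) + (A n - x) * (1 / x - 1 / y) := by
      rw [hΦ]; simp only
      rw [he1, he2, ← hy, ← hx, hlog]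
      field_simp; ring
    have hu : Real.log (y / x) ≤ y / x - 1 := Real.log_le_sub_one_of_pos (by positivity)
    have hl : 1 - x / y ≤ Real.log (y / x) := by
      have := Real.one_sub_inv_le_log_of_pos (x := y / x) (by positivity)
      rwa [inv_div] at this
    have hd0 : 0 ≤ 1 / x - 1 / y := by
      rw [sub_nonneg]; exact one_div_le_one_div_of_le hx0 hxy.le
    rw [hd]
    refine (abs_add_le _ _).trans ?_
    rw [abs_mul, abs_of_nonneg hd0, add_comm, add_mul]
    refine add_le_add (mul_le_mul_of_nonneg_right hR hd0) ?_
    have h1 : (y / x - 1) - (1 - x / y) = (y - x) * (1 / x - 1 / y) := by field_simp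
    have h2 : (y - x) * (1 / x - 1 / y) ≤ 1 * (1 / x - 1 / y) :=
      mul_le_mul_of_nonneg_right hyx1 hd0
    have h3 : (y - x) / y = 1 - x / y := by field_simp
    rw [h3, abs_le]
    constructor <;> linarith
  have tel : ∀ n : ℕ, 2 ≤ n →
      |Φ n - Φ 2| ≤ (K + 1) * (1 / Real.log 2 - 1 / Real.log n) := by
    intro n hn
    induction n, hn using Nat.le_induction with
    | base => simp
    | succ n hn ih =>
      have := key n hn
      have h3 := abs_sub_le (Φ (n + 1)) (Φ n) (Φ 2)
      calc _ ≤ _ := h3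
        _ ≤ _ := add_le_add this ih
        _ = _ := by ring
  refine ⟨|Φ 2| + (K + 1) / Real.log 2 + K / Real.log 2, by positivity, fun n hn => ?_⟩
  have hn2 : (2 : ℝ) ≤ n := by exact_mod_cast hn
  have hln : Real.log 2 ≤ Real.log n := Real.log_le_log (by norm_num) hn2
  have hln0 : 0 < Real.log n := by linarith
  have h1 := tel n hn
  have h2 : |(A n - Real.log n) / Real.log n| ≤ K / Real.log 2 := by
    rw [abs_div, abs_of_pos hln0]
    exact div_le_div₀ hK.le (hA n (by omega)) hl2 hln
  have h3 : (K + 1) * (1 / Real.log 2 - 1 / Real.log n) ≤ (K + 1) / Real.log 2 := by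
    have : 0 < 1 / Real.log n := by positivity
    rw [div_eq_mul_one_div (K + 1)]
    refine mul_le_mul_of_nonneg_left (by linarith) (by linarith)
  have e : ssum (pr n) - Real.log (Real.log n) =
      Φ 2 + (Φ n - Φ 2) + (A n - Real.log n) / Real.log n := by rw [hΦ]; ring
  rw [e]
  refine (abs_add_le _ _).trans (add_le_add ((abs_add_le _ _).trans (add_le_add le_rfl (h1.trans h3))) h2)

/-! ### Blocks of primes -/

lemma ssum_sdiff {N M : ℕ} (h : N ≤ M) : ssum (pr M \ pr N) = ssum (pr M) - ssum (pr N) := by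
  unfold ssum
  rw [← Finset.sum_sdiff (pr_mono h)]; ring

lemma ssum_mono {D E : Finset ℕ} (h : D ⊆ E) : ssum D ≤ ssum E :=
  Finset.sum_le_sum_of_subset_of_nonneg h fun _ _ _ => by positivity

lemma ssum_pr_succ_le (n : ℕ) : ssum (pr (n + 1)) ≤ ssum (pr n) + 1 / ((n : ℝ) + 1) := by
  unfold ssum
  rw [pr_succ n]
  gcongr
  split_ifs
  · push_cast; rfl
  · positivity

lemma ssum_pr_sub_le {N M : ℕ} (hN : 1 ≤ N) (h : N ≤ M) :
    ssum (pr M) - ssum (pr N) ≤ Real.log M - Real.log N := by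
  induction M, h using Nat.le_induction with
  | base => simp
  | succ M h ih =>
    have h1 := ssum_pr_succ_le M
    have hM : (0 : ℝ) < M := by exact_mod_cast (by omega : 0 < M)
    have h2 := Real.one_sub_inv_le_log_of_pos (x := ((M : ℝ) + 1) / M) (by positivity)
    rw [Real.log_div (by positivity) hM.ne'] at h2
    have h3 : 1 - (((M : ℝ) + 1) / M)⁻¹ = 1 / ((M : ℝ) + 1) := by
      rw [inv_div]; field_simp; ring
    push_cast
    linarith

lemma ssum_pr_unbounded (B : ℝ) : ∃ M, B < ssum (pr M) := by
  obtain ⟨C, hC, h⟩ := mertens_two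
  have ht : Tendsto (fun n : ℕ => Real.log (Real.log n)) atTop atTop :=
    Real.tendsto_log_atTop.comp (Real.tendsto_log_atTop.comp tendsto_natCast_atTop_atTop)
  obtain ⟨M, hM1, hM2⟩ := ((ht.eventually_gt_atTop (B + C)).and (eventually_ge_atTop 2)).exists
  have := (abs_le.1 (h M hM2)).1
  exact ⟨M, by linarith⟩

/-- Greedy choice of the next block endpoint: the largest `M` for which the reciprocal sum over
`(N, M]` does not exceed `log 2`. -/
lemma block_step (N : ℕ) (hN : 1 ≤ N) : ∃ M, 2 * N ≤ M ∧
    ssum (pr M \ pr N) ≤ Real.log 2 ∧ Real.log 2 < ssum (pr M \ pr N) + 1 / ((M : ℝ) + 1) := by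
  have hex : ∃ M, Real.log 2 < ssum (pr M) - ssum (pr N) := by
    obtain ⟨M, hM⟩ := ssum_pr_unbounded (Real.log 2 + ssum (pr N))
    exact ⟨M, by linarith⟩
  have h1 := Nat.find_spec hex
  have h2 : ∀ m < Nat.find hex, ¬ _ := fun m hm => Nat.find_min hex hm
  have h3 : 2 * N < Nat.find hex := by
    by_contra hcon
    have h4 := ssum_mono (pr_mono (not_lt.1 hcon))
    have h5 := ssum_pr_sub_le hN (by omega : N ≤ 2 * N)
    have hN' : (0 : ℝ) < N := by exact_mod_cast hN
    push_cast at h5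
    rw [Real.log_mul (by norm_num) hN'.ne'] at h5
    linarith
  obtain ⟨M, hM⟩ : ∃ M, Nat.find hex = M + 1 := ⟨Nat.find hex - 1, by omega⟩
  have h6 := h2 M (by omega)
  rw [hM] at h1 h3
  refine ⟨M, by omega, ?_, ?_⟩
  · rw [ssum_sdiff (by omega)]; linarith
  · rw [ssum_sdiff (by omega)]
    have := ssum_pr_succ_le M
    linarith

/-- Block endpoints `lam i` such that the primes in `(lam i, lam (i + 1)]` have reciprocal sum just
below `log 2`; then `log (lam i) ≍ 2 ^ i`. The field `short` is a Chebyshev bound for the primes of a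
block in a short interval. -/
structure Blocks (lam : ℕ → ℕ) (C : ℝ) : Prop where
  C_pos : 0 < C
  zero : lam 0 = 1
  mono : Monotone lam
  two_pow_le : ∀ i, 2 ^ i ≤ lam i
  sum_le : ∀ i, ssum (pr (lam (i + 1)) \ pr (lam i)) ≤ Real.log 2
  le_sum : ∀ i, Real.log 2 - 1 / 2 ^ i ≤ ssum (pr (lam (i + 1)) \ pr (lam i))
  inv_le : ∀ i, ∀ p ∈ pr (lam (i + 1)) \ pr (lam i), 1 / (p : ℝ) ≤ 1 / 2 ^ i
  log_le : ∀ i, Real.log (lam i) ≤ C * 2 ^ i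
  le_log : ∀ i, 2 ^ i ≤ C * Real.log (lam i + 1)
  short : ∀ i, ∀ U : ℝ, 0 < U →
    ssum ((pr (lam (i + 1)) \ pr (lam i)).filter (fun p : ℕ => U / 2 < (p : ℝ) ∧ (p : ℝ) < 2 * U)) ≤ C / 2 ^ i

/-- Greedily chosen endpoints work: the reciprocal sum up to `lam i` is `i log 2 + O(1)`, so
`log (lam i) ≍ 2 ^ i` by `mertens_two`. -/
lemma exists_blocks : ∃ lam C, Blocks lam C := by
  choose! f hf1 hf2 hf3 using block_step
  set lam : ℕ → ℕ := fun i => f^[i] 1 with hlam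
  have h0 : lam 0 = 1 := rfl
  have hs : ∀ i, lam (i + 1) = f (lam i) := fun i => Function.iterate_succ_apply' f i 1
  have hpow : ∀ i, 2 ^ i ≤ lam i := by
    intro i
    induction i with
    | zero => rw [h0]; norm_num
    | succ i ih =>
      rw [hs, pow_succ]
      have := hf1 (lam i) (le_trans Nat.one_le_two_pow ih)
      omega
  have hone : ∀ i, 1 ≤ lam i := fun i => le_trans Nat.one_le_two_pow (hpow i)
  have hmono : Monotone lam := monotone_nat_of_le_succ fun i => by
    rw [hs]; have := hf1 (lam i) (hone i); omega
  have hpowR : ∀ i, (2 : ℝ) ^ i ≤ lam i := fun i => by exact_mod_cast hpow i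
  have hle : ∀ i, ssum (pr (lam (i + 1)) \ pr (lam i)) ≤ Real.log 2 := fun i => by
    rw [hs]; exact hf2 _ (hone i)
  have hge : ∀ i, Real.log 2 - 1 / 2 ^ i ≤ ssum (pr (lam (i + 1)) \ pr (lam i)) := fun i => by
    have h1 := hf3 _ (hone i)
    rw [← hs] at h1
    have h2 : (2 : ℝ) ^ i ≤ lam (i + 1) + 1 := by
      have := hpowR i
      have h3 : (lam i : ℝ) ≤ lam (i + 1) := by exact_mod_cast hmono (Nat.le_succ i)
      linarith
    have h3 : 1 / ((lam (i + 1) : ℝ) + 1) ≤ 1 / 2 ^ i :=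
      one_div_le_one_div_of_le (by positivity) h2
    linarith
  have htot : ∀ i, ssum (pr (lam i)) ≤ i * Real.log 2 ∧
      i * Real.log 2 - 2 * (1 - 1 / 2 ^ i) ≤ ssum (pr (lam i)) := by
    intro i
    induction i with
    | zero =>
      have : pr 1 = ∅ := by
        ext p; simp only [mem_pr, Finset.notMem_empty, iff_false, not_and]
        intro h hp; have := hp.two_le; omega
      rw [h0, this]; simp [ssum]
    | succ i ih =>
      have h1 := hle i
      have h2 := hge i
      rw [ssum_sdiff (hmono (Nat.le_succ i))] at h1 h2
      have h3 : (1 : ℝ) / 2 ^ (i + 1) = 1 / 2 ^ i / 2 := by rw [pow_succ]; field_simp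
      rw [h3]
      push_cast
      constructor <;> linarith [ih.1, ih.2]
  obtain ⟨C0, hC0, hM⟩ := mertens_two
  have hlog : ∀ i, 1 ≤ i → Real.log (lam i) ≤ Real.exp C0 * 2 ^ i ∧
      2 ^ i ≤ Real.exp (C0 + 2) * Real.log (lam i) := by
    intro i hi
    have h2 : 2 ≤ lam i := le_trans (by simpa using Nat.pow_le_pow_right (n := 2) (by norm_num) hi) (hpow i)
    have h2R : (2 : ℝ) ≤ lam i := by exact_mod_cast h2
    have hl0 : 0 < Real.log (lam i) := Real.log_pos (by linarith)
    have h := abs_le.1 (hM _ h2)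
    have ht := htot i
    have e : (2 : ℝ) ^ i = Real.exp (i * Real.log 2) := by
      rw [Real.exp_nat_mul, Real.exp_log (by norm_num)]
    have hpos : (0 : ℝ) < 1 / 2 ^ i := by positivity
    constructor
    · rw [e, ← Real.exp_add, ← Real.log_le_iff_le_exp hl0]
      linarith [h.1, ht.1]
    · rw [e]
      conv_rhs => rw [← Real.exp_log hl0]
      rw [← Real.exp_add, Real.exp_le_exp]
      linarith [h.2, ht.2]
  have hl2 : 0 < Real.log 2 := Real.log_pos (by norm_num)
  set C1 := Real.exp (C0 + 2) + 1 / Real.log 2 with hC1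
  have hC1pos : 0 < C1 := by positivity
  have hlogle : ∀ i, Real.log (lam i) ≤ C1 * 2 ^ i := by
    intro i
    rcases Nat.eq_zero_or_pos i with rfl | hi
    · rw [h0]; simp; positivity
    · refine (hlog i hi).1.trans ?_
      have : Real.exp C0 ≤ Real.exp (C0 + 2) := Real.exp_le_exp.2 (by linarith)
      have h3 : 0 < 1 / Real.log 2 := by positivity
      exact mul_le_mul_of_nonneg_right (by linarith) (by positivity)
  have hlelog : ∀ i, 2 ^ i ≤ C1 * Real.log (lam i + 1) := by
    intro i
    have h1 : (1 : ℝ) ≤ lam i := by exact_mod_cast hone i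
    rcases Nat.eq_zero_or_pos i with rfl | hi
    · rw [h0]
      have : (1 / Real.log 2) * Real.log 2 = 1 := by field_simp
      have h4 : 0 < Real.exp (C0 + 2) * Real.log 2 := by positivity
      norm_num
      rw [hC1, add_mul]
      norm_num at this h4 ⊢
      linarith
    · refine (hlog i hi).2.trans ?_
      have h3 : Real.log (lam i) ≤ Real.log (lam i + 1) := Real.log_le_log (by linarith) (by linarith)
      have h4 : 0 ≤ Real.log (lam i) := Real.log_nonneg h1
      have h5 : 0 < 1 / Real.log 2 := by positivity
      exact mul_le_mul (by linarith) h3 h4 hC1pos.le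
  have hmem : ∀ i, ∀ p ∈ pr (lam (i + 1)) \ pr (lam i), p.Prime ∧ lam i + 1 ≤ p := by
    intro i p hp
    rw [Finset.mem_sdiff, mem_pr, mem_pr] at hp
    refine ⟨hp.1.2, ?_⟩
    by_contra hcon
    exact hp.2 ⟨by omega, hp.1.2⟩
  set C := C1 * (1 + 4 * Real.log 4) with hC
  have hl4 : 0 < Real.log 4 := Real.log_pos (by norm_num)
  have hCC : C1 ≤ C := by rw [hC]; nlinarith
  refine ⟨lam, C, by positivity, h0, hmono, hpow, hle, hge, ?_, ?_, ?_, ?_⟩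
  · intro i p hp
    have h1 := (hmem i p hp).2
    have h2 : (lam i : ℝ) + 1 ≤ p := by exact_mod_cast h1
    exact one_div_le_one_div_of_le (by positivity) (by linarith [hpowR i])
  · intro i
    exact (hlogle i).trans (mul_le_mul_of_nonneg_right hCC (by positivity))
  · intro i
    refine (hlelog i).trans (mul_le_mul_of_nonneg_right hCC (Real.log_nonneg ?_))
    have : (0 : ℝ) ≤ lam i := by positivity
    linarith
  · intro i U hU
    set S := (pr (lam (i + 1)) \ pr (lam i)).filter (fun p : ℕ => U / 2 < (p : ℝ) ∧ (p : ℝ) < 2 * U) with hS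
    have hcard : (S.card : ℝ) * (2 ^ i / C1) ≤ Real.log 4 * (2 * U) := by
      calc (S.card : ℝ) * (2 ^ i / C1) = ∑ p ∈ S, (2 ^ i / C1 : ℝ) := by simp
        _ ≤ ∑ p ∈ S, Real.log p := by
            refine Finset.sum_le_sum fun p hp => ?_
            have hp1 := (hmem i p (Finset.mem_filter.1 hp).1).2
            have h2 : (lam i : ℝ) + 1 ≤ p := by exact_mod_cast hp1
            rw [div_le_iff₀ hC1pos, mul_comm]
            refine (hlelog i).trans (mul_le_mul_of_nonneg_left ?_ hC1pos.le)
            exact Real.log_le_log (by positivity) h2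
        _ ≤ ∑ p ∈ pr ⌊2 * U⌋₊, Real.log p := by
            refine Finset.sum_le_sum_of_subset_of_nonneg ?_ fun p _ _ => Real.log_natCast_nonneg p
            intro p hp
            have hp1 := Finset.mem_filter.1 hp
            rw [mem_pr]
            exact ⟨Nat.le_floor hp1.2.2.le, (hmem i p hp1.1).1⟩
        _ ≤ Real.log 4 * ⌊2 * U⌋₊ := theta_le _
        _ ≤ _ := mul_le_mul_of_nonneg_left (Nat.floor_le (by positivity)) hl4.le
    have h1 : ssum S ≤ S.card * (2 / U) := by
      calc ssum S ≤ ∑ p ∈ S, 2 / U := by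
            refine Finset.sum_le_sum fun p hp => ?_
            have hp1 := (Finset.mem_filter.1 hp).2.1
            have := one_div_le_one_div_of_le (by positivity) hp1.le
            rwa [one_div_div] at this
        _ = _ := by simp
    refine h1.trans ?_
    rw [le_div_iff₀ (by positivity)]
    calc (S.card : ℝ) * (2 / U) * 2 ^ i = (S.card : ℝ) * (2 ^ i / C1) * (2 * C1 / U) := by
          field_simp
      _ ≤ Real.log 4 * (2 * U) * (2 * C1 / U) :=
          mul_le_mul_of_nonneg_right hcard (by positivity)
      _ = 4 * Real.log 4 * C1 := by field_simp; ring
      _ ≤ C := by rw [hC]; nlinarith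

/-! ### Reduction to occupied dyadic intervals -/

/-- The number of dyadic intervals `[2 ^ t, 2 ^ (t + 1))` that contain a divisor of `n`. -/
noncomputable def NN (n : ℕ) : ℕ := (n.divisors.image (Nat.log 2)).card

/-- The position of `a` inside its dyadic interval, a number in `[1, 2)` for `a ≥ 1`. -/
noncomputable def uu (a : ℕ) : ℝ := a / 2 ^ Nat.log 2 a

lemma uu_ge {a : ℕ} (ha : 1 ≤ a) : 1 ≤ uu a := by
  unfold uu
  rw [le_div_iff₀ (by positivity), one_mul]
  exact_mod_cast Nat.pow_log_le_self 2 (by omega)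

lemma uu_le (a : ℕ) : uu a ≤ 2 := by
  unfold uu
  rw [div_le_iff₀ (by positivity)]
  have := Nat.lt_pow_succ_log_self (b := 2) (by norm_num) a
  rw [pow_succ'] at this
  exact_mod_cast this.le

lemma eq_uu (a : ℕ) : (a : ℝ) = uu a * 2 ^ Nat.log 2 a := by unfold uu; field_simp

/-- The sum of ratios of consecutive entries. -/
noncomputable def rs (l : List ℕ) : ℝ :=
  ((l.zip l.tail).map (fun p => (p.1 : ℝ) / (p.2 : ℝ))).sum

lemma rs_cons (a b : ℕ) (t : List ℕ) : rs (a :: b :: t) = (a : ℝ) / b + rs (b :: t) := by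
  simp [rs]

/-- One gap `1 - a / b`: inside a dyadic interval it is comparable to the increment of `uu`; otherwise
it is at most `1`, and it is bounded below by a constant after adding a telescoping term in `uu`. -/
lemma gap_step {a b : ℕ} (ha : 1 ≤ a) (hab : a < b) :
    (Nat.log 2 a = Nat.log 2 b → 1 - (a : ℝ) / b ≤ uu b - uu a ∧
      (uu b - uu a) / 2 ≤ 1 - (a : ℝ) / b) ∧
    (Nat.log 2 a < Nat.log 2 b → 1 - (a : ℝ) / b ≤ 2 + uu b - uu a ∧
      1 / 4 + (uu b - uu a) / 2 ≤ 1 - (a : ℝ) / b) := by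
  have ha1 := uu_ge ha
  have hb1 := uu_ge (ha.trans hab.le)
  have ha2 := uu_le a
  have hb2 := uu_le b
  have hb0 : 0 < uu b := by linarith
  have haR : (0 : ℝ) < a := by exact_mod_cast ha
  have hbR : (0 : ℝ) < b := by exact_mod_cast ha.trans hab.le
  constructor
  · intro h
    have e : (a : ℝ) / b = uu a / uu b := by
      rw [eq_uu a, eq_uu b, h]; field_simp
    have hlt : uu a ≤ uu b := by
      have : (a : ℝ) ≤ b := by exact_mod_cast hab.le
      unfold uu; rw [h]; gcongr
    rw [e, one_sub_div hb0.ne']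
    constructor
    · rw [div_le_iff₀ hb0]; nlinarith
    · rw [le_div_iff₀ hb0]; nlinarith
  · intro h
    have h1 : (a : ℝ) / b ≤ uu a / (2 * uu b) := by
      have h2 : (2 : ℝ) * 2 ^ Nat.log 2 a ≤ 2 ^ Nat.log 2 b := by
        rw [← pow_succ']; exact pow_le_pow_right₀ (by norm_num) h
      rw [eq_uu a, eq_uu b, div_le_div_iff₀ (by positivity) (by positivity)]
      have : 0 ≤ uu a * uu b := by positivity
      nlinarith
    have h0 : 0 < (a : ℝ) / b := by positivity
    constructor
    · linarith
    · have h3 : uu a / (2 * uu b) ≤ 1 - (1 / 4 + (uu b - uu a) / 2) := by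
        rw [div_le_iff₀ (by positivity)]
        nlinarith [mul_nonneg (sub_nonneg.2 ha1) (sub_nonneg.2 hb1),
          mul_nonneg (sub_nonneg.2 hb1) (sub_nonneg.2 hb2)]
      linarith

/-- Summing `gap_step` along an increasing list, the terms in `uu` telescope and the number of
dyadic intervals occupied by the list remains. -/
lemma gap_list : ∀ (t : List ℕ) (a : ℕ), 1 ≤ a → (a :: t).Pairwise (· < ·) →
    ((a :: t).length : ℝ) - 1 - rs (a :: t) ≤
        2 * (((a :: t).toFinset.image (Nat.log 2)).card - 1) + (2 - uu a) ∧
      (((a :: t).toFinset.image (Nat.log 2)).card - 1 : ℝ) / 4 - uu a / 2 ≤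
        ((a :: t).length : ℝ) - 1 - rs (a :: t) := by
  intro t
  induction t with
  | nil =>
    intro a ha _
    have := uu_ge ha
    have := uu_le a
    simp [rs]
    constructor <;> linarith
  | cons b t ih =>
    intro a ha hs
    have hs1 := List.pairwise_cons.1 hs
    have hab : a < b := hs1.1 b (by simp)
    obtain ⟨i1, i2⟩ := ih b (by omega) hs1.2
    obtain ⟨g1, g2⟩ := gap_step ha hab
    rw [rs_cons, List.toFinset_cons (a := a), Finset.image_insert]
    rw [List.length_cons (a := a)]
    have hlogab : Nat.log 2 a ≤ Nat.log 2 b := Nat.log_mono_right hab.le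
    rcases hlogab.eq_or_lt with h | h
    · rw [Finset.insert_eq_of_mem (by
        rw [Finset.mem_image]; exact ⟨b, by simp, h.symm⟩)]
      obtain ⟨j1, j2⟩ := g1 h
      push_cast at i1 i2 ⊢
      constructor <;> linarith
    · rw [Finset.card_insert_of_notMem (by
        rw [Finset.mem_image]
        rintro ⟨c, hc, hc2⟩
        have : b ≤ c := by
          simp only [List.mem_toFinset, List.mem_cons] at hc
          rcases hc with rfl | hc
          · exact le_rfl
          · exact ((List.pairwise_cons.1 hs1.2).1 c hc).le
        have := Nat.log_mono_right (b := 2) this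
        omega)]
      obtain ⟨j1, j2⟩ := g2 h
      push_cast at i1 i2 ⊢
      constructor <;> linarith

/-- For each `n`, the sum `τ(n) - 1 - G(n)` of the gaps `1 - d_i / d_{i+1}` is comparable to `NN n`. -/
lemma gap_bounds {n : ℕ} (hn : 1 ≤ n) :
    (n.divisors.card : ℝ) - 1 - Gfun n ≤ 2 * NN n ∧
      (NN n : ℝ) / 4 - 2 ≤ (n.divisors.card : ℝ) - 1 - Gfun n := by
  have hl := (Finset.sortedLT_sort n.divisors).pairwise
  have hlen : (n.divisors.sort (· ≤ ·)).length = n.divisors.card := Finset.length_sort _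
  have hfin : (n.divisors.sort (· ≤ ·)).toFinset = n.divisors := Finset.sort_toFinset _ _
  have hG : Gfun n = rs (n.divisors.sort (· ≤ ·)) := rfl
  have hmem : ∀ x ∈ n.divisors.sort (· ≤ ·), 1 ≤ x := fun x hx =>
    Nat.pos_of_mem_divisors ((Finset.mem_sort _).1 hx)
  have hN : NN n = (Finset.image (Nat.log 2) (n.divisors.sort (· ≤ ·)).toFinset).card := by
    rw [hfin]; rfl
  rw [hG, ← hlen, hN]
  clear hG hN
  generalize n.divisors.sort (· ≤ ·) = l at *
  cases l with
  | nil =>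
    exfalso
    have : (1 : ℕ) ∈ n.divisors := by simp; omega
    rw [← hfin] at this; simp at this
  | cons a t =>
    have ha := hmem a (by simp)
    have h1 := uu_ge ha
    have h2 := uu_le a
    obtain ⟨i1, i2⟩ := gap_list t a ha hl
    constructor <;> linarith

/-- The average of the divisor function, with the trivial error term. -/
lemma sum_tau (x : ℕ) (hx : 1 ≤ x) :
    |∑ n ∈ Finset.Icc 1 x, (n.divisors.card : ℝ) - x * Real.log x| ≤ x := by
  have hI : Finset.Icc 1 x = Finset.Ioc 0 x := rfl
  have h0 : ∑ n ∈ Finset.Icc 1 x, (n.divisors.card : ℝ) =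
      ∑ n ∈ Finset.Icc 1 x, ((x / n : ℕ) : ℝ) := by
    have := ArithmeticFunction.sum_Ioc_sigma0_eq_sum_div x
    simp only [ArithmeticFunction.sigma_zero_apply] at this
    rw [hI]
    exact_mod_cast this
  have hxR : (1 : ℝ) ≤ x := by exact_mod_cast hx
  have hH : ((harmonic x : ℚ) : ℝ) = ∑ n ∈ Finset.Icc 1 x, 1 / (n : ℝ) := by
    rw [harmonic_eq_sum_Icc]; push_cast; simp
  have h1 := harmonic_le_one_add_log x
  have h2 := log_add_one_le_harmonic x
  rw [hH] at h1 h2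
  have h3 : Real.log x ≤ Real.log ((x + 1 : ℕ) : ℝ) :=
    Real.log_le_log (by linarith) (by push_cast; linarith)
  have h4 : ∑ n ∈ Finset.Icc 1 x, ((x / n : ℕ) : ℝ) ≤ x * ∑ n ∈ Finset.Icc 1 x, 1 / (n : ℝ) := by
    rw [Finset.mul_sum]
    refine Finset.sum_le_sum fun n _ => ?_
    rw [mul_one_div]; exact Nat.cast_div_le
  have h5 : x * ∑ n ∈ Finset.Icc 1 x, 1 / (n : ℝ) - x ≤ ∑ n ∈ Finset.Icc 1 x, ((x / n : ℕ) : ℝ) := by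
    have e : (x : ℝ) = ∑ n ∈ Finset.Icc 1 x, (1 : ℝ) := by simp
    nth_rewrite 2 [e]
    rw [Finset.mul_sum, ← Finset.sum_sub_distrib]
    refine Finset.sum_le_sum fun n _ => ?_
    have : (x : ℝ) / n < (x / n : ℕ) + 1 := by
      rw [← Nat.floor_div_eq_div (K := ℝ)]
      exact Nat.lt_floor_add_one _
    rw [mul_one_div]; linarith
  rw [h0, abs_le]
  constructor <;> nlinarith

/-- The deficit in the theorem is comparable to `∑ n ≤ x, NN n` up to `O(x)`. -/
lemma reduction (x : ℕ) (hx : 1 ≤ x) :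
    (x : ℝ) * Real.log x - ∑ n ∈ Finset.Icc 1 x, Gfun n ≤
        2 * ∑ n ∈ Finset.Icc 1 x, (NN n : ℝ) + 2 * x ∧
      (∑ n ∈ Finset.Icc 1 x, (NN n : ℝ)) / 4 - 2 * x ≤
        (x : ℝ) * Real.log x - ∑ n ∈ Finset.Icc 1 x, Gfun n := by
  have h := abs_le.1 (sum_tau x hx)
  have e : (x : ℝ) = ∑ n ∈ Finset.Icc 1 x, (1 : ℝ) := by simp
  have h1 : ∑ n ∈ Finset.Icc 1 x, ((n.divisors.card : ℝ) - 1 - Gfun n) ≤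
      ∑ n ∈ Finset.Icc 1 x, (2 * (NN n : ℝ)) :=
    Finset.sum_le_sum fun n hn => (gap_bounds (Finset.mem_Icc.1 hn).1).1
  have h2 : ∑ n ∈ Finset.Icc 1 x, ((NN n : ℝ) / 4 - 2) ≤
      ∑ n ∈ Finset.Icc 1 x, ((n.divisors.card : ℝ) - 1 - Gfun n) :=
    Finset.sum_le_sum fun n hn => (gap_bounds (Finset.mem_Icc.1 hn).1).2
  simp only [Finset.sum_sub_distrib, ← Finset.mul_sum, ← Finset.sum_div] at h1 h2
  have e2 : ∑ n ∈ Finset.Icc 1 x, (2 : ℝ) = 2 * x := by simp; ring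
  rw [← e] at h1 h2
  rw [e2] at h2
  constructor <;> linarith

/-! ### Elementary properties of `NN` -/

/-- Comparison of two sums through an injection between the index sets. -/
lemma sum_le_sum_inj {ι κ : Type*} {s : Finset ι} {t : Finset κ} {f : ι → ℝ} {g : κ → ℝ}
    (φ : ι → κ) (hφ : ∀ i ∈ s, φ i ∈ t) (hinj : Set.InjOn φ s) (hfg : ∀ i ∈ s, f i ≤ g (φ i))
    (hg : ∀ k ∈ t, 0 ≤ g k) : ∑ i ∈ s, f i ≤ ∑ k ∈ t, g k := by
  calc ∑ i ∈ s, f i ≤ ∑ i ∈ s, g (φ i) := Finset.sum_le_sum hfg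
    _ = ∑ k ∈ s.image φ, g k := (Finset.sum_image hinj).symm
    _ ≤ _ := Finset.sum_le_sum_of_subset_of_nonneg
        (Finset.image_subset_iff.2 hφ) fun k hk _ => hg k hk

lemma log2_mul {d e : ℕ} (hd : d ≠ 0) (he : e ≠ 0) :
    Nat.log 2 (d * e) = Nat.log 2 d + Nat.log 2 e ∨
      Nat.log 2 (d * e) = Nat.log 2 d + Nat.log 2 e + 1 := by
  have h1 := Nat.pow_log_le_self 2 hd
  have h2 := Nat.pow_log_le_self 2 he
  have h3 := Nat.lt_pow_succ_log_self (b := 2) (by norm_num) d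
  have h4 := Nat.lt_pow_succ_log_self (b := 2) (by norm_num) e
  have h5 : Nat.log 2 d + Nat.log 2 e ≤ Nat.log 2 (d * e) := by
    apply Nat.le_log_of_pow_le (by norm_num)
    rw [pow_add]; exact Nat.mul_le_mul h1 h2
  have h6 : Nat.log 2 (d * e) < Nat.log 2 d + Nat.log 2 e + 2 := by
    apply Nat.log_lt_of_lt_pow (Nat.mul_ne_zero hd he)
    calc d * e < 2 ^ (Nat.log 2 d + 1) * 2 ^ (Nat.log 2 e + 1) := Nat.mul_lt_mul'' h3 h4
      _ = _ := by rw [← pow_add]; congr 1; ring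
  omega

/-- A divisor of `a * b` is `d * e` with `d ∣ a` and `e ∣ b`; given `e` and the dyadic interval of `d`,
there are two possible intervals for `d * e`. -/
lemma NN_mul_le {a b : ℕ} (ha : a ≠ 0) (hb : b ≠ 0) :
    NN (a * b) ≤ 2 * b.divisors.card * NN a := by
  unfold NN
  set I := a.divisors.image (Nat.log 2)
  have hsub : (a * b).divisors.image (Nat.log 2) ⊆
      b.divisors.biUnion (fun e => I.image (fun t => t + Nat.log 2 e) ∪
        I.image (fun t => t + Nat.log 2 e + 1)) := by
    intro t ht
    obtain ⟨f, hf, rfl⟩ := Finset.mem_image.1 ht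
    obtain ⟨d, e, hd, he, rfl⟩ := (Nat.dvd_mul).1 (Nat.dvd_of_mem_divisors hf)
    have hd0 : d ≠ 0 := by rintro rfl; exact ha (by simpa using hd)
    have he0 : e ≠ 0 := by rintro rfl; exact hb (by simpa using he)
    rw [Finset.mem_biUnion]
    refine ⟨e, by simp [he, hb], ?_⟩
    rw [Finset.mem_union]
    have hdI : Nat.log 2 d ∈ I := Finset.mem_image.2 ⟨d, by simp [hd, ha], rfl⟩
    rcases log2_mul hd0 he0 with h | h
    · exact Or.inl (Finset.mem_image.2 ⟨_, hdI, h.symm⟩)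
    · exact Or.inr (Finset.mem_image.2 ⟨_, hdI, h.symm⟩)
  refine (Finset.card_le_card hsub).trans (Finset.card_biUnion_le.trans ?_)
  have : ∀ e ∈ b.divisors, (I.image (fun t => t + Nat.log 2 e) ∪
        I.image (fun t => t + Nat.log 2 e + 1)).card ≤ 2 * I.card := fun e _ => by
    refine (Finset.card_union_le _ _).trans ?_
    rw [two_mul]
    exact add_le_add Finset.card_image_le Finset.card_image_le
  refine (Finset.sum_le_sum this).trans (le_of_eq ?_)
  simp; ring

lemma NN_le_card (a : ℕ) : NN a ≤ a.divisors.card := Finset.card_image_le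

lemma NN_le_log (a : ℕ) : NN a ≤ Nat.log 2 a + 1 := by
  unfold NN
  refine (Finset.card_le_card (t := Finset.range (Nat.log 2 a + 1)) ?_).trans (by simp)
  intro t ht
  obtain ⟨f, hf, rfl⟩ := Finset.mem_image.1 ht
  have := Nat.log_mono_right (b := 2) (Nat.divisor_le hf)
  simp; omega

lemma NN_dvd {a n : ℕ} (h : a ∣ n) (hn : n ≠ 0) : NN a ≤ NN n :=
  Finset.card_le_card (Finset.image_subset_image (Nat.divisors_subset_of_dvd hn h))

lemma card_divisors_le_sqrt {b : ℕ} : b.divisors.card ≤ 2 * Nat.sqrt b := by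
  have hsub : b.divisors ⊆ (Finset.Icc 1 (Nat.sqrt b)) ∪ (Finset.Icc 1 (Nat.sqrt b)).image (b / ·) := by
    intro d hd
    obtain ⟨e, he⟩ := Nat.dvd_of_mem_divisors hd
    have hb := Nat.ne_zero_of_mem_divisors hd
    have hd0 : 0 < d := Nat.pos_of_mem_divisors hd
    have he0 : 0 < e := Nat.pos_of_ne_zero (by rintro rfl; simp at he; exact hb he)
    rw [Finset.mem_union]
    rcases le_total d e with h | h
    · left; rw [Finset.mem_Icc]
      exact ⟨hd0, Nat.le_sqrt.2 (by rw [he]; exact Nat.mul_le_mul_left _ h)⟩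
    · right; rw [Finset.mem_image]
      refine ⟨e, Finset.mem_Icc.2 ⟨he0, Nat.le_sqrt.2 (by rw [he]; exact Nat.mul_le_mul_right _ h)⟩, ?_⟩
      rw [he]; exact Nat.mul_div_cancel _ he0
  refine (Finset.card_le_card hsub).trans ((Finset.card_union_le _ _).trans ?_)
  have := Finset.card_image_le (s := Finset.Icc 1 (Nat.sqrt b)) (f := (b / ·))
  simp only [Nat.card_Icc] at this ⊢
  omega

/-- Convergence of `∑ τ(b)² (1 + log b) / b²`. Since `τ(b)` and `1 + log b` are small powers of `b`,
the terms are dominated by `τ(b) b ^ (-5/4)`, a Dirichlet convolution square. -/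
lemma tau_series : ∃ C : ℝ, 0 < C ∧ ∀ X : ℕ,
    ∑ b ∈ Finset.Icc 1 X, (b.divisors.card : ℝ) ^ 2 * (1 + Real.log b) / b ^ 2 ≤ C := by
  set g : ℕ → ℝ := fun b => (b : ℝ) ^ (-(5 / 4) : ℝ) with hg
  have hsum : Summable g := Real.summable_nat_rpow.2 (by norm_num)
  have hg0 : ∀ b, 0 ≤ g b := fun b => by positivity
  refine ⟨10 * (∑' b, g b) ^ 2 + 1, by positivity, fun X => ?_⟩
  have h1 : ∀ b ∈ Finset.Icc 1 X, (b.divisors.card : ℝ) ^ 2 * (1 + Real.log b) / b ^ 2 ≤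
      10 * ∑ p ∈ b.divisorsAntidiagonal, g p.1 * g p.2 := by
    intro b hb
    have hb1 := (Finset.mem_Icc.1 hb).1
    have hbR : (1 : ℝ) ≤ b := by exact_mod_cast hb1
    have hb0 : (0 : ℝ) < b := by linarith
    have e1 : ∑ p ∈ b.divisorsAntidiagonal, g p.1 * g p.2 = b.divisors.card * g b := by
      rw [Nat.sum_divisorsAntidiagonal (fun d e => g d * g e), ← nsmul_eq_mul, ← Finset.sum_const]
      refine Finset.sum_congr rfl fun d hd => ?_
      rw [hg]; simp only
      rw [← Real.mul_rpow (by positivity) (by positivity), ← Nat.cast_mul,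
        Nat.mul_div_cancel' (Nat.dvd_of_mem_divisors hd)]
    rw [e1]
    have h2 : (b.divisors.card : ℝ) ≤ 2 * (b : ℝ) ^ (1 / 2 : ℝ) := by
      rw [← Real.sqrt_eq_rpow]
      have h3 : (b.divisors.card : ℝ) ≤ 2 * (Nat.sqrt b : ℝ) := by
        exact_mod_cast card_divisors_le_sqrt
      have := Real.nat_sqrt_le_real_sqrt (a := b)
      linarith
    have h3 : 1 + Real.log b ≤ 5 * (b : ℝ) ^ (1 / 4 : ℝ) := by
      have h4 := Real.log_le_sub_one_of_pos (x := (b : ℝ) ^ (1 / 4 : ℝ)) (by positivity)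
      rw [Real.log_rpow hb0] at h4
      have h5 : 1 ≤ (b : ℝ) ^ (1 / 4 : ℝ) := Real.one_le_rpow hbR (by norm_num)
      linarith
    have h4 : 0 ≤ 1 + Real.log b := by have := Real.log_nonneg hbR; linarith
    calc (b.divisors.card : ℝ) ^ 2 * (1 + Real.log b) / b ^ 2
        = b.divisors.card * (b.divisors.card * (1 + Real.log b)) / b ^ 2 := by ring
      _ ≤ b.divisors.card * ((2 * (b : ℝ) ^ (1 / 2 : ℝ)) * (5 * (b : ℝ) ^ (1 / 4 : ℝ))) / b ^ 2 := by
          gcongr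
      _ = 10 * (b.divisors.card * ((b : ℝ) ^ (1 / 2 : ℝ) * (b : ℝ) ^ (1 / 4 : ℝ) / (b : ℝ) ^ (2 : ℝ))) := by
          rw [Real.rpow_two]; ring
      _ = 10 * (b.divisors.card * g b) := by
          rw [← Real.rpow_add hb0, ← Real.rpow_sub hb0, hg]; norm_num
  refine (Finset.sum_le_sum h1).trans ?_
  rw [← Finset.mul_sum, Finset.sum_sigma']
  have h2 : ∑ z ∈ (Finset.Icc 1 X).sigma fun b => b.divisorsAntidiagonal, g z.2.1 * g z.2.2 ≤
      ∑ p ∈ (Finset.Icc 1 X) ×ˢ (Finset.Icc 1 X), g p.1 * g p.2 := by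
    refine sum_le_sum_inj (fun z => z.2) ?_ ?_ (fun _ _ => le_rfl) fun p _ => by positivity
    · rintro ⟨b, d, e⟩ hz
      simp only [Finset.mem_sigma, Finset.mem_Icc, Nat.mem_divisorsAntidiagonal,
        Finset.mem_product] at hz ⊢
      obtain ⟨⟨h1, h2⟩, rfl, h3⟩ := hz
      have hd : 0 < d := Nat.pos_of_ne_zero (by rintro rfl; simp at h3)
      have he : 0 < e := Nat.pos_of_ne_zero (by rintro rfl; simp at h3)
      exact ⟨⟨hd, (Nat.le_mul_of_pos_right d he).trans h2⟩, he, (Nat.le_mul_of_pos_left e hd).trans h2⟩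
    · rintro ⟨b, d, e⟩ hz ⟨b', d', e'⟩ hz' h
      simp only [Finset.coe_sigma, Set.mem_sigma_iff, Finset.mem_coe,
        Nat.mem_divisorsAntidiagonal] at hz hz'
      simp only [Prod.mk.injEq] at h
      obtain ⟨rfl, rfl⟩ := h
      obtain ⟨_, rfl, _⟩ := hz
      obtain ⟨_, rfl, _⟩ := hz'
      rfl
  have h3 : ∑ p ∈ (Finset.Icc 1 X) ×ˢ (Finset.Icc 1 X), g p.1 * g p.2 =
      (∑ d ∈ Finset.Icc 1 X, g d) ^ 2 := by
    rw [Finset.sum_product, sq, Finset.sum_mul_sum]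
  have h4 : (∑ d ∈ Finset.Icc 1 X, g d) ^ 2 ≤ (∑' b, g b) ^ 2 :=
    pow_le_pow_left₀ (Finset.sum_nonneg fun _ _ => hg0 _) (hsum.sum_le_tsum _ fun _ _ => hg0 _) 2
  linarith

/-! ### Passage to a logarithmic sum over squarefree numbers -/

/-- The squarefree numbers in `[1, y]`. -/
noncomputable def sqf (y : ℕ) : Finset ℕ := (Finset.Icc 1 y).filter Squarefree

lemma mem_sqf {y a : ℕ} : a ∈ sqf y ↔ 1 ≤ a ∧ a ≤ y ∧ Squarefree a := by
  simp [sqf, and_assoc]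

/-- The logarithmic sum of `NN` over squarefree numbers up to `y`. -/
noncomputable def TT (y : ℕ) : ℝ := ∑ a ∈ sqf y, (NN a : ℝ) / a

lemma TT_nonneg (y : ℕ) : 0 ≤ TT y := Finset.sum_nonneg fun _ _ => by positivity

lemma TT_mono {x y : ℕ} (h : x ≤ y) : TT x ≤ TT y := by
  refine Finset.sum_le_sum_of_subset_of_nonneg ?_ fun _ _ _ => by positivity
  intro a ha
  rw [mem_sqf] at ha ⊢
  exact ⟨ha.1, ha.2.1.trans h, ha.2.2⟩

lemma log_eq_sum_primeFactors {a : ℕ} (ha : Squarefree a) :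
    Real.log a = ∑ p ∈ a.primeFactors, Real.log p := by
  conv_lhs => rw [← Nat.prod_primeFactors_of_squarefree ha]
  rw [Nat.cast_prod, Real.log_prod]
  intro p hp
  exact_mod_cast (Nat.prime_of_mem_primeFactors hp).ne_zero

lemma NN_prime_mul_le {p m : ℕ} (hp : p.Prime) (hm : m ≠ 0) : NN (p * m) ≤ 4 * NN m := by
  have h := NN_mul_le hm hp.ne_zero
  rw [mul_comm m p] at h
  have : p.divisors.card = 2 := by
    rw [hp.divisors, Finset.card_pair hp.one_lt.ne]
  rw [this] at h; omega

/-- Write `log a = ∑ log p` over `p ∣ a`, put `a = p * m`, use `NN (p * m) ≤ 4 * NN m`, and sum over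
`p ≤ y / m` with the Chebyshev bound. -/
lemma sum_NN_log_le (y : ℕ) :
    ∑ a ∈ sqf y, (NN a : ℝ) * Real.log a ≤ 4 * Real.log 4 * y * TT y := by
  have h1 : ∑ a ∈ sqf y, (NN a : ℝ) * Real.log a =
      ∑ z ∈ (sqf y).sigma (fun a => a.primeFactors), (NN z.1 : ℝ) * Real.log z.2 := by
    rw [Finset.sum_sigma]
    refine Finset.sum_congr rfl fun a ha => ?_
    rw [log_eq_sum_primeFactors (mem_sqf.1 ha).2.2, Finset.mul_sum]
  have h2 : ∑ z ∈ (sqf y).sigma (fun a => a.primeFactors), (NN z.1 : ℝ) * Real.log z.2 ≤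
      ∑ w ∈ (sqf y).sigma (fun m => pr (y / m)), 4 * (NN w.1 : ℝ) * Real.log w.2 := by
    refine sum_le_sum_inj (fun z => ⟨z.1 / z.2, z.2⟩) ?_ ?_ ?_ ?_
    · rintro ⟨a, p⟩ hz
      obtain ⟨ha, hp⟩ := Finset.mem_sigma.1 hz
      simp only at ha hp
      have ha' := mem_sqf.1 ha
      have hpp := Nat.prime_of_mem_primeFactors hp
      obtain ⟨m, rfl⟩ := Nat.dvd_of_mem_primeFactors hp
      have hm : m ≠ 0 := by rintro rfl; simp at ha'
      rw [Finset.mem_sigma]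
      simp only
      rw [Nat.mul_div_cancel_left _ hpp.pos, mem_sqf, mem_pr]
      refine ⟨⟨Nat.pos_of_ne_zero hm, ?_, ha'.2.2.squarefree_of_dvd (Dvd.intro_left _ rfl)⟩, ?_, hpp⟩
      · exact (Nat.le_mul_of_pos_left m hpp.pos).trans ha'.2.1
      · rw [Nat.le_div_iff_mul_le (Nat.pos_of_ne_zero hm)]; exact ha'.2.1
    · rintro ⟨a, p⟩ hz ⟨a', p'⟩ hz' h
      simp only [Sigma.mk.injEq, heq_eq_eq] at h
      obtain ⟨h1, rfl⟩ := h
      have hp := (Finset.mem_sigma.1 hz).2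
      have hp' := (Finset.mem_sigma.1 hz').2
      simp only at hp hp'
      have : a = a' := by
        rw [← Nat.div_mul_cancel (Nat.dvd_of_mem_primeFactors hp),
          ← Nat.div_mul_cancel (Nat.dvd_of_mem_primeFactors hp'), h1]
      subst this; rfl
    · rintro ⟨a, p⟩ hz
      obtain ⟨ha, hp⟩ := Finset.mem_sigma.1 hz
      simp only at ha hp ⊢
      have hpp := Nat.prime_of_mem_primeFactors hp
      obtain ⟨m, rfl⟩ := Nat.dvd_of_mem_primeFactors hp
      have hm : m ≠ 0 := by rintro rfl; simp [mem_sqf] at ha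
      rw [Nat.mul_div_cancel_left _ hpp.pos]
      have h3 : (NN (p * m) : ℝ) ≤ 4 * NN m := by exact_mod_cast NN_prime_mul_le hpp hm
      exact mul_le_mul_of_nonneg_right h3 (Real.log_natCast_nonneg p)
    · rintro ⟨m, p⟩ _
      have := Real.log_natCast_nonneg p
      simp only; positivity
  rw [h1]
  refine h2.trans ?_
  rw [Finset.sum_sigma, TT, Finset.mul_sum]
  refine Finset.sum_le_sum fun m hm => ?_
  simp only
  rw [← Finset.mul_sum]
  have h4 : 0 < Real.log 4 := Real.log_pos (by norm_num)
  calc 4 * (NN m : ℝ) * ∑ p ∈ pr (y / m), Real.log p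
      ≤ 4 * (NN m : ℝ) * (Real.log 4 * (y / m)) := by
        refine mul_le_mul_of_nonneg_left ((theta_le _).trans ?_) (by positivity)
        exact mul_le_mul_of_nonneg_left Nat.cast_div_le h4.le
    _ = _ := by ring

/-- Replaces `log a` by `log y` in `sum_NN_log_le`, using `log (y / a) ≤ y / a`. -/
lemma sum_NN_le (y : ℕ) (hy : 1 ≤ y) :
    (∑ a ∈ sqf y, (NN a : ℝ)) * (1 + Real.log y) ≤ (2 + 4 * Real.log 4) * y * TT y := by
  have h1 := sum_NN_log_le y
  have h2 : ∑ a ∈ sqf y, (NN a : ℝ) * (1 + Real.log y) ≤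
      ∑ a ∈ sqf y, ((NN a : ℝ) * Real.log a + 2 * y * ((NN a : ℝ) / a)) := by
    refine Finset.sum_le_sum fun a ha => ?_
    have ha' := mem_sqf.1 ha
    have ha0 : (0 : ℝ) < a := by exact_mod_cast ha'.1
    have hya : (1 : ℝ) ≤ y / a := by
      rw [le_div_iff₀ ha0, one_mul]; exact_mod_cast ha'.2.1
    have h3 := Real.log_le_sub_one_of_pos (x := (y : ℝ) / a) (by linarith)
    rw [Real.log_div (by positivity) (by positivity)] at h3
    calc (NN a : ℝ) * (1 + Real.log y) ≤ NN a * (Real.log a + 2 * (y / a)) :=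
          mul_le_mul_of_nonneg_left (by linarith) (by positivity)
      _ = _ := by ring
  rw [← Finset.sum_mul, Finset.sum_add_distrib, ← Finset.mul_sum] at h2
  rw [show ∑ a ∈ sqf y, (NN a : ℝ) / a = TT y from rfl] at h2
  linarith

/-- Reduction of the upper bound to the logarithmic sum over squarefree numbers: write `n = b² a`
with `a` squarefree and sum over `b` with `tau_series`. -/
lemma upper_reduction : ∃ C : ℝ, 0 < C ∧ ∀ x : ℕ, 1 ≤ x →
    (∑ n ∈ Finset.Icc 1 x, (NN n : ℝ)) * (1 + Real.log x) ≤ C * x * TT x := by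
  obtain ⟨C, hC, hser⟩ := tau_series
  have hl4 : 0 < Real.log 4 := Real.log_pos (by norm_num)
  refine ⟨4 * (2 * (2 + 4 * Real.log 4)) * C, by positivity, fun x hx => ?_⟩
  set SS : ℕ → ℝ := fun y => ∑ a ∈ sqf y, (NN a : ℝ) with hSS
  have h1 : ∑ n ∈ Finset.Icc 1 x, (NN n : ℝ) ≤
      ∑ b ∈ Finset.Icc 1 x, 4 * (b.divisors.card : ℝ) ^ 2 * SS (x / b ^ 2) := by
    -- `z = (b, a)` with `n = b ^ 2 * a` and `a` squarefree.
    have h2 : ∀ n, ∃ z : (_ : ℕ) × ℕ, 1 ≤ n → 0 < z.1 ∧ 0 < z.2 ∧ z.1 ^ 2 * z.2 = n ∧ Squarefree z.2 := by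
      intro n
      by_cases hn : 1 ≤ n
      · obtain ⟨a, b, ha, hb, h, hs⟩ := Nat.sq_mul_squarefree_of_pos hn
        exact ⟨⟨b, a⟩, fun _ => ⟨hb, ha, h, hs⟩⟩
      · exact ⟨⟨0, 0⟩, fun h => absurd h hn⟩
    choose φ hφ using h2
    have h3 : ∑ b ∈ Finset.Icc 1 x, 4 * (b.divisors.card : ℝ) ^ 2 * SS (x / b ^ 2) =
        ∑ z ∈ (Finset.Icc 1 x).sigma (fun b => sqf (x / b ^ 2)),
          4 * (z.1.divisors.card : ℝ) ^ 2 * NN z.2 := by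
      rw [Finset.sum_sigma]
      refine Finset.sum_congr rfl fun b _ => ?_
      rw [hSS]; simp only
      rw [Finset.mul_sum]
    rw [h3]
    refine sum_le_sum_inj φ ?_ ?_ ?_ fun z _ => by positivity
    · intro n hn
      obtain ⟨hn1, hn2⟩ := Finset.mem_Icc.1 hn
      obtain ⟨i1, i2, i3, i4⟩ := hφ n hn1
      rw [Finset.mem_sigma, Finset.mem_Icc, mem_sqf]
      refine ⟨⟨i1, ?_⟩, i2, ?_, i4⟩
      · calc (φ n).1 ≤ (φ n).1 ^ 2 := Nat.le_self_pow (by norm_num) _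
          _ ≤ (φ n).1 ^ 2 * (φ n).2 := Nat.le_mul_of_pos_right _ i2
          _ ≤ x := by rw [i3]; exact hn2
      · rw [Nat.le_div_iff_mul_le (by positivity), mul_comm, i3]; exact hn2
    · intro n hn n' hn' h
      have i := (hφ n (Finset.mem_Icc.1 hn).1).2.2.1
      have i' := (hφ n' (Finset.mem_Icc.1 hn').1).2.2.1
      rw [← i, ← i', h]
    · intro n hn
      obtain ⟨i1, i2, i3, i4⟩ := hφ n (Finset.mem_Icc.1 hn).1
      have j1 := NN_mul_le (a := (φ n).2) (b := (φ n).1) i2.ne' i1.ne'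
      have j2 := NN_mul_le (a := (φ n).2 * (φ n).1) (b := (φ n).1) (by positivity) i1.ne'
      have e : (φ n).2 * (φ n).1 * (φ n).1 = n := by linarith [i3]
      rw [e] at j2
      have j3 : NN n ≤ 4 * (φ n).1.divisors.card ^ 2 * NN (φ n).2 := by
        calc NN n ≤ _ := j2
          _ ≤ 2 * (φ n).1.divisors.card * (2 * (φ n).1.divisors.card * NN (φ n).2) :=
              Nat.mul_le_mul_left _ j1
          _ = _ := by ring
      exact_mod_cast j3
  have hxR : (1 : ℝ) ≤ x := by exact_mod_cast hx
  have hlx : 0 ≤ Real.log x := Real.log_nonneg hxR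
  have h2 : ∀ b ∈ Finset.Icc 1 x, SS (x / b ^ 2) * (1 + Real.log x) ≤
      2 * (2 + 4 * Real.log 4) * x * TT x * ((1 + Real.log b) / b ^ 2) := by
    intro b hb
    have hb1 := (Finset.mem_Icc.1 hb).1
    have hbR : (1 : ℝ) ≤ b := by exact_mod_cast hb1
    have hlb := Real.log_nonneg hbR
    have hT := TT_nonneg x
    rcases Nat.eq_zero_or_pos (x / b ^ 2) with h0 | hy
    · rw [h0, hSS]
      have : sqf 0 = ∅ := by simp [sqf]
      simp only [this, Finset.sum_empty, zero_mul]
      positivity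
    · set y := x / b ^ 2 with hyd
      have h3 := sum_NN_le y hy
      have hyR : (1 : ℝ) ≤ y := by exact_mod_cast hy
      have hly := Real.log_nonneg hyR
      have h4 : Real.log x ≤ 1 + Real.log y + 2 * Real.log b := by
        have h5 : (x : ℝ) ≤ 2 * y * b ^ 2 := by
          have h6 : x < (y + 1) * b ^ 2 := by
            have := Nat.lt_succ_self (x / b ^ 2)
            rwa [Nat.div_lt_iff_lt_mul (by positivity)] at this
          have h7 : (x : ℝ) ≤ (y + 1) * b ^ 2 := by exact_mod_cast h6.le
          refine h7.trans (mul_le_mul_of_nonneg_right (by linarith) (by positivity))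
        have h8 := Real.log_le_log (by linarith) h5
        rw [Real.log_mul (by positivity) (by positivity), Real.log_mul (by positivity) (by positivity),
          Real.log_pow] at h8
        have := Real.log_two_lt_d9
        push_cast at h8
        linarith
      have h5 : 1 + Real.log x ≤ 2 * ((1 + Real.log y) * (1 + Real.log b)) := by nlinarith
      have hSS0 : 0 ≤ SS y := Finset.sum_nonneg fun _ _ => by positivity
      have hyx : (y : ℝ) ≤ x / b ^ 2 := by
        have := Nat.cast_div_le (α := ℝ) (m := x) (n := b ^ 2)
        rw [hyd]; push_cast at this ⊢; exact this
      have hTy : TT y ≤ TT x := TT_mono (Nat.div_le_self _ _)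
      calc SS y * (1 + Real.log x) ≤ SS y * (2 * ((1 + Real.log y) * (1 + Real.log b))) :=
            mul_le_mul_of_nonneg_left h5 hSS0
        _ = (SS y * (1 + Real.log y)) * (2 * (1 + Real.log b)) := by ring
        _ ≤ ((2 + 4 * Real.log 4) * y * TT y) * (2 * (1 + Real.log b)) :=
            mul_le_mul_of_nonneg_right h3 (by positivity)
        _ ≤ ((2 + 4 * Real.log 4) * (x / b ^ 2) * TT x) * (2 * (1 + Real.log b)) := by
            have := TT_nonneg y
            refine mul_le_mul_of_nonneg_right ?_ (by positivity)
            exact mul_le_mul (mul_le_mul_of_nonneg_left hyx (by positivity)) hTy this (by positivity)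
        _ = _ := by ring
  calc (∑ n ∈ Finset.Icc 1 x, (NN n : ℝ)) * (1 + Real.log x)
      ≤ (∑ b ∈ Finset.Icc 1 x, 4 * (b.divisors.card : ℝ) ^ 2 * SS (x / b ^ 2)) * (1 + Real.log x) :=
        mul_le_mul_of_nonneg_right h1 (by linarith)
    _ = ∑ b ∈ Finset.Icc 1 x, 4 * (b.divisors.card : ℝ) ^ 2 * (SS (x / b ^ 2) * (1 + Real.log x)) := by
        rw [Finset.sum_mul]; exact Finset.sum_congr rfl fun b _ => by ring
    _ ≤ ∑ b ∈ Finset.Icc 1 x, 4 * (b.divisors.card : ℝ) ^ 2 *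
          (2 * (2 + 4 * Real.log 4) * x * TT x * ((1 + Real.log b) / b ^ 2)) :=
        Finset.sum_le_sum fun b hb => mul_le_mul_of_nonneg_left (h2 b hb) (by positivity)
    _ = 4 * (2 * (2 + 4 * Real.log 4)) * x * TT x *
          ∑ b ∈ Finset.Icc 1 x, (b.divisors.card : ℝ) ^ 2 * (1 + Real.log b) / b ^ 2 := by
        rw [Finset.mul_sum]; exact Finset.sum_congr rfl fun b _ => by ring
    _ ≤ 4 * (2 * (2 + 4 * Real.log 4)) * x * TT x * C := by
        have := TT_nonneg x
        exact mul_le_mul_of_nonneg_left (hser x) (by positivity)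
    _ = _ := by ring

/-! ### Walk sums over prime blocks -/

/-- The primes up to the `i`-th block endpoint. -/
noncomputable def PP (lam : ℕ → ℕ) (i : ℕ) : Finset ℕ := pr (lam i)

/-- Block endpoints `lam i` such that the primes in `(lam i, lam (i + 1)]` have reciprocal sum just
below `log 2`; then `log (lam i) ≍ 2 ^ i`. The field `short` is a Chebyshev bound for the primes of a
block in a short interval. -/
lemma Blocks.PP_mono {lam : ℕ → ℕ} {C : ℝ} (hB : Blocks lam C) : Monotone (PP lam) :=
  fun _ _ h => pr_mono (hB.mono h)

lemma Blocks.PP_zero {lam : ℕ → ℕ} {C : ℝ} (hB : Blocks lam C) : PP lam 0 = ∅ := by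
  ext p
  simp only [PP, hB.zero, mem_pr, Finset.notMem_empty, iff_false, not_and]
  intro h hp; have := hp.two_le; omega

lemma log_two_bounds : 0 < Real.log 2 ∧ Real.log 2 ≤ 1 ∧ 1 < 2 * Real.log 2 ∧
    Real.log 2 * Real.exp 1 / 2 < 1 := by
  have h1 := Real.log_two_gt_d9
  have h2 := Real.log_two_lt_d9
  have h3 := Real.exp_one_lt_d9
  have h4 := Real.exp_one_gt_d9
  refine ⟨by linarith, by linarith, by linarith, ?_⟩
  nlinarith

lemma sum_mul_pow_le {ρ : ℝ} (h0 : 0 ≤ ρ) (h1 : ρ < 1) :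
    ∃ C : ℝ, 0 < C ∧ ∀ s : Finset ℕ, ∑ c ∈ s, (c : ℝ) * ρ ^ c ≤ C := by
  have hs : Summable fun c : ℕ => (c : ℝ) ^ 1 * ρ ^ c :=
    summable_pow_mul_geometric_of_norm_lt_one 1 (by rwa [Real.norm_of_nonneg h0])
  simp only [pow_one] at hs
  have hn : ∀ c : ℕ, 0 ≤ (c : ℝ) * ρ ^ c := fun c => by positivity
  refine ⟨∑' c : ℕ, (c : ℝ) * ρ ^ c + 1, ?_, fun s => ?_⟩
  · have : 0 ≤ ∑' c : ℕ, (c : ℝ) * ρ ^ c := tsum_nonneg hn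
    linarith
  · have := hs.sum_le_tsum s fun c _ => hn c
    linarith

/-- The mass of the walks up to block `j`, with any barrier `c`, that end at distance at most `2` from
the barrier. -/
lemma first_part {lam : ℕ → ℕ} {C : ℝ} (hB : Blocks lam C) : ∃ C1 : ℝ, 0 < C1 ∧ ∀ j K : ℕ,
    ∑ c ∈ Finset.Icc 1 K, Z (PP lam) 0 j c (j + c - 2) ≤
      C1 * ((Real.log 2 * Real.exp 1) ^ j * dd j) := by
  obtain ⟨l1, l2, l3, l4⟩ := log_two_bounds
  set s := Real.log 2 with hs
  obtain ⟨C', hC', h⟩ := sum_mul_pow_le (ρ := s * Real.exp 1 / 2) (by positivity) l4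
  refine ⟨4 * Real.exp 1 / s ^ 2 * C', by positivity, fun j K => ?_⟩
  have hterm : ∀ c ∈ Finset.Icc 1 K, Z (PP lam) 0 j c (j + c - 2) ≤
      4 * Real.exp 1 / s ^ 2 * ((s * Real.exp 1) ^ j * dd j) * (c * (s * Real.exp 1 / 2) ^ c) := by
    intro c hc
    have hc1 := (Finset.mem_Icc.1 hc).1
    refine (Z_le hB.PP_mono l1.le hB.sum_le 0 j c (j + c - 2) hc1).trans ?_
    have e1 : ((j + c - (j + c - 2) : ℕ) : ℝ) ≤ 2 := by
      exact_mod_cast (by omega : j + c - (j + c - 2) ≤ 2)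
    have e2 : s ^ (j + c - 2) ≤ s ^ (j + c) / s ^ 2 := by
      rw [le_div_iff₀ (by positivity), ← pow_add]
      exact pow_le_pow_of_le_one l1.le l2 (by omega)
    have hd := dd_pos j
    have e3 : Real.exp (j : ℝ) = Real.exp 1 ^ j := by rw [← Real.exp_nat_mul, mul_one]
    calc s ^ (j + c - 2) * (2 * Real.exp 1 * c * (Real.exp 1 / 2) ^ c *
            ((j + c - (j + c - 2) : ℕ) : ℝ) * Real.exp j * dd j)
        ≤ s ^ (j + c) / s ^ 2 * (2 * Real.exp 1 * c * (Real.exp 1 / 2) ^ c * 2 * Real.exp j * dd j) := by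
          gcongr
      _ = _ := by
          rw [e3, pow_add, mul_pow, div_pow, div_pow, mul_pow]; ring
  refine (Finset.sum_le_sum hterm).trans ?_
  rw [← Finset.mul_sum]
  have hd := dd_pos j
  calc _ ≤ 4 * Real.exp 1 / s ^ 2 * ((s * Real.exp 1) ^ j * dd j) * C' :=
        mul_le_mul_of_nonneg_left (h _) (by positivity)
    _ = _ := by ring

/-- The mass of the walks over the blocks `j + 1, …, j + m` below the barrier `2`, weighted by
`2 ^ k` with `k` the number of primes. -/
lemma second_part {lam : ℕ → ℕ} {C : ℝ} (hB : Blocks lam C) : ∃ C2 : ℝ, 0 < C2 ∧ ∀ j m : ℕ,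
    ∑ k ∈ Finset.range (m + 2), 2 ^ k * Z (PP lam) j m 2 k ≤
      C2 * ((2 * Real.log 2 * Real.exp 1) ^ m * dd m) := by
  obtain ⟨l1, l2, l3, l4⟩ := log_two_bounds
  set s := Real.log 2 with hs
  obtain ⟨C', hC', h⟩ := sum_mul_pow_le (ρ := 1 / (2 * s)) (by positivity)
    (by rw [div_lt_one (by linarith)]; exact l3)
  refine ⟨2 * Real.exp 1 * 2 * (Real.exp 1 / 2) ^ 2 * (2 * s) ^ 2 * C', by positivity, fun j m => ?_⟩
  have hd := dd_pos m
  have e3 : Real.exp (m : ℝ) = Real.exp 1 ^ m := by rw [← Real.exp_nat_mul, mul_one]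
  have hterm : ∀ k ∈ Finset.range (m + 2), 2 ^ k * Z (PP lam) j m 2 k ≤
      2 * Real.exp 1 * 2 * (Real.exp 1 / 2) ^ 2 * (2 * s) ^ 2 * ((2 * s * Real.exp 1) ^ m * dd m) *
        (((m + 2 - k : ℕ) : ℝ) * (1 / (2 * s)) ^ (m + 2 - k)) := by
    intro k hk
    have hk1 : k ≤ m + 2 := (Finset.mem_range.1 hk).le
    have h1 := Z_le hB.PP_mono l1.le hB.sum_le j m 2 k (by norm_num)
    have e1 : (2 * s) ^ k = (2 * s) ^ 2 * (2 * s) ^ m * (1 / (2 * s)) ^ (m + 2 - k) := by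
      have : (2 * s) ^ 2 * (2 * s) ^ m = (2 * s) ^ k * (2 * s) ^ (m + 2 - k) := by
        rw [← pow_add, ← pow_add]; congr 1; omega
      rw [this, mul_assoc, ← mul_pow, mul_one_div_cancel (by positivity), one_pow, mul_one]
    calc 2 ^ k * Z (PP lam) j m 2 k ≤ 2 ^ k * _ := mul_le_mul_of_nonneg_left h1 (by positivity)
      _ = (2 * s) ^ k * (2 * Real.exp 1 * 2 * (Real.exp 1 / 2) ^ 2 *
            ((m + 2 - k : ℕ) : ℝ) * Real.exp m * dd m) := by rw [mul_pow]; push_cast; ring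
      _ = _ := by rw [e1, e3, mul_pow (2 * s) (Real.exp 1)]; ring
  refine (Finset.sum_le_sum hterm).trans ?_
  rw [← Finset.mul_sum]
  have hsum : ∑ k ∈ Finset.range (m + 2), (((m + 2 - k : ℕ) : ℝ) * (1 / (2 * s)) ^ (m + 2 - k)) ≤ C' := by
    refine le_trans (sum_le_sum_inj (t := Finset.range (m + 3))
      (g := fun c : ℕ => (c : ℝ) * (1 / (2 * s)) ^ c) (fun k => m + 2 - k) ?_ ?_ (fun _ _ => le_rfl) ?_) (h _)
    · intro k _; simp only [Finset.mem_range]; omega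
    · intro a ha b hb hab
      simp only [Finset.coe_range, Set.mem_Iio] at ha hb hab
      omega
    · intro c _; positivity
  calc _ ≤ 2 * Real.exp 1 * 2 * (Real.exp 1 / 2) ^ 2 * (2 * s) ^ 2 *
        ((2 * s * Real.exp 1) ^ m * dd m) * C' :=
        mul_le_mul_of_nonneg_left hsum (by positivity)
    _ = _ := by ring

/-! ### Upper bound for the logarithmic sum -/

lemma card_divisors_prod {A : Finset ℕ} (hA : ∀ p ∈ A, p.Prime) :
    (∏ p ∈ A, p).divisors.card = 2 ^ A.card := by
  induction A using Finset.induction_on with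
  | empty => simp
  | insert p A hp ih =>
    have hp' := hA p (Finset.mem_insert_self _ _)
    have hA' : ∀ r ∈ A, r.Prime := fun r hr => hA r (Finset.mem_insert_of_mem hr)
    rw [Finset.prod_insert hp, Nat.Coprime.card_divisors_mul, ih hA', Finset.card_insert_of_notMem hp,
      hp'.divisors, Finset.card_pair hp'.one_lt.ne, pow_succ, mul_comm]
    refine Nat.Coprime.prod_right fun r hr => (Nat.coprime_primes hp' (hA' r hr)).2 ?_
    rintro rfl; exact hp hr

lemma log_prod {A : Finset ℕ} (hA : ∀ p ∈ A, p.Prime) :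
    Real.log ((∏ p ∈ A, p : ℕ) : ℝ) = ∑ p ∈ A, Real.log p := by
  rw [Nat.cast_prod, Real.log_prod]
  intro p hp
  exact_mod_cast (hA p hp).ne_zero

/-- Primes outside `P` are counted by `2 ^ #(A \ P)` subsets, and the product `a` of those inside `P`
has all its divisors in at most `1 + log a / log 2` dyadic intervals. -/
lemma NN_split {A : Finset ℕ} (hA : ∀ p ∈ A, p.Prime) (P : Finset ℕ) :
    (NN (∏ p ∈ A, p) : ℝ) ≤
      2 * 2 ^ (A \ P).card * (1 + 1 / Real.log 2 * ∑ p ∈ A ∩ P, Real.log p) := by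
  have h1 : ∏ p ∈ A, p = (∏ p ∈ A ∩ P, p) * ∏ p ∈ A \ P, p := by
    rw [← Finset.prod_inter_mul_prod_sdiff]
  have hA1 : ∀ p ∈ A ∩ P, p.Prime := fun p hp => hA p (Finset.mem_inter.1 hp).1
  have hA2 : ∀ p ∈ A \ P, p.Prime := fun p hp => hA p (Finset.mem_sdiff.1 hp).1
  have n1 : ∏ p ∈ A ∩ P, p ≠ 0 := Finset.prod_ne_zero_iff.2 fun p hp => (hA1 p hp).ne_zero
  have n2 : ∏ p ∈ A \ P, p ≠ 0 := Finset.prod_ne_zero_iff.2 fun p hp => (hA2 p hp).ne_zero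
  have h2 := NN_mul_le n1 n2
  rw [← h1, card_divisors_prod hA2] at h2
  have h3 := NN_le_log (∏ p ∈ A ∩ P, p)
  have hl2 : 0 < Real.log 2 := Real.log_pos (by norm_num)
  have h4 : (Nat.log 2 (∏ p ∈ A ∩ P, p) : ℝ) ≤ 1 / Real.log 2 * ∑ p ∈ A ∩ P, Real.log p := by
    rw [← log_prod hA1, one_div, inv_mul_eq_div, le_div_iff₀ hl2, ← Real.log_pow]
    refine Real.log_le_log (by positivity) ?_
    exact_mod_cast Nat.pow_log_le_self 2 n1
  calc (NN (∏ p ∈ A, p) : ℝ) ≤ 2 * 2 ^ (A \ P).card * (NN (∏ p ∈ A ∩ P, p) : ℝ) := by exact_mod_cast h2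
    _ ≤ 2 * 2 ^ (A \ P).card * (1 + (Nat.log 2 (∏ p ∈ A ∩ P, p) : ℝ)) := by
        gcongr
        exact_mod_cast (by omega : NN (∏ p ∈ A ∩ P, p) ≤ 1 + Nat.log 2 (∏ p ∈ A ∩ P, p))
    _ ≤ _ := by gcongr

/-- Sets of primes up to block `V` whose walk `|A ∩ P_l| - l` is at `l = j` within `e` of its
maximum. -/
noncomputable def peak (lam : ℕ → ℕ) (V j e : ℕ) : Finset (Finset ℕ) :=
  (PP lam V).powerset.filter
    (fun A => ∀ l ≤ V, (A ∩ PP lam l).card + j ≤ (A ∩ PP lam j).card + e + l)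

lemma mem_peak {lam : ℕ → ℕ} {V j e : ℕ} {A : Finset ℕ} :
    A ∈ peak lam V j e ↔ A ⊆ PP lam V ∧
      ∀ l ≤ V, (A ∩ PP lam l).card + j ≤ (A ∩ PP lam j).card + e + l := by
  simp [peak]

/-- Each squarefree `a` is attached to a time `j` at which the walk of its prime factors is maximal. -/
lemma TT_le_peak {lam : ℕ → ℕ} {V x : ℕ} (hx : x ≤ lam V) :
    TT x ≤ ∑ j ∈ Finset.range (V + 1), ∑ A ∈ peak lam V j 0, (NN (∏ p ∈ A, p) : ℝ) * wt A := by
  rw [Finset.sum_sigma']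
  have hj : ∀ a : ℕ, ∃ j ∈ Finset.range (V + 1), ∀ l ∈ Finset.range (V + 1),
      (((a.primeFactors ∩ PP lam l).card : ℤ) - l) ≤ ((a.primeFactors ∩ PP lam j).card : ℤ) - j :=
    fun a => Finset.exists_max_image (Finset.range (V + 1))
      (fun l => (((a.primeFactors ∩ PP lam l).card : ℤ) - l)) ⟨0, by simp⟩
  choose J hJ1 hJ2 using hj
  refine sum_le_sum_inj (fun a => ⟨J a, a.primeFactors⟩) ?_ ?_ ?_ ?_
  · intro a ha
    rw [mem_sqf] at ha
    rw [Finset.mem_sigma, mem_peak]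
    refine ⟨hJ1 a, fun p hp => ?_, fun l hl => ?_⟩
    · have hp1 := Nat.prime_of_mem_primeFactors hp
      exact mem_pr.2 ⟨(Nat.le_of_dvd ha.1 (Nat.dvd_of_mem_primeFactors hp)).trans (ha.2.1.trans hx), hp1⟩
    · have := hJ2 a l (Finset.mem_range.2 (by omega))
      simp only
      omega
  · intro a ha b hb hab
    have h := congrArg (fun z : (_ : ℕ) × Finset ℕ => ∏ p ∈ z.2, p) hab
    simp only at h
    rwa [Nat.prod_primeFactors_of_squarefree (mem_sqf.1 ha).2.2,
      Nat.prod_primeFactors_of_squarefree (mem_sqf.1 hb).2.2] at h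
  · intro a ha
    simp only
    rw [wt_eq, Nat.prod_primeFactors_of_squarefree (mem_sqf.1 ha).2.2, mul_one_div]
  · intro z _
    exact mul_nonneg (by positivity) (wt_nonneg _)

lemma inter_union_sdiff' (A P : Finset ℕ) : A ∩ P ∪ A \ P = A := by
  rw [Finset.union_comm, Finset.sdiff_union_inter]

/-- Cutting a walk at a near-maximum `j` gives two independent walks below barriers: the one after `j`
stays below the barrier `2`, and the one before `j` ends at distance `2` from its own barrier `c`. -/
lemma peak_sum_le {lam : ℕ → ℕ} {C : ℝ} (hB : Blocks lam C) {V j : ℕ} (hj : j ≤ V) :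
    ∑ A ∈ peak lam V j 1, 2 ^ (A \ PP lam j).card * wt A ≤
      (∑ c ∈ Finset.Icc 1 ((PP lam j).card + 2), Z (PP lam) 0 j c (j + c - 2)) *
      ∑ k ∈ Finset.range (V - j + 2), 2 ^ k * Z (PP lam) j (V - j) 2 k := by
  have e1 : ∑ k ∈ Finset.range (V - j + 2), 2 ^ k * Z (PP lam) j (V - j) 2 k =
      ∑ z ∈ (Finset.range (V - j + 2)).sigma (fun k => paths (PP lam) j (V - j) 2 k),
        2 ^ z.1 * wt z.2 := by
    rw [Finset.sum_sigma]
    exact Finset.sum_congr rfl fun k _ => by rw [Z, Finset.mul_sum]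
  rw [e1]
  unfold Z
  rw [Finset.sum_sigma', Finset.sum_mul_sum, ← Finset.sum_product']
  -- The barrier `c = #(A ∩ PP lam j) + 2 - j` depends on `A`; it is at least `1` by the peak
  -- condition at `l = 0`.
  refine sum_le_sum_inj (fun A => (⟨(A ∩ PP lam j).card + 2 - j, A ∩ PP lam j⟩,
    ⟨(A \ PP lam j).card, A \ PP lam j⟩)) ?_ ?_ ?_ ?_
  · intro A hA
    obtain ⟨hA1, hA2⟩ := mem_peak.1 hA
    have h0 := hA2 0 (Nat.zero_le _)
    rw [hB.PP_zero, Finset.inter_empty, Finset.card_empty] at h0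
    have hsplit : ∀ l ≤ V - j, ((A \ PP lam j) ∩ PP lam (j + l)).card + (A ∩ PP lam j).card =
        (A ∩ PP lam (j + l)).card := by
      intro l _
      rw [← Finset.card_union_of_disjoint]
      · congr 1
        ext p
        have : p ∈ PP lam j → p ∈ PP lam (j + l) := fun h => hB.PP_mono (Nat.le_add_right j l) h
        simp only [Finset.mem_union, Finset.mem_inter, Finset.mem_sdiff]
        tauto
      · rw [Finset.disjoint_left]
        intro p hp hq
        exact (Finset.mem_sdiff.1 (Finset.mem_inter.1 hp).1).2 (Finset.mem_inter.1 hq).2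
    have hV : (A \ PP lam j) ∩ PP lam (j + (V - j)) = A \ PP lam j := by
      rw [Finset.inter_eq_left, Nat.add_sub_cancel' hj]
      exact Finset.sdiff_subset.trans hA1
    rw [Finset.mem_product, Finset.mem_sigma, Finset.mem_sigma]
    simp only
    rw [mem_paths, mem_paths, Finset.mem_Icc, Finset.mem_range]
    have hc : (A ∩ PP lam j).card ≤ (PP lam j).card := Finset.card_le_card Finset.inter_subset_right
    refine ⟨⟨⟨by omega, by omega⟩, ?_, by omega, fun l hl => ?_⟩, ?_, ?_, rfl, fun l hl => ?_⟩
    · rw [hB.PP_zero, zero_add, Finset.sdiff_empty]; exact Finset.inter_subset_right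
    · rw [zero_add]
      have h1 := hA2 l (hl.trans hj)
      have h2 : A ∩ PP lam j ∩ PP lam l ⊆ A ∩ PP lam l := by
        intro p; simp only [Finset.mem_inter]; tauto
      have h3 := Finset.card_le_card h2
      omega
    · have h1 := hsplit (V - j) le_rfl
      have h2 := hA2 V le_rfl
      rw [hV] at h1
      rw [Nat.add_sub_cancel' hj] at h1
      omega
    · rw [Nat.add_sub_cancel' hj]; exact Finset.sdiff_subset_sdiff hA1 le_rfl
    · have h1 := hsplit l hl
      have h2 := hA2 (j + l) (by omega)
      omega
  · intro A _ B _ hAB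
    simp only [Prod.mk.injEq, Sigma.mk.injEq, heq_eq_eq] at hAB
    rw [← inter_union_sdiff' A (PP lam j), ← inter_union_sdiff' B (PP lam j), hAB.1.2, hAB.2.2]
  · intro A _
    simp only
    have : wt A = wt (A ∩ PP lam j) * wt (A \ PP lam j) := by
      rw [← wt_union (Finset.disjoint_sdiff_inter A (PP lam j)).symm, inter_union_sdiff']
    rw [this]
    exact le_of_eq (by ring)
  · intro z _
    have := wt_nonneg z.1.2
    have := wt_nonneg z.2.2
    positivity

/-- Removing a prime lowers the walk by at most `1`, so `j` remains within `1` of the maximum; the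
removed prime then contributes a factor `∑ log p / p`. -/
lemma peak_peel {lam : ℕ → ℕ} {C : ℝ} (hB : Blocks lam C) {V j : ℕ} (hj : j ≤ V) :
    ∑ A ∈ peak lam V j 0, (∑ p ∈ A ∩ PP lam j, Real.log p) * (2 ^ (A \ PP lam j).card * wt A) ≤
      (∑ p ∈ PP lam j, Real.log p / p) *
        ∑ A ∈ peak lam V j 1, 2 ^ (A \ PP lam j).card * wt A := by
  set F : ℕ → Finset ℕ → ℝ := fun p B => if p ∈ PP lam j ∧ B ∈ peak lam V j 1 then
    Real.log p / p * (2 ^ (B \ PP lam j).card * wt B) else 0 with hF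
  have hF0 : ∀ p B, 0 ≤ F p B := by
    intro p B
    simp only [hF]
    split_ifs
    · have := wt_nonneg B
      have := Real.log_natCast_nonneg p
      positivity
    · exact le_rfl
  have h1 : ∀ A ∈ peak lam V j 0, (∑ p ∈ A ∩ PP lam j, Real.log p) * (2 ^ (A \ PP lam j).card * wt A) ≤
      ∑ p ∈ A, F p (A.erase p) := by
    intro A hA
    rw [Finset.sum_mul]
    refine (Finset.sum_le_sum fun p hp => ?_).trans
      (Finset.sum_le_sum_of_subset_of_nonneg Finset.inter_subset_left fun p _ _ => hF0 _ _)
    obtain ⟨hpA, hpj⟩ := Finset.mem_inter.1 hp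
    obtain ⟨hA1, hA2⟩ := mem_peak.1 hA
    have hmem : A.erase p ∈ peak lam V j 1 := by
      rw [mem_peak]
      refine ⟨(Finset.erase_subset _ _).trans hA1, fun l hl => ?_⟩
      have h2 := hA2 l hl
      have h3 : (A.erase p ∩ PP lam j).card + 1 = (A ∩ PP lam j).card := by
        rw [Finset.erase_inter, Finset.card_erase_add_one hp]
      have h4 : (A.erase p ∩ PP lam l).card ≤ (A ∩ PP lam l).card :=
        Finset.card_le_card (Finset.inter_subset_inter_right (Finset.erase_subset _ _))
      omega
    have h5 : A.erase p \ PP lam j = A \ PP lam j := by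
      ext r
      simp only [Finset.mem_sdiff, Finset.mem_erase]
      constructor
      · tauto
      · rintro ⟨a, b⟩
        exact ⟨⟨fun h => b (h ▸ hpj), a⟩, b⟩
    have h6 : wt A = 1 / (p : ℝ) * wt (A.erase p) := by
      rw [← wt_insert (Finset.notMem_erase p A), Finset.insert_erase hpA]
    simp only [hF]
    rw [if_pos ⟨hpj, hmem⟩, h5, h6]
    exact le_of_eq (by ring)
  have h2 : ∑ A ∈ peak lam V j 0, ∑ p ∈ A, F p (A.erase p) ≤
      ∑ A ∈ (PP lam V).powerset, ∑ p ∈ A, F p (A.erase p) :=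
    Finset.sum_le_sum_of_subset_of_nonneg (Finset.filter_subset _ _)
      fun A _ _ => Finset.sum_nonneg fun p _ => hF0 _ _
  refine (Finset.sum_le_sum h1).trans (h2.trans ?_)
  rw [peel]
  have h3 : ∀ p ∈ PP lam V, ∑ B ∈ ((PP lam V).erase p).powerset, F p B ≤
      if p ∈ PP lam j then Real.log p / p *
        ∑ A ∈ peak lam V j 1, 2 ^ (A \ PP lam j).card * wt A else 0 := by
    intro p _
    split_ifs with hp
    · calc ∑ B ∈ ((PP lam V).erase p).powerset, F p B ≤ ∑ B ∈ (PP lam V).powerset, F p B :=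
            Finset.sum_le_sum_of_subset_of_nonneg
              (Finset.powerset_mono.2 (Finset.erase_subset _ _)) fun B _ _ => hF0 _ _
        _ = _ := by
            rw [Finset.mul_sum]
            simp only [hF, hp, true_and]
            rw [← Finset.sum_filter]
            refine Finset.sum_congr ?_ fun _ _ => rfl
            ext B
            simp only [Finset.mem_filter, Finset.mem_powerset, mem_peak]
            tauto
    · refine le_of_eq (Finset.sum_eq_zero fun B _ => ?_)
      simp [hF, hp]
  refine (Finset.sum_le_sum h3).trans (le_of_eq ?_)
  rw [← Finset.sum_filter, Finset.sum_mul]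
  refine Finset.sum_congr ?_ fun _ _ => rfl
  ext p
  have : p ∈ PP lam j → p ∈ PP lam V := fun h => hB.PP_mono hj h
  simp only [Finset.mem_filter]
  tauto

/-- Upper bound for the logarithmic sum. The part of the walk after its maximum `j` carries the factor
`2 ^ (V - j)`, and the logarithm of the part before it costs a factor `O(2 ^ j)`, so every `j`
contributes `(2 e log 2) ^ V` times `dd j * dd (V - j)`. -/
theorem TT_upper {lam : ℕ → ℕ} {C : ℝ} (hB : Blocks lam C) : ∃ C' : ℝ, 0 < C' ∧ ∀ V x : ℕ,
    x ≤ lam V → TT x ≤ C' * ((2 * Real.log 2 * Real.exp 1) ^ V * dd V) := by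
  obtain ⟨C1, hC1, f1⟩ := first_part hB
  obtain ⟨C2, hC2, f2⟩ := second_part hB
  obtain ⟨C3, hC3, f3⟩ := dd_conv_sum
  obtain ⟨K, hK, f4⟩ := mertens_one
  have hC := hB.C_pos
  have hl2 : 0 < Real.log 2 := Real.log_pos (by norm_num)
  set C4 := 2 * (1 + 1 / Real.log 2 * (C + K)) with hC4
  have hC4' : 0 < C4 := by positivity
  refine ⟨C4 * C1 * C2 * C3, by positivity, fun V x hx => (TT_le_peak hx).trans ?_⟩
  have key : ∀ j ∈ Finset.range (V + 1), ∑ A ∈ peak lam V j 0, (NN (∏ p ∈ A, p) : ℝ) * wt A ≤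
      C4 * C1 * C2 * (2 * Real.log 2 * Real.exp 1) ^ V * (dd j * dd (V - j)) := by
    intro j hj
    have hjV : j ≤ V := by rw [Finset.mem_range] at hj; omega
    set S := ∑ A ∈ peak lam V j 1, 2 ^ (A \ PP lam j).card * wt A with hS
    have hS0 : 0 ≤ S := Finset.sum_nonneg fun A _ => mul_nonneg (by positivity) (wt_nonneg _)
    have a1 : ∑ A ∈ peak lam V j 0, (NN (∏ p ∈ A, p) : ℝ) * wt A ≤
        2 * ∑ A ∈ peak lam V j 0, 2 ^ (A \ PP lam j).card * wt A +
        2 * (1 / Real.log 2) * ∑ A ∈ peak lam V j 0,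
          (∑ p ∈ A ∩ PP lam j, Real.log p) * (2 ^ (A \ PP lam j).card * wt A) := by
      rw [Finset.mul_sum, Finset.mul_sum, ← Finset.sum_add_distrib]
      refine Finset.sum_le_sum fun A hA => ?_
      have hpr : ∀ p ∈ A, p.Prime := fun p hp => (mem_pr.1 ((mem_peak.1 hA).1 hp)).2
      refine (mul_le_mul_of_nonneg_right (NN_split hpr (PP lam j)) (wt_nonneg A)).trans (le_of_eq ?_)
      ring
    have a2 : ∑ A ∈ peak lam V j 0, 2 ^ (A \ PP lam j).card * wt A ≤ S := by
      refine Finset.sum_le_sum_of_subset_of_nonneg (fun A hA => ?_)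
        fun A _ _ => mul_nonneg (by positivity) (wt_nonneg _)
      rw [mem_peak] at hA ⊢
      exact ⟨hA.1, fun l hl => by have := hA.2 l hl; omega⟩
    have a3 := peak_peel hB hjV
    have a4 : ∑ p ∈ PP lam j, Real.log p / p ≤ (C + K) * 2 ^ j := by
      have h1 : 1 ≤ lam j := (Nat.one_le_two_pow).trans (hB.two_pow_le j)
      have h2 := (abs_le.1 (f4 (lam j) h1)).2
      have h3 := hB.log_le j
      have h4 : (1 : ℝ) ≤ 2 ^ j := one_le_pow₀ (by norm_num)
      have h5 : K ≤ K * 2 ^ j := le_mul_of_one_le_right hK.le h4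
      unfold PP
      linarith
    have a5 : S ≤ (C1 * ((Real.log 2 * Real.exp 1) ^ j * dd j)) *
        (C2 * ((2 * Real.log 2 * Real.exp 1) ^ (V - j) * dd (V - j))) := by
      have := dd_pos j
      refine (peak_sum_le hB hjV).trans (mul_le_mul (f1 j _) (f2 j _) ?_ (by positivity))
      exact Finset.sum_nonneg fun k _ => mul_nonneg (by positivity) (Z_nonneg _ _ _ _ _)
    have a6 : (1 : ℝ) ≤ 2 ^ j := one_le_pow₀ (by norm_num)
    calc ∑ A ∈ peak lam V j 0, (NN (∏ p ∈ A, p) : ℝ) * wt A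
        ≤ 2 * S + 2 * (1 / Real.log 2) * (((C + K) * 2 ^ j) * S) := by
          refine a1.trans (add_le_add (by linarith) ?_)
          refine mul_le_mul_of_nonneg_left (a3.trans ?_) (by positivity)
          exact mul_le_mul_of_nonneg_right a4 hS0
      _ ≤ 2 * (2 ^ j * S) + 2 * (1 / Real.log 2) * (((C + K) * 2 ^ j) * S) := by
          have : S ≤ 2 ^ j * S := le_mul_of_one_le_left hS0 a6
          linarith
      _ = C4 * 2 ^ j * S := by rw [hC4]; ring
      _ ≤ C4 * 2 ^ j * ((C1 * ((Real.log 2 * Real.exp 1) ^ j * dd j)) *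
        (C2 * ((2 * Real.log 2 * Real.exp 1) ^ (V - j) * dd (V - j)))) :=
          mul_le_mul_of_nonneg_left a5 (by positivity)
      _ = _ := by
          have : (2 * Real.log 2 * Real.exp 1) ^ V = 2 ^ j * (Real.log 2 * Real.exp 1) ^ j *
              (2 * Real.log 2 * Real.exp 1) ^ (V - j) := by
            rw [← mul_pow, ← mul_assoc, ← pow_add, Nat.add_sub_cancel' hjV]
          rw [this]; ring
  refine (Finset.sum_le_sum key).trans ?_
  rw [← Finset.mul_sum]
  have hd := dd_pos V
  calc _ ≤ C4 * C1 * C2 * (2 * Real.log 2 * Real.exp 1) ^ V * (C3 * dd V) :=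
        mul_le_mul_of_nonneg_left (f3 V) (by positivity)
    _ = _ := by ring

/-! ### From logarithmic sums to a lower bound -/

/-- An explicit Chebyshev lower bound for `∑ log p` over `p ≤ n`. -/
lemma half_le_theta {n : ℕ} (hn : 50 ^ 4 ≤ n) : (n : ℝ) / 2 ≤ ∑ p ∈ pr n, Real.log p := by
  rw [← theta_eq]
  refine le_trans ?_ (Chebyshev.theta_ge n)
  have hn0 : (0 : ℝ) < n := by
    have : 0 < n := lt_of_lt_of_le (by norm_num) hn
    exact_mod_cast this
  have hn1 : ((50 : ℝ) ^ 4) ≤ n := by exact_mod_cast hn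
  set u := √(n : ℝ) with hu
  set t := √u with ht
  have hu0 : 0 < u := Real.sqrt_pos.2 hn0
  have ht0 : 0 < t := Real.sqrt_pos.2 hu0
  have e1 : u = t ^ 2 := (Real.sq_sqrt hu0.le).symm
  have e2 : (n : ℝ) = t ^ 4 := by
    rw [← Real.sq_sqrt hn0.le, ← hu, e1]; ring
  have ht50 : 50 ≤ t := by
    rw [e2] at hn1
    exact le_of_pow_le_pow_left₀ (by norm_num) ht0.le hn1
  have e3 : Real.log n ≤ 4 * t := by
    have h := log_le_two_sqrt hu0
    have : Real.log n = 2 * Real.log u := by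
      rw [hu, Real.log_sqrt hn0.le]; ring
    rw [this]; linarith
  have e4 : Real.log ((n : ℝ) + 1) ≤ Real.log n + 1 := by
    have h1 : (n : ℝ) + 1 ≤ n * Real.exp 1 := by
      have := Real.add_one_le_exp (1 : ℝ)
      nlinarith
    calc Real.log ((n : ℝ) + 1) ≤ Real.log (n * Real.exp 1) := Real.log_le_log (by positivity) h1
      _ = _ := by rw [Real.log_mul hn0.ne' (Real.exp_pos 1).ne', Real.log_exp]
  have l2 := Real.log_two_gt_d9
  have e5 : u * Real.log n ≤ t ^ 2 * (4 * t) := by rw [e1]; gcongr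
  have e6 : (n : ℝ) * 0.69 ≤ n * Real.log 2 := by gcongr; linarith
  have e7 : 50 * t ^ 3 ≤ t ^ 4 := by
    have : t ^ 4 = t * t ^ 3 := by ring
    rw [this]; gcongr
  have e8 : 2500 * t ≤ t ^ 3 := by
    have : t ^ 3 = t ^ 2 * t := by ring
    rw [this]; gcongr; nlinarith
  nlinarith

/-- Numbers `n = a * p ≤ x` with `a ∈ S` and a prime `p > M` determine `a` and `p`, and
`NN n ≥ NN a`. Weighting by `log p ≤ log x`, the primes `p ∈ (M, x / a]` contribute `≫ x / a`. -/
theorem lower_reduction (M x : ℕ) (hM : 50 ^ 4 ≤ M) (hx : M ^ 3 ≤ x) (S : Finset ℕ)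
    (hS : ∀ a ∈ S, 1 ≤ a ∧ a ≤ M) :
    (x : ℝ) / 8 * ∑ a ∈ S, (NN a : ℝ) / a ≤ Real.log x * ∑ n ∈ Finset.Icc 1 x, (NN n : ℝ) := by
  have h1 : ∑ z ∈ S.sigma (fun a => pr (x / a) \ pr M), (NN z.1 : ℝ) * Real.log z.2 ≤
      ∑ n ∈ Finset.Icc 1 x, Real.log x * (NN n : ℝ) := by
    refine sum_le_sum_inj (fun z => z.1 * z.2) ?_ ?_ ?_ ?_
    · rintro ⟨a, p⟩ hz
      obtain ⟨ha, hp⟩ := Finset.mem_sigma.1 hz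
      simp only [Finset.mem_sdiff, mem_pr] at ha hp
      have ha' := hS a ha
      rw [Finset.mem_Icc]
      refine ⟨Nat.mul_pos ha'.1 hp.1.2.pos, ?_⟩
      have := (Nat.le_div_iff_mul_le ha'.1).1 hp.1.1
      simp only; rw [mul_comm]; exact this
    · rintro ⟨a, p⟩ hz ⟨b, r⟩ hw hab
      obtain ⟨ha, hp⟩ := Finset.mem_sigma.1 hz
      obtain ⟨hb, hr⟩ := Finset.mem_sigma.1 hw
      simp only [Finset.mem_sdiff, mem_pr, not_and] at ha hp hb hr hab
      have hpM : M < p := by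
        by_contra h; exact hp.2 (by omega) hp.1.2
      have hpr : p = r := by
        have hd : p ∣ b * r := ⟨a, by rw [← hab, mul_comm]⟩
        rcases hp.1.2.dvd_mul.1 hd with h | h
        · have := Nat.le_of_dvd (hS b hb).1 h
          have := (hS b hb).2
          omega
        · exact (Nat.prime_dvd_prime_iff_eq hp.1.2 hr.1.2).1 h
      subst hpr
      have := Nat.eq_of_mul_eq_mul_right hp.1.2.pos hab
      subst this; rfl
    · rintro ⟨a, p⟩ hz
      obtain ⟨ha, hp⟩ := Finset.mem_sigma.1 hz
      simp only [Finset.mem_sdiff, mem_pr] at ha hp ⊢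
      have ha' := hS a ha
      have h2 : p ≤ x := hp.1.1.trans (Nat.div_le_self _ _)
      have h3 : NN a ≤ NN (a * p) := NN_dvd (Dvd.intro _ rfl) (Nat.mul_pos ha'.1 hp.1.2.pos).ne'
      have h4 : Real.log p ≤ Real.log x :=
        Real.log_le_log (by exact_mod_cast hp.1.2.pos) (by exact_mod_cast h2)
      have h5 := Real.log_natCast_nonneg p
      have h6 : (NN a : ℝ) ≤ NN (a * p) := by exact_mod_cast h3
      rw [mul_comm]
      gcongr
    · intro n _
      have := Real.log_natCast_nonneg x
      positivity
  rw [← Finset.mul_sum, Finset.sum_sigma] at h1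
  refine le_trans ?_ h1
  rw [Finset.mul_sum]
  refine Finset.sum_le_sum fun a ha => ?_
  obtain ⟨ha1, ha2⟩ := hS a ha
  simp only
  rw [← Finset.mul_sum]
  have ha0 : (0 : ℝ) < a := by exact_mod_cast ha1
  have hM0 : 0 < M := lt_of_lt_of_le (by norm_num) hM
  have hge : M ^ 2 ≤ x / a := by
    rw [Nat.le_div_iff_mul_le ha1]
    calc M ^ 2 * a ≤ M ^ 2 * M := Nat.mul_le_mul_left _ ha2
      _ = M ^ 3 := by ring
      _ ≤ x := hx
  have hMle : M ≤ M ^ 2 := Nat.le_self_pow (by norm_num) M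
  have h2 : ∑ p ∈ pr (x / a) \ pr M, Real.log p =
      ∑ p ∈ pr (x / a), Real.log p - ∑ p ∈ pr M, Real.log p := by
    rw [← Finset.sum_sdiff (pr_mono (hMle.trans hge))]; ring
  have h3 := half_le_theta (hM.trans (hMle.trans hge))
  have h4 := theta_le M
  have h5 : Real.log 4 ≤ 2 := by
    have : (4 : ℝ) = 2 ^ 2 := by norm_num
    rw [this, Real.log_pow]
    have := Real.log_two_lt_d9
    push_cast; linarith
  have h6 : ((M : ℝ)) ^ 2 ≤ (x / a : ℕ) := by exact_mod_cast hge
  have hMr : (50 : ℝ) ≤ M := by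
    have : 50 ≤ M := le_trans (by norm_num) hM
    exact_mod_cast this
  have h7 : (x : ℝ) / a < (x / a : ℕ) + 1 := by
    rw [← Nat.floor_div_eq_div (K := ℝ)]
    exact Nat.lt_floor_add_one _
  have h8 : (x : ℝ) / a / 8 ≤ ∑ p ∈ pr (x / a) \ pr M, Real.log p := by
    rw [h2]
    have h9 : Real.log 4 * M ≤ 2 * M := by gcongr
    nlinarith
  calc (x : ℝ) / 8 * ((NN a : ℝ) / a) = NN a * ((x : ℝ) / a / 8) := by ring
    _ ≤ _ := by gcongr

/-! ### Mass of walks below the barrier -/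

/-- Removing one prime from a path leaves a path with one element fewer below the same barrier. -/
lemma paths_peel (P : ℕ → Finset ℕ) (j m c k : ℕ) (F : ℕ → Finset ℕ → ℝ) (hF : ∀ p B, 0 ≤ F p B) :
    ∑ A ∈ paths P j m c (k + 1), (∑ p ∈ A, F p (A.erase p)) * wt A ≤
      ∑ B ∈ paths P j m c k, (∑ p ∈ P (j + m) \ P j, 1 / (p : ℝ) * F p B) * wt B := by
  set U := P (j + m) \ P j with hU
  set G : ℕ → Finset ℕ → ℝ := fun p B => if B ∈ paths P j m c k then
    1 / (p : ℝ) * F p B * wt B else 0 with hG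
  have hG0 : ∀ p B, 0 ≤ G p B := by
    intro p B
    simp only [hG]
    split_ifs
    · have := wt_nonneg B
      have := hF p B
      positivity
    · exact le_rfl
  have h1 : ∀ A ∈ paths P j m c (k + 1), (∑ p ∈ A, F p (A.erase p)) * wt A =
      ∑ p ∈ A, G p (A.erase p) := by
    intro A hA
    rw [Finset.sum_mul]
    refine Finset.sum_congr rfl fun p hp => ?_
    rw [mem_paths] at hA
    have hmem : A.erase p ∈ paths P j m c k := by
      rw [mem_paths]
      refine ⟨(Finset.erase_subset _ _).trans hA.1, ?_, fun l hl => ?_⟩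
      · have := Finset.card_erase_add_one hp
        omega
      · exact (Finset.card_le_card
          (Finset.inter_subset_inter_right (Finset.erase_subset _ _))).trans_lt (hA.2.2 l hl)
    have h6 : wt A = 1 / (p : ℝ) * wt (A.erase p) := by
      rw [← wt_insert (Finset.notMem_erase p A), Finset.insert_erase hp]
    simp only [hG]
    rw [if_pos hmem, h6]; ring
  rw [Finset.sum_congr rfl h1]
  have h2 : ∑ A ∈ paths P j m c (k + 1), ∑ p ∈ A, G p (A.erase p) ≤
      ∑ A ∈ U.powerset, ∑ p ∈ A, G p (A.erase p) :=
    Finset.sum_le_sum_of_subset_of_nonneg (Finset.filter_subset _ _)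
      fun A _ _ => Finset.sum_nonneg fun p _ => hG0 _ _
  refine h2.trans ?_
  rw [peel]
  have h3 : ∀ p ∈ U, ∑ B ∈ (U.erase p).powerset, G p B ≤
      ∑ B ∈ paths P j m c k, 1 / (p : ℝ) * F p B * wt B := by
    intro p _
    calc ∑ B ∈ (U.erase p).powerset, G p B ≤ ∑ B ∈ U.powerset, G p B :=
          Finset.sum_le_sum_of_subset_of_nonneg
            (Finset.powerset_mono.2 (Finset.erase_subset _ _)) fun B _ _ => hG0 _ _
      _ = _ := by
          simp only [hG]
          rw [← Finset.sum_filter]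
          refine Finset.sum_congr ?_ fun _ _ => rfl
          ext B
          simp only [Finset.mem_filter, Finset.mem_powerset, mem_paths]
          tauto
  refine (Finset.sum_le_sum h3).trans (le_of_eq ?_)
  rw [Finset.sum_comm]
  refine Finset.sum_congr rfl fun B _ => ?_
  rw [Finset.sum_mul]

/-- Starting from a late block `J` makes the accumulated error in `Z_ge_q` at most `1 / 2`. -/
lemma exists_start : ∃ J : ℕ, ∀ m : ℕ,
    ∑ i ∈ Finset.range m, 2 * ((i : ℝ) + 1) * (i + 2) * (1 / 2 ^ (J + i)) ≤ 1 / 2 := by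
  have hs : Summable fun i : ℕ => ((i : ℝ) ^ 2 * (1 / 2) ^ i + 3 * ((i : ℝ) ^ 1 * (1 / 2) ^ i) +
      2 * ((i : ℝ) ^ 0 * (1 / 2) ^ i)) := by
    have h := fun k => summable_pow_mul_geometric_of_norm_lt_one k (R := ℝ) (r := 1 / 2)
      (by rw [Real.norm_of_nonneg] <;> norm_num)
    exact ((h 2).add ((h 1).mul_left 3)).add ((h 0).mul_left 2)
  set T := ∑' i : ℕ, ((i : ℝ) ^ 2 * (1 / 2) ^ i + 3 * ((i : ℝ) ^ 1 * (1 / 2) ^ i) +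
      2 * ((i : ℝ) ^ 0 * (1 / 2) ^ i)) with hT
  obtain ⟨J, hJ⟩ := pow_unbounded_of_one_lt (4 * T) (by norm_num : (1 : ℝ) < 2)
  refine ⟨J, fun m => ?_⟩
  have h1 := hs.sum_le_tsum (Finset.range m) fun i _ => by positivity
  rw [← hT] at h1
  have hJ0 : (0 : ℝ) < 2 ^ J := by positivity
  calc ∑ i ∈ Finset.range m, 2 * ((i : ℝ) + 1) * (i + 2) * (1 / 2 ^ (J + i))
      = 2 / 2 ^ J * ∑ i ∈ Finset.range m, ((i : ℝ) ^ 2 * (1 / 2) ^ i + 3 * ((i : ℝ) ^ 1 * (1 / 2) ^ i) +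
      2 * ((i : ℝ) ^ 0 * (1 / 2) ^ i)) := by
        rw [Finset.mul_sum]
        refine Finset.sum_congr rfl fun i _ => ?_
        rw [pow_add, div_pow, one_pow]
        field_simp
        ring
    _ ≤ 2 / 2 ^ J * T := by gcongr
    _ ≤ 1 / 2 := by
        rw [div_mul_eq_mul_div, div_le_iff₀ hJ0]; linarith

/-- Lower bound for the mass of walks of `V` steps that stay below the barrier and end on it. -/
lemma mass_lower {lam : ℕ → ℕ} {C : ℝ} (hB : Blocks lam C) : ∃ J : ℕ, ∀ V,
    1 / 2 * ((Real.log 2 * Real.exp 1) ^ V * dd V) ≤ Z (PP lam) J V 1 V := by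
  obtain ⟨J, hJ⟩ := exists_start
  obtain ⟨l1, l2, l3, l4⟩ := log_two_bounds
  refine ⟨J, fun V => ?_⟩
  have h := Z_ge_q hB.PP_mono (s := Real.log 2) (by linarith) J (fun i => 1 / 2 ^ (J + i))
    (fun i => by positivity) V (fun i _ => hB.le_sum (J + i)) (fun i _ => hB.inv_le (J + i))
    ((hJ V).trans (by norm_num)) V
  rw [Nat.add_sub_cancel_left] at h
  refine le_trans ?_ h
  have h2 := q_ge_one V
  have h3 := hJ V
  have e3 : Real.exp (V : ℝ) = Real.exp 1 ^ V := by rw [← Real.exp_nat_mul, mul_one]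
  have hd := dd_pos V
  rw [mul_pow, mul_assoc, ← e3]
  refine mul_le_mul (by linarith) ?_ (by positivity) (by linarith)
  gcongr

/-- Upper bounds for the mass of walks of `V` steps below the barrier that end on it, or one below it. -/
lemma mass_upper {lam : ℕ → ℕ} {C : ℝ} (hB : Blocks lam C) (J V : ℕ) :
    Z (PP lam) J V 1 V ≤ 36 * ((Real.log 2 * Real.exp 1) ^ V * dd V) ∧
    Z (PP lam) J V 1 (V - 1) ≤ 36 * ((Real.log 2 * Real.exp 1) ^ V * dd V) := by
  obtain ⟨l1, l2, l3, l4⟩ := log_two_bounds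
  have e3 : Real.exp (V : ℝ) = Real.exp 1 ^ V := by rw [← Real.exp_nat_mul, mul_one]
  have hd := dd_pos V
  have he : Real.exp 1 ^ 2 ≤ 9 := by
    have := Real.exp_one_lt_d9
    have := Real.exp_pos 1
    nlinarith
  have h : ∀ k : ℕ, V - 1 ≤ k → k ≤ V →
      Z (PP lam) J V 1 k ≤ 36 * ((Real.log 2 * Real.exp 1) ^ V * dd V) := by
    intro k h1 h2
    refine (Z_le hB.PP_mono l1.le hB.sum_le J V 1 k le_rfl).trans ?_
    have e1 : ((V + 1 - k : ℕ) : ℝ) ≤ 2 := by exact_mod_cast (by omega : V + 1 - k ≤ 2)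
    have e2 : Real.log 2 ^ k ≤ 2 * Real.log 2 ^ V := by
      have h4 : Real.log 2 ^ (k + 1) ≤ Real.log 2 ^ k * 1 := by
        rw [pow_succ]; gcongr
      rcases (by omega : k = V ∨ k + 1 = V) with rfl | rfl
      · have : 0 ≤ Real.log 2 ^ k := by positivity
        linarith
      · rw [pow_succ]
        have : 0 ≤ Real.log 2 ^ k := by positivity
        nlinarith
    calc Real.log 2 ^ k * (2 * Real.exp 1 * (1 : ℕ) * (Real.exp 1 / 2) ^ 1 *
            ((V + 1 - k : ℕ) : ℝ) * Real.exp V * dd V)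
        ≤ 2 * Real.log 2 ^ V * (2 * Real.exp 1 * (1 : ℕ) * (Real.exp 1 / 2) ^ 1 *
            2 * Real.exp V * dd V) := by gcongr
      _ = Real.exp 1 ^ 2 * (4 * ((Real.log 2 * Real.exp 1) ^ V * dd V)) := by
          rw [e3, mul_pow]; push_cast; ring
      _ ≤ 9 * (4 * ((Real.log 2 * Real.exp 1) ^ V * dd V)) := by gcongr
      _ = _ := by ring
  exact ⟨h V (by omega) le_rfl, h (V - 1) le_rfl (by omega)⟩

/-- Cutting a walk at time `j`, where it lies `r` below its highest allowed position, into two walks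
below barriers. -/
lemma crossing_split {lam : ℕ → ℕ} {C : ℝ} (hB : Blocks lam C) {J V j : ℕ} (hj : j ≤ V) :
    ∑ B ∈ paths (PP lam) J V 1 (V - 1), 2 ^ (B ∩ PP lam (J + j)).card * wt B ≤
      ∑ r ∈ Finset.range (j + 1), 2 ^ (j - r) * (Z (PP lam) J j 1 (j - r) *
        Z (PP lam) (J + j) (V - j) (r + 1) (V - 1 - (j - r))) := by
  have e1 : ∀ r ∈ Finset.range (j + 1), 2 ^ (j - r) * (Z (PP lam) J j 1 (j - r) *
        Z (PP lam) (J + j) (V - j) (r + 1) (V - 1 - (j - r))) =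
      ∑ z ∈ paths (PP lam) J j 1 (j - r) ×ˢ
          paths (PP lam) (J + j) (V - j) (r + 1) (V - 1 - (j - r)),
        2 ^ (j - r) * (wt z.1 * wt z.2) := by
    intro r _
    rw [Z, Z, Finset.sum_mul_sum, ← Finset.sum_product', Finset.mul_sum]
  rw [Finset.sum_congr rfl e1, Finset.sum_sigma']
  -- The barrier at time `j` makes the subtraction `r = j - #(B ∩ PP lam (J + j))` exact.
  refine sum_le_sum_inj (fun B => ⟨j - (B ∩ PP lam (J + j)).card,
    (B ∩ PP lam (J + j), B \ PP lam (J + j))⟩) ?_ ?_ ?_ ?_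
  · intro B hB'
    obtain ⟨h1, h2, h3⟩ := mem_paths.1 hB'
    have hjJ := h3 j hj
    have hsplit : ∀ l, ((B \ PP lam (J + j)) ∩ PP lam (J + j + l)).card + (B ∩ PP lam (J + j)).card =
        (B ∩ PP lam (J + (j + l))).card := by
      intro l
      rw [← Finset.card_union_of_disjoint]
      · congr 1
        ext p
        have : p ∈ PP lam (J + j) → p ∈ PP lam (J + j + l) := fun h => hB.PP_mono (Nat.le_add_right _ l) h
        rw [← Nat.add_assoc]
        simp only [Finset.mem_union, Finset.mem_inter, Finset.mem_sdiff]
        tauto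
      · rw [Finset.disjoint_left]
        intro p hp hq
        exact (Finset.mem_sdiff.1 (Finset.mem_inter.1 hp).1).2 (Finset.mem_inter.1 hq).2
    have hV : B ∩ PP lam (J + V) = B := Finset.inter_eq_left.2 (h1.trans Finset.sdiff_subset)
    have hcard : (B \ PP lam (J + j)).card + (B ∩ PP lam (J + j)).card = B.card :=
      Finset.card_sdiff_add_card_inter _ _
    have hle : (B ∩ PP lam (J + j)).card ≤ j := by omega
    have hjj : j - (j - (B ∩ PP lam (J + j)).card) = (B ∩ PP lam (J + j)).card := by omega
    rw [Finset.mem_sigma]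
    simp only
    rw [Finset.mem_range, Finset.mem_product]
    simp only
    rw [mem_paths, mem_paths, hjj]
    refine ⟨by omega, ⟨?_, rfl, fun l hl => ?_⟩, ?_, by omega, fun l hl => ?_⟩
    · intro p hp
      rw [Finset.mem_inter] at hp
      exact Finset.mem_sdiff.2 ⟨hp.2, (Finset.mem_sdiff.1 (h1 hp.1)).2⟩
    · refine (Finset.card_le_card ?_).trans_lt (h3 l (hl.trans hj))
      exact Finset.inter_subset_inter_right Finset.inter_subset_left
    · rw [Nat.add_assoc, Nat.add_sub_cancel' hj]
      exact Finset.sdiff_subset_sdiff (h1.trans Finset.sdiff_subset) le_rfl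
    · have a1 := hsplit l
      have a2 := h3 (j + l) (by omega)
      omega
  · intro A _ B _ hAB
    simp only [Prod.mk.injEq, Sigma.mk.injEq, heq_eq_eq] at hAB
    rw [← inter_union_sdiff' A (PP lam (J + j)), ← inter_union_sdiff' B (PP lam (J + j)),
      hAB.2.1, hAB.2.2]
  · intro B hB'
    obtain ⟨h1, h2, h3⟩ := mem_paths.1 hB'
    have hjJ := h3 j hj
    have hjj : j - (j - (B ∩ PP lam (J + j)).card) = (B ∩ PP lam (J + j)).card := by omega
    simp only
    rw [hjj, ← wt_union (Finset.disjoint_sdiff_inter B (PP lam (J + j))).symm, inter_union_sdiff']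
  · intro z _
    have := wt_nonneg z.2.1
    have := wt_nonneg z.2.2
    positivity

lemma crossing_sum : ∃ C : ℝ, 0 < C ∧ ∀ n : ℕ,
    ∑ r ∈ Finset.range n, ((r : ℝ) + 1) ^ 2 * (Real.exp 1 / 4) ^ r ≤ C := by
  have he : Real.exp 1 / 4 < 1 := by have := Real.exp_one_lt_d9; linarith
  have he0 : 0 < Real.exp 1 / 4 := by positivity
  have h := fun k => summable_pow_mul_geometric_of_norm_lt_one k (R := ℝ) (r := Real.exp 1 / 4)
      (by rw [Real.norm_of_nonneg he0.le]; exact he)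
  have hs : Summable fun r : ℕ => ((r : ℝ) + 1) ^ 2 * (Real.exp 1 / 4) ^ r := by
    refine (((h 2).add ((h 1).mul_left 2)).add (h 0)).congr fun r => ?_
    ring
  refine ⟨∑' r : ℕ, ((r : ℝ) + 1) ^ 2 * (Real.exp 1 / 4) ^ r + 1, ?_, fun n => ?_⟩
  · have : 0 ≤ ∑' r : ℕ, ((r : ℝ) + 1) ^ 2 * (Real.exp 1 / 4) ^ r :=
      tsum_nonneg fun r => by positivity
    linarith
  · have := hs.sum_le_tsum (Finset.range n) fun r _ => by positivity
    linarith

/-- Paths weighted by `2` to the height of the walk at time `j`: a walk lying `r` below its highest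
allowed position there loses a factor `2 ^ r`, so only walks near the barrier matter, and these have a
ballot factor on each side of `j`. -/
lemma crossing {lam : ℕ → ℕ} {C : ℝ} (hB : Blocks lam C) : ∃ C' : ℝ, 0 < C' ∧
    ∀ J V j : ℕ, j ≤ V →
    1 / 2 ^ j * ∑ B ∈ paths (PP lam) J V 1 (V - 1), 2 ^ (B ∩ PP lam (J + j)).card * wt B ≤
      C' * ((Real.log 2 * Real.exp 1) ^ V * (dd j * dd (V - j))) := by
  obtain ⟨C', hC', h⟩ := crossing_sum
  obtain ⟨l1, l2, l3, l4⟩ := log_two_bounds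
  set s := Real.log 2 with hs
  set e := Real.exp 1 with he
  have he0 : 0 < e := Real.exp_pos 1
  refine ⟨2 * e ^ 2 / 2 * (2 * e ^ 2) / s * C', by positivity, fun J V j hj => ?_⟩
  have hd1 := dd_pos j
  have hd2 := dd_pos (V - j)
  have ee : Real.exp (j : ℝ) * Real.exp ((V - j : ℕ) : ℝ) = e ^ V := by
    rw [← Real.exp_add, ← Nat.cast_add, Nat.add_sub_cancel' hj, he, ← Real.exp_nat_mul, mul_one]
  calc _ ≤ 1 / 2 ^ j * ∑ r ∈ Finset.range (j + 1), 2 ^ (j - r) * (Z (PP lam) J j 1 (j - r) *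
        Z (PP lam) (J + j) (V - j) (r + 1) (V - 1 - (j - r))) := by
        gcongr; exact crossing_split hB hj
    _ ≤ ∑ r ∈ Finset.range (j + 1), (2 * e ^ 2 / 2 * (2 * e ^ 2) / s *
          ((s * e) ^ V * (dd j * dd (V - j)))) * (((r : ℝ) + 1) ^ 2 * (e / 4) ^ r) := by
        rw [Finset.mul_sum]
        refine Finset.sum_le_sum fun r hr => ?_
        have hrj : r ≤ j := by rw [Finset.mem_range] at hr; omega
        have z1 := Z_le hB.PP_mono l1.le hB.sum_le J j 1 (j - r) le_rfl
        have z2 := Z_le hB.PP_mono l1.le hB.sum_le (J + j) (V - j) (r + 1) (V - 1 - (j - r)) (by omega)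
        have c1 : ((j + 1 - (j - r) : ℕ) : ℝ) = r + 1 := by
          rw [(by omega : j + 1 - (j - r) = r + 1)]; push_cast; ring
        have c2 : ((V - j + (r + 1) - (V - 1 - (j - r)) : ℕ) : ℝ) ≤ 2 := by
          exact_mod_cast (by omega : V - j + (r + 1) - (V - 1 - (j - r)) ≤ 2)
        rw [c1] at z1
        have z2' : Z (PP lam) (J + j) (V - j) (r + 1) (V - 1 - (j - r)) ≤
            s ^ (V - 1 - (j - r)) * (2 * e * (r + 1) * (e / 2) ^ (r + 1) * 2 *
              Real.exp ((V - j : ℕ) : ℝ) * dd (V - j)) := by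
          refine z2.trans ?_
          push_cast
          gcongr
        have c3 : s ^ (j - r) * s ^ (V - 1 - (j - r)) ≤ s ^ V / s := by
          rw [← pow_add, le_div_iff₀ l1, ← pow_succ]
          exact pow_le_pow_of_le_one l1.le l2 (by omega)
        have c4 : (1 : ℝ) / 2 ^ j * 2 ^ (j - r) = 1 / 2 ^ r := by
          rw [(by rw [← pow_add, Nat.sub_add_cancel hrj] : (2 : ℝ) ^ j = 2 ^ (j - r) * 2 ^ r)]
          field_simp
        calc _ = 1 / 2 ^ j * 2 ^ (j - r) * (Z (PP lam) J j 1 (j - r) *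
                Z (PP lam) (J + j) (V - j) (r + 1) (V - 1 - (j - r))) := by ring
          _ ≤ 1 / 2 ^ j * 2 ^ (j - r) * (_ * _) := by
              refine mul_le_mul_of_nonneg_left (mul_le_mul z1 z2' (Z_nonneg _ _ _ _ _) ?_) (by positivity)
              positivity
          _ = (s ^ (j - r) * s ^ (V - 1 - (j - r))) * (1 / 2 ^ r * ((2 * e ^ 2 / 2 * (r + 1) * dd j) *
                (2 * e * (r + 1) * (e / 2) ^ (r + 1) * 2 * dd (V - j))) *
                (Real.exp (j : ℝ) * Real.exp ((V - j : ℕ) : ℝ))) := by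
              rw [c4]; push_cast; ring
          _ ≤ (s ^ V / s) * (1 / 2 ^ r * ((2 * e ^ 2 / 2 * (r + 1) * dd j) *
                (2 * e * (r + 1) * (e / 2) ^ (r + 1) * 2 * dd (V - j))) *
                (Real.exp (j : ℝ) * Real.exp ((V - j : ℕ) : ℝ))) := by gcongr
          _ = _ := by
              rw [ee, mul_pow, (by norm_num : (4 : ℝ) = 2 * 2), div_pow, div_pow, mul_pow, pow_succ,
                pow_succ (2 : ℝ)]
              field_simp
              ring
    _ ≤ _ := by
        rw [← Finset.mul_sum]
        calc _ ≤ (2 * e ^ 2 / 2 * (2 * e ^ 2) / s *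
          ((s * e) ^ V * (dd j * dd (V - j)))) * C' :=
              mul_le_mul_of_nonneg_left (h _) (by positivity)
          _ = _ := by ring

/-! ### Collisions between subset products -/

/-- Pairs of subsets of `A` whose products lie in the same dyadic interval. -/
noncomputable def coll (A : Finset ℕ) : Finset (Finset ℕ × Finset ℕ) :=
  (A.powerset ×ˢ A.powerset).filter
    (fun z => Nat.log 2 (∏ p ∈ z.1, p) = Nat.log 2 (∏ p ∈ z.2, p))

/-- Cauchy–Schwarz: the `2 ^ #A` subsets of `A` are distributed over `NN (∏ A)` dyadic intervals. -/
lemma four_pow_le {A : Finset ℕ} (hA : ∀ p ∈ A, p.Prime) :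
    4 ^ A.card ≤ NN (∏ p ∈ A, p) * (coll A).card := by
  set f : Finset ℕ → ℕ := fun E => Nat.log 2 (∏ p ∈ E, p) with hf
  set I := A.powerset.image f with hI
  set g : ℕ → Finset (Finset ℕ) := fun t => A.powerset.filter (fun E => f E = t) with hg
  have hn : ∏ p ∈ A, p ≠ 0 := Finset.prod_ne_zero_iff.2 fun p hp => (hA p hp).ne_zero
  have h1 : 2 ^ A.card = ∑ t ∈ I, (g t).card := by
    rw [← Finset.card_powerset, Finset.card_eq_sum_card_image f]
  have h2 : I.card ≤ NN (∏ p ∈ A, p) := by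
    refine Finset.card_le_card fun t ht => ?_
    obtain ⟨E, hE, rfl⟩ := Finset.mem_image.1 ht
    refine Finset.mem_image.2 ⟨∏ p ∈ E, p, Nat.mem_divisors.2 ⟨?_, hn⟩, rfl⟩
    exact Finset.prod_dvd_prod_of_subset _ _ _ (Finset.mem_powerset.1 hE)
  have h3 : ∑ t ∈ I, (g t).card ^ 2 ≤ (coll A).card := by
    have : ∑ t ∈ I, (g t).card ^ 2 = (I.sigma fun t => g t ×ˢ g t).card := by
      rw [Finset.card_sigma]
      exact Finset.sum_congr rfl fun t _ => by rw [Finset.card_product, sq]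
    rw [this]
    refine Finset.card_le_card_of_injOn (fun w => w.2) ?_ ?_
    · rintro ⟨t, z⟩ hw
      simp only [Finset.coe_sigma, Set.mem_sigma_iff, Finset.mem_coe, Finset.mem_product,
        hg, Finset.mem_filter] at hw
      simp only [coll, Finset.coe_filter, Set.mem_ofPred_eq, Finset.mem_product]
      exact ⟨⟨hw.2.1.1, hw.2.2.1⟩, hw.2.1.2.trans hw.2.2.2.symm⟩
    · rintro ⟨t, z⟩ hw ⟨t', z'⟩ hw' h
      simp only [Finset.coe_sigma, Set.mem_sigma_iff, Finset.mem_coe, Finset.mem_product,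
        hg, Finset.mem_filter] at hw hw' h
      subst h
      have := hw.2.1.2.symm.trans hw'.2.1.2
      subst this; rfl
  calc 4 ^ A.card = (2 ^ A.card) ^ 2 := by rw [← pow_mul, mul_comm, pow_mul]; norm_num
    _ = (∑ t ∈ I, (g t).card) ^ 2 := by rw [h1]
    _ ≤ I.card * ∑ t ∈ I, (g t).card ^ 2 := sq_sum_le_card_mul_sum_sq
    _ ≤ _ := Nat.mul_le_mul h2 h3

/-- Pairs of subsets of `B` that agree above `p` and for which the ratio of the second product to the
first is within a factor `2` of `p`. -/
noncomputable def near (p : ℕ) (B : Finset ℕ) : Finset (Finset ℕ × Finset ℕ) :=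
  (B.powerset ×ˢ B.powerset).filter (fun z => (∀ r, p < r → (r ∈ z.1 ↔ r ∈ z.2)) ∧
    (((∏ q ∈ z.2, q : ℕ) : ℝ) / (∏ q ∈ z.1, q : ℕ)) / 2 < p ∧
    (p : ℝ) < 2 * (((∏ q ∈ z.2, q : ℕ) : ℝ) / (∏ q ∈ z.1, q : ℕ)))

/-- If the products of `E` and `F` share a dyadic interval and `p ∈ E` is the largest element in which
`E` and `F` differ, then `p` is determined up to a factor `2` by the remaining elements. -/
lemma mem_near {A E F : Finset ℕ} {p : ℕ} (hA : ∀ p ∈ A, p.Prime) (hE : E ⊆ A) (hF : F ⊆ A)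
    (hpE : p ∈ E) (hpF : p ∉ F) (hlog : Nat.log 2 (∏ p ∈ E, p) = Nat.log 2 (∏ p ∈ F, p))
    (hagree : ∀ r, p < r → (r ∈ E ↔ r ∈ F)) : (E.erase p, F) ∈ near p (A.erase p) := by
  have n1 : ∏ p ∈ E, p ≠ 0 := Finset.prod_ne_zero_iff.2 fun p hp => (hA p (hE hp)).ne_zero
  have n2 : ∏ p ∈ F, p ≠ 0 := Finset.prod_ne_zero_iff.2 fun p hp => (hA p (hF hp)).ne_zero
  have a1 := Nat.pow_log_le_self 2 n1
  have a2 := Nat.pow_log_le_self 2 n2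
  have a3 := Nat.lt_pow_succ_log_self (b := 2) (by norm_num) (∏ p ∈ E, p)
  have a4 := Nat.lt_pow_succ_log_self (b := 2) (by norm_num) (∏ p ∈ F, p)
  rw [Nat.succ_eq_add_one, pow_succ] at a3 a4
  rw [hlog] at a1 a3
  have hX : ∏ q ∈ E, q = p * ∏ q ∈ E.erase p, q := (Finset.mul_prod_erase E (fun q => q) hpE).symm
  have n3 : 0 < ∏ q ∈ E.erase p, q := Nat.pos_of_ne_zero fun h => n1 (by rw [hX, h, mul_zero])
  have b1 : p * (∏ q ∈ E.erase p, q) < 2 * ∏ q ∈ F, q := by rw [← hX]; omega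
  have b2 : ∏ q ∈ F, q < 2 * (p * ∏ q ∈ E.erase p, q) := by rw [← hX]; omega
  have c1 : (p : ℝ) * ((∏ q ∈ E.erase p, q : ℕ) : ℝ) < 2 * ((∏ q ∈ F, q : ℕ) : ℝ) := by
    exact_mod_cast b1
  have c2 : ((∏ q ∈ F, q : ℕ) : ℝ) < 2 * (p * ((∏ q ∈ E.erase p, q : ℕ) : ℝ)) := by
    exact_mod_cast b2
  have c3 : (0 : ℝ) < ((∏ q ∈ E.erase p, q : ℕ) : ℝ) := by exact_mod_cast n3
  rw [near, Finset.mem_filter, Finset.mem_product, Finset.mem_powerset, Finset.mem_powerset]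
  refine ⟨⟨Finset.erase_subset_erase _ hE, fun r hr => Finset.mem_erase.2 ⟨?_, hF hr⟩⟩, ?_, ?_, ?_⟩
  · rintro rfl; exact hpF hr
  · intro r hr
    rw [← hagree r hr, Finset.mem_erase]
    exact ⟨fun h => h.2, fun h => ⟨hr.ne', h⟩⟩
  · rw [div_div, div_lt_iff₀ (by positivity)]; linarith
  · rw [← mul_div_assoc, lt_div_iff₀ c3]; exact c1

/-- The diagonal pairs number `2 ^ #A`. A pair of distinct subsets is encoded by the largest element
`p` of the symmetric difference, the side on which it lies, and a pair in `near p (A.erase p)`. -/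
lemma coll_le {A : Finset ℕ} (hA : ∀ p ∈ A, p.Prime) :
    (coll A).card ≤ 2 ^ A.card + 2 * ∑ p ∈ A, (near p (A.erase p)).card := by
  rw [← Finset.card_filter_add_card_filter_not (s := coll A) (fun z => z.1 = z.2)]
  refine add_le_add ?_ ?_
  · rw [← Finset.card_powerset]
    refine Finset.card_le_card_of_injOn (fun z => z.1) ?_ ?_
    · intro z hz
      simp only [Finset.coe_filter, Set.mem_ofPred_eq, coll, Finset.mem_filter,
        Finset.mem_product] at hz
      exact hz.1.1.1
    · intro z hz w hw h
      simp only [Finset.coe_filter, Set.mem_ofPred_eq] at hz hw h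
      exact Prod.ext h (hz.2.symm.trans (h.trans hw.2))
  -- `T z` is the largest element in which the two sets of the pair `z` differ.
  · set T : Finset ℕ × Finset ℕ → ℕ := fun z => (symmDiff z.1 z.2).sup id with hT
    have hT1 : ∀ z : Finset ℕ × Finset ℕ, z.1 ≠ z.2 → T z ∈ symmDiff z.1 z.2 := by
      intro z hz
      have : (symmDiff z.1 z.2).Nonempty := by
        rw [Finset.nonempty_iff_ne_empty]
        exact fun h => hz (symmDiff_eq_bot.1 h)
      obtain ⟨i, hi, h⟩ := Finset.exists_mem_eq_sup _ this id
      simp only [hT, h]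
      exact hi
    have hT2 : ∀ z : Finset ℕ × Finset ℕ, ∀ r, T z < r → (r ∈ z.1 ↔ r ∈ z.2) := by
      intro z r hr
      by_contra h
      have : r ∈ symmDiff z.1 z.2 := by rw [Finset.mem_symmDiff]; tauto
      have h2 : r ≤ T z := Finset.le_sup (f := id) this
      omega
    have hcard : 2 * ∑ p ∈ A, (near p (A.erase p)).card =
        ((Finset.univ : Finset Bool) ×ˢ A.sigma (fun p => near p (A.erase p))).card := by
      rw [Finset.card_product, Finset.card_sigma]; simp
    rw [hcard]
    refine Finset.card_le_card_of_injOn (fun z => (decide (T z ∈ z.1),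
      ⟨T z, if T z ∈ z.1 then (z.1.erase (T z), z.2) else (z.2.erase (T z), z.1)⟩)) ?_ ?_
    · intro z hz
      simp only [Finset.coe_filter, Set.mem_ofPred_eq, coll, Finset.mem_filter,
        Finset.mem_product, Finset.mem_powerset] at hz
      obtain ⟨⟨⟨h1, h2⟩, h3⟩, h4⟩ := hz
      have h5 := hT1 z h4
      have h6 := hT2 z
      rw [Finset.mem_symmDiff] at h5
      rw [Finset.mem_coe, Finset.mem_product, Finset.mem_sigma]
      refine ⟨Finset.mem_univ _, ?_, ?_⟩
      · rcases h5 with h | h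
        · exact h1 h.1
        · exact h2 h.1
      · simp only
        split_ifs with h
        · have h7 : T z ∉ z.2 := by tauto
          exact mem_near hA h1 h2 h h7 h3 h6
        · have h7 : T z ∈ z.2 := by tauto
          exact mem_near hA h2 h1 h7 h h3.symm fun r hr => (h6 r hr).symm
    · intro z hz w hw h
      simp only [Finset.coe_filter, Set.mem_ofPred_eq] at hz hw
      have hz1 := hT1 z hz.2
      have hw1 := hT1 w hw.2
      rw [Finset.mem_symmDiff] at hz1 hw1
      simp only [Prod.mk.injEq, Sigma.mk.injEq, decide_eq_decide, heq_eq_eq] at h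
      obtain ⟨h1, h2, h3⟩ := h
      rw [← h2] at h1 h3 hw1
      by_cases hc : T z ∈ z.1
      · have hc' := h1.1 hc
        rw [if_pos hc, if_pos hc', Prod.mk.injEq] at h3
        refine Prod.ext ?_ h3.2
        rw [← Finset.insert_erase hc, h3.1, Finset.insert_erase hc']
      · have hc' : T z ∉ w.1 := fun h => hc (h1.2 h)
        rw [if_neg hc, if_neg hc', Prod.mk.injEq] at h3
        refine Prod.ext h3.2 ?_
        have d1 : T z ∈ z.2 := by tauto
        have d2 : T z ∈ w.2 := by tauto
        rw [← Finset.insert_erase d1, h3.1, Finset.insert_erase d2]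

lemma sum_blocks {P : ℕ → Finset ℕ} (hP : Monotone P) (f : ℕ → ℝ) (J V : ℕ) :
    ∑ p ∈ P (J + V) \ P J, f p = ∑ j ∈ Finset.range V, ∑ p ∈ P (J + j + 1) \ P (J + j), f p := by
  induction V with
  | zero => simp
  | succ V ih =>
    rw [Finset.sum_range_succ, ← ih, ← Finset.sum_union]
    · refine Finset.sum_congr ?_ fun _ _ => rfl
      ext p
      have h1 : p ∈ P J → p ∈ P (J + V) := fun h => hP (by omega) h
      have h2 : p ∈ P (J + V) → p ∈ P (J + V + 1) := fun h => hP (by omega) h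
      rw [← Nat.add_assoc]
      simp only [Finset.mem_union, Finset.mem_sdiff]
      tauto
    · rw [Finset.disjoint_left]
      intro p hp hq
      exact (Finset.mem_sdiff.1 hq).2 (Finset.mem_sdiff.1 hp).1

/-- Given a pair of subsets of `B`, the primes `p` of a block for which the pair belongs to `near p B`
lie in a short interval and have reciprocal sum `≤ C / 2 ^ i`. Such pairs agree above the block, which
leaves `2 ^ #B * 2 ^ #(B ∩ PP lam (i + 1))` of them. -/
lemma near_block {lam : ℕ → ℕ} {C : ℝ} (hB : Blocks lam C) (i : ℕ) {B : Finset ℕ}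
    (hBp : ∀ p ∈ B, p.Prime) :
    ∑ p ∈ PP lam (i + 1) \ PP lam i, 1 / (p : ℝ) * ((near p B).card : ℝ) ≤
      C / 2 ^ i * (2 ^ B.card * 2 ^ (B ∩ PP lam (i + 1)).card) := by
  set P' := PP lam (i + 1) with hP'
  set Y := (B.powerset ×ˢ B.powerset).filter (fun z => z.1 \ P' = z.2 \ P') with hY
  set U : Finset ℕ × Finset ℕ → ℝ := fun z =>
    ((∏ q ∈ z.2, q : ℕ) : ℝ) / (∏ q ∈ z.1, q : ℕ) with hU
  have hC := hB.C_pos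
  have hYc : (Y.card : ℝ) ≤ 2 ^ B.card * 2 ^ (B ∩ P').card := by
    have : Y.card ≤ (B.powerset ×ˢ (B ∩ P').powerset).card := by
      refine Finset.card_le_card_of_injOn (fun z => (z.1, z.2 ∩ P')) ?_ ?_
      · intro z hz
        simp only [hY, Finset.coe_filter, Set.mem_ofPred_eq, Finset.mem_product,
          Finset.mem_powerset] at hz
        rw [Finset.mem_coe, Finset.mem_product, Finset.mem_powerset, Finset.mem_powerset]
        exact ⟨hz.1.1, Finset.inter_subset_inter_right hz.1.2⟩
      · intro z hz w hw h
        simp only [hY, Finset.coe_filter, Set.mem_ofPred_eq] at hz hw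
        simp only [Prod.mk.injEq] at h
        refine Prod.ext h.1 ?_
        rw [← inter_union_sdiff' z.2 P', ← inter_union_sdiff' w.2 P', h.2, ← hz.2, ← hw.2, h.1]
    rw [Finset.card_product, Finset.card_powerset, Finset.card_powerset] at this
    exact_mod_cast this
  have h1 : ∀ p ∈ P' \ PP lam i, 1 / (p : ℝ) * ((near p B).card : ℝ) ≤
      ∑ z ∈ Y, if U z / 2 < (p : ℝ) ∧ (p : ℝ) < 2 * U z then 1 / (p : ℝ) else 0 := by
    intro p hp
    rw [← Finset.sum_filter, Finset.sum_const, nsmul_eq_mul, mul_comm]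
    refine mul_le_mul_of_nonneg_right ?_ (by positivity)
    have : near p B ⊆ Y.filter (fun z => U z / 2 < (p : ℝ) ∧ (p : ℝ) < 2 * U z) := by
      intro z hz
      rw [near, Finset.mem_filter, Finset.mem_product, Finset.mem_powerset,
        Finset.mem_powerset] at hz
      obtain ⟨⟨z1, z2⟩, z3, z4⟩ := hz
      rw [Finset.mem_filter, hY, Finset.mem_filter, Finset.mem_product, Finset.mem_powerset,
        Finset.mem_powerset]
      refine ⟨⟨⟨z1, z2⟩, ?_⟩, z4⟩
      have hpl := (mem_pr.1 (Finset.mem_sdiff.1 hp).1).1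
      have hgt : ∀ r ∈ B, r ∉ P' → p < r := by
        intro r hr hr'
        by_contra h
        exact hr' (mem_pr.2 ⟨by omega, hBp r hr⟩)
      ext r
      rw [Finset.mem_sdiff, Finset.mem_sdiff]
      constructor
      · rintro ⟨ha, hb⟩
        exact ⟨(z3 r (hgt r (z1 ha) hb)).1 ha, hb⟩
      · rintro ⟨ha, hb⟩
        exact ⟨(z3 r (hgt r (z2 ha) hb)).2 ha, hb⟩
    exact_mod_cast Finset.card_le_card this
  refine (Finset.sum_le_sum h1).trans ?_
  rw [Finset.sum_comm]
  have h2 : ∀ z ∈ Y, ∑ p ∈ P' \ PP lam i,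
      (if U z / 2 < (p : ℝ) ∧ (p : ℝ) < 2 * U z then 1 / (p : ℝ) else 0) ≤ C / 2 ^ i := by
    intro z hz
    rw [← Finset.sum_filter]
    rw [hY, Finset.mem_filter, Finset.mem_product, Finset.mem_powerset,
        Finset.mem_powerset] at hz
    have n1 : ∏ p ∈ z.1, p ≠ 0 := Finset.prod_ne_zero_iff.2 fun p hp => (hBp p (hz.1.1 hp)).ne_zero
    have n2 : ∏ p ∈ z.2, p ≠ 0 := Finset.prod_ne_zero_iff.2 fun p hp => (hBp p (hz.1.2 hp)).ne_zero
    have n1' : (0 : ℝ) < (∏ p ∈ z.1, p : ℕ) := by exact_mod_cast Nat.pos_of_ne_zero n1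
    have n2' : (0 : ℝ) < (∏ p ∈ z.2, p : ℕ) := by exact_mod_cast Nat.pos_of_ne_zero n2
    exact hB.short i (U z) (div_pos n2' n1')
  refine (Finset.sum_le_sum h2).trans ?_
  rw [Finset.sum_const, nsmul_eq_mul, mul_comm]
  gcongr

/-- The mean of the number of collisions over walks below the barrier that end on it is `≪ 2 ^ V`:
remove the largest prime in which the two subsets differ, sum over it with `near_block`, and bound
what remains with `crossing`. -/
lemma coll_sum {lam : ℕ → ℕ} {C : ℝ} (hB : Blocks lam C) : ∃ C' : ℝ, 0 < C' ∧ ∀ J V : ℕ, 1 ≤ V →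
    ∑ A ∈ paths (PP lam) J V 1 V, ((coll A).card : ℝ) * wt A ≤
      C' * ((2 * Real.log 2 * Real.exp 1) ^ V * dd V) := by
  obtain ⟨C1, hC1, hcr⟩ := crossing hB
  obtain ⟨C3, hC3, f3⟩ := dd_conv_sum
  obtain ⟨l1, l2, l3, l4⟩ := log_two_bounds
  have hC := hB.C_pos
  set s := Real.log 2 with hs
  refine ⟨36 + 2 * (C * C1 * C3), by positivity, fun J V hV => ?_⟩
  have hprime : ∀ k, ∀ A ∈ paths (PP lam) J V 1 k, ∀ p ∈ A, p.Prime := fun k A hA p hp =>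
    (mem_pr.1 (Finset.mem_sdiff.1 ((mem_paths.1 hA).1 hp)).1).2
  have hd := dd_pos V
  have a1 : ∑ A ∈ paths (PP lam) J V 1 V, ((coll A).card : ℝ) * wt A ≤
      2 ^ V * Z (PP lam) J V 1 V + 2 * ∑ A ∈ paths (PP lam) J V 1 V,
        (∑ p ∈ A, ((near p (A.erase p)).card : ℝ)) * wt A := by
    rw [Z, Finset.mul_sum, Finset.mul_sum, ← Finset.sum_add_distrib]
    refine Finset.sum_le_sum fun A hA => ?_
    have h := coll_le (hprime V A hA)
    rw [(mem_paths.1 hA).2.1] at h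
    have h' : ((coll A).card : ℝ) ≤ 2 ^ V + 2 * ∑ p ∈ A, ((near p (A.erase p)).card : ℝ) := by
      exact_mod_cast h
    calc _ ≤ _ := mul_le_mul_of_nonneg_right h' (wt_nonneg A)
      _ = _ := by ring
  have a2 : ∑ A ∈ paths (PP lam) J V 1 V, (∑ p ∈ A, ((near p (A.erase p)).card : ℝ)) * wt A ≤
      ∑ B ∈ paths (PP lam) J V 1 (V - 1),
        (∑ p ∈ PP lam (J + V) \ PP lam J, 1 / (p : ℝ) * ((near p B).card : ℝ)) * wt B := by
    have := paths_peel (PP lam) J V 1 (V - 1) (fun p B => ((near p B).card : ℝ))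
      (fun _ _ => by positivity)
    rwa [Nat.sub_add_cancel hV] at this
  have a3 : ∑ B ∈ paths (PP lam) J V 1 (V - 1),
        (∑ p ∈ PP lam (J + V) \ PP lam J, 1 / (p : ℝ) * ((near p B).card : ℝ)) * wt B ≤
      ∑ j ∈ Finset.range V, C * 2 ^ V * (1 / 2 ^ (j + 1) *
        ∑ B ∈ paths (PP lam) J V 1 (V - 1), 2 ^ (B ∩ PP lam (J + (j + 1))).card * wt B) := by
    simp_rw [Finset.mul_sum]
    rw [Finset.sum_comm]
    refine Finset.sum_le_sum fun B hB' => ?_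
    rw [sum_blocks hB.PP_mono, Finset.sum_mul]
    refine Finset.sum_le_sum fun j _ => ?_
    have h := near_block hB (J + j) (hprime _ B hB')
    rw [(mem_paths.1 hB').2.1] at h
    have hJ : (2 : ℝ) ^ j ≤ 2 ^ (J + j) := pow_le_pow_right₀ (by norm_num) (by omega)
    have h2 : C / 2 ^ (J + j) * (2 ^ (V - 1) * 2 ^ (B ∩ PP lam (J + j + 1)).card) ≤
        C / 2 ^ j * (2 ^ (V - 1) * 2 ^ (B ∩ PP lam (J + j + 1)).card) := by gcongr
    refine (mul_le_mul_of_nonneg_right (h.trans h2) (wt_nonneg B)).trans (le_of_eq ?_)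
    have e : (2 : ℝ) ^ V = 2 * 2 ^ (V - 1) := by
      rw [← pow_succ', Nat.sub_add_cancel hV]
    rw [e, pow_succ (2 : ℝ) j, ← Nat.add_assoc]
    field_simp
  have a4 : ∑ j ∈ Finset.range V, C * 2 ^ V * (1 / 2 ^ (j + 1) *
        ∑ B ∈ paths (PP lam) J V 1 (V - 1), 2 ^ (B ∩ PP lam (J + (j + 1))).card * wt B) ≤
      C * 2 ^ V * (C1 * (s * Real.exp 1) ^ V * (C3 * dd V)) := by
    rw [← Finset.mul_sum]
    refine mul_le_mul_of_nonneg_left ?_ (by positivity)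
    calc _ ≤ ∑ j ∈ Finset.range V, C1 * (s * Real.exp 1) ^ V * (dd (j + 1) * dd (V - (j + 1))) := by
          refine Finset.sum_le_sum fun j hj => ?_
          have := hcr J V (j + 1) (by rw [Finset.mem_range] at hj; omega)
          rwa [← mul_assoc] at this
      _ ≤ ∑ j ∈ Finset.range (V + 1), C1 * (s * Real.exp 1) ^ V * (dd j * dd (V - j)) := by
          rw [Finset.sum_range_succ' _ V]
          have := dd_pos 0
          have := dd_pos (V - 0)
          exact le_add_of_nonneg_right (by positivity)
      _ ≤ _ := by
          rw [← Finset.mul_sum]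
          exact mul_le_mul_of_nonneg_left (f3 V) (by positivity)
  have a5 := (mass_upper hB J V).1
  have e : (2 * s * Real.exp 1) ^ V = 2 ^ V * (s * Real.exp 1) ^ V := by rw [← mul_pow, mul_assoc]
  calc _ ≤ 2 ^ V * (36 * ((s * Real.exp 1) ^ V * dd V)) +
        2 * (C * 2 ^ V * (C1 * (s * Real.exp 1) ^ V * (C3 * dd V))) := by
        refine a1.trans (add_le_add (by gcongr) ?_)
        linarith [a2.trans (a3.trans a4)]
    _ = _ := by rw [e]; ring

/-! ### Lower bound for the logarithmic sum -/

/-- The mean of `log ∏ A` over the walks in `mass_lower` is `≪ 2 ^ V`, by the first theorem of Mertens. -/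
lemma log_sum {lam : ℕ → ℕ} {C : ℝ} (hB : Blocks lam C) (J : ℕ) : ∃ K : ℝ, 0 < K ∧ ∀ V : ℕ, 1 ≤ V →
    ∑ A ∈ paths (PP lam) J V 1 V, (∑ p ∈ A, Real.log p) * wt A ≤
      K * 2 ^ V * ((Real.log 2 * Real.exp 1) ^ V * dd V) := by
  obtain ⟨K, hK, f4⟩ := mertens_one
  have hC := hB.C_pos
  refine ⟨(C + K) * 2 ^ J * 36, by positivity, fun V hV => ?_⟩
  have h1 := paths_peel (PP lam) J V 1 (V - 1) (fun p _ => Real.log (p : ℝ))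
    (fun p _ => Real.log_natCast_nonneg p)
  rw [Nat.sub_add_cancel hV, ← Finset.mul_sum] at h1
  have h2 : ∑ p ∈ PP lam (J + V) \ PP lam J, 1 / (p : ℝ) * Real.log p ≤ (C + K) * 2 ^ (J + V) := by
    have g1 : 1 ≤ lam (J + V) := (Nat.one_le_two_pow).trans (hB.two_pow_le _)
    have g2 := (abs_le.1 (f4 _ g1)).2
    have g3 := hB.log_le (J + V)
    have g4 : (1 : ℝ) ≤ 2 ^ (J + V) := one_le_pow₀ (by norm_num)
    have g5 : K ≤ K * 2 ^ (J + V) := le_mul_of_one_le_right hK.le g4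
    have g6 : ∑ p ∈ PP lam (J + V) \ PP lam J, 1 / (p : ℝ) * Real.log p ≤
        ∑ p ∈ PP lam (J + V), Real.log p / p := by
      calc _ = ∑ p ∈ PP lam (J + V) \ PP lam J, Real.log p / p :=
            Finset.sum_congr rfl fun p _ => by ring
        _ ≤ _ := Finset.sum_le_sum_of_subset_of_nonneg Finset.sdiff_subset fun p _ _ =>
            div_nonneg (Real.log_natCast_nonneg p) (by positivity)
    unfold PP at g6 ⊢
    linarith
  have h3 := (mass_upper hB J V).2
  have h4 : ∑ A ∈ paths (PP lam) J V 1 (V - 1), wt A = Z (PP lam) J V 1 (V - 1) := rfl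
  rw [h4] at h1
  refine h1.trans ?_
  calc _ ≤ (C + K) * 2 ^ (J + V) * (36 * ((Real.log 2 * Real.exp 1) ^ V * dd V)) :=
        mul_le_mul h2 h3 (Z_nonneg _ _ _ _ _) (by positivity)
    _ = _ := by rw [pow_add]; ring

/-- A lower bound for the logarithmic sum of `NN`, over a set of numbers of logarithm `≪ 2 ^ V`. -/
theorem TT_lower {lam : ℕ → ℕ} {C : ℝ} (hB : Blocks lam C) : ∃ c K : ℝ, 0 < c ∧ 0 < K ∧
    ∀ V : ℕ, 1 ≤ V → ∃ S : Finset ℕ, (∀ a ∈ S, 1 ≤ a ∧ Real.log a ≤ K * 2 ^ V) ∧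
      c * ((2 * Real.log 2 * Real.exp 1) ^ V * dd V) ≤ ∑ a ∈ S, (NN a : ℝ) / a := by
  obtain ⟨J, hJ⟩ := mass_lower hB
  obtain ⟨K, hK, hlog⟩ := log_sum hB J
  obtain ⟨W, hW, hcoll⟩ := coll_sum hB
  obtain ⟨l1, l2, l3, l4⟩ := log_two_bounds
  set s := Real.log 2 with hs
  refine ⟨1 / (16 * W), 4 * K, by positivity, by positivity, fun V hV => ?_⟩
  set Q := (s * Real.exp 1) ^ V * dd V with hQ
  have hd := dd_pos V
  have hQ0 : 0 < Q := by positivity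
  set G := paths (PP lam) J V 1 V with hG
  have hprime : ∀ A ∈ G, ∀ p ∈ A, p.Prime := fun A hA p hp =>
    (mem_pr.1 (Finset.mem_sdiff.1 ((mem_paths.1 hA).1 hp)).1).2
  set G' := G.filter (fun A : Finset ℕ => ∑ p ∈ A, Real.log p ≤ 4 * K * 2 ^ V) with hG'
  have hlognn : ∀ A : Finset ℕ, 0 ≤ ∑ p ∈ A, Real.log p := fun A =>
    Finset.sum_nonneg fun p _ => Real.log_natCast_nonneg p
  -- Markov's inequality discards the sets with too large a product.
  have hmass : 1 / 4 * Q ≤ ∑ A ∈ G', wt A := by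
    have h1 : ∑ A ∈ G', wt A + ∑ A ∈ G.filter (fun A : Finset ℕ => ¬ ∑ p ∈ A, Real.log p ≤ 4 * K * 2 ^ V), wt A =
        ∑ A ∈ G, wt A := Finset.sum_filter_add_sum_filter_not _ _ _
    have h2 : 4 * K * 2 ^ V *
        ∑ A ∈ G.filter (fun A : Finset ℕ => ¬ ∑ p ∈ A, Real.log p ≤ 4 * K * 2 ^ V), wt A ≤ K * 2 ^ V * Q := by
      refine le_trans ?_ (hlog V hV)
      rw [Finset.mul_sum]
      refine (Finset.sum_le_sum fun A hA => ?_).trans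
        (Finset.sum_le_sum_of_subset_of_nonneg (Finset.filter_subset _ _)
          fun A _ _ => mul_nonneg (hlognn A) (wt_nonneg A))
      exact mul_le_mul_of_nonneg_right (not_le.1 (Finset.mem_filter.1 hA).2).le (wt_nonneg A)
    have h3 : ∑ A ∈ G.filter (fun A : Finset ℕ => ¬ ∑ p ∈ A, Real.log p ≤ 4 * K * 2 ^ V), wt A ≤ 1 / 4 * Q := by
      have hk : 0 < K * 2 ^ V := by positivity
      refine le_of_mul_le_mul_left ?_ hk
      linarith
    have h4 := hJ V
    unfold Z at h4
    rw [← hG, ← hQ] at h4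
    linarith
  -- `NN ≥ 4 ^ V / coll ≥ 2 * t * 2 ^ V - t ^ 2 * coll` for every real `t`.
  have hlin : ∀ t : ℝ, ∀ A ∈ G, 2 * t * 2 ^ V - t ^ 2 * ((coll A).card : ℝ) ≤ NN (∏ p ∈ A, p) := by
    intro t A hA
    have h1 := four_pow_le (hprime A hA)
    rw [(mem_paths.1 hA).2.1] at h1
    have h2 : (4 : ℝ) ^ V ≤ NN (∏ p ∈ A, p) * ((coll A).card : ℝ) := by exact_mod_cast h1
    have h3 : (4 : ℝ) ^ V = 2 ^ V * 2 ^ V := by rw [← mul_pow]; norm_num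
    have h4 : (0 : ℝ) < 4 ^ V := by positivity
    have h5 : (0 : ℝ) < (coll A).card := by
      rcases (Nat.cast_nonneg (α := ℝ) (coll A).card).eq_or_lt with h | h
      · rw [← h, mul_zero] at h2; linarith
      · exact h
    refine le_of_mul_le_mul_right ?_ h5
    nlinarith [sq_nonneg ((2 : ℝ) ^ V - t * (coll A).card)]
  have hsum : 1 / (16 * W) * (2 ^ V * Q) ≤ ∑ A ∈ G', (NN (∏ p ∈ A, p) : ℝ) * wt A := by
    -- The optimal `t`, given mass `Q / 4` and mean number of collisions `W * 2 ^ V`.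
    set t := 1 / (4 * W) with ht
    have ht0 : 0 < t := by positivity
    have h1 : 2 * t * 2 ^ V * ∑ A ∈ G', wt A - t ^ 2 * ∑ A ∈ G', ((coll A).card : ℝ) * wt A ≤
        ∑ A ∈ G', (NN (∏ p ∈ A, p) : ℝ) * wt A := by
      rw [Finset.mul_sum, Finset.mul_sum, ← Finset.sum_sub_distrib]
      refine Finset.sum_le_sum fun A hA => ?_
      have := mul_le_mul_of_nonneg_right (hlin t A (Finset.mem_filter.1 hA).1) (wt_nonneg A)
      linarith
    have h2 : ∑ A ∈ G', ((coll A).card : ℝ) * wt A ≤ W * (2 ^ V * Q) := by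
      have h3 := hcoll J V hV
      have e : (2 * s * Real.exp 1) ^ V = 2 ^ V * (s * Real.exp 1) ^ V := by rw [← mul_pow, mul_assoc]
      rw [e, mul_assoc, ← hQ] at h3
      refine le_trans (Finset.sum_le_sum_of_subset_of_nonneg (Finset.filter_subset _ _)
        fun A _ _ => mul_nonneg (by positivity) (wt_nonneg A)) h3
    calc 1 / (16 * W) * (2 ^ V * Q) = 2 * t * 2 ^ V * (1 / 4 * Q) - t ^ 2 * (W * (2 ^ V * Q)) := by
          rw [ht]; field_simp; ring
      _ ≤ 2 * t * 2 ^ V * ∑ A ∈ G', wt A - t ^ 2 * ∑ A ∈ G', ((coll A).card : ℝ) * wt A := by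
          gcongr
      _ ≤ _ := h1
  refine ⟨G'.image (fun A : Finset ℕ => ∏ p ∈ A, p), ?_, ?_⟩
  · intro a ha
    obtain ⟨A, hA, rfl⟩ := Finset.mem_image.1 ha
    obtain ⟨hA1, hA2⟩ := Finset.mem_filter.1 hA
    refine ⟨Nat.one_le_iff_ne_zero.2
      (Finset.prod_ne_zero_iff.2 fun p hp => (hprime A hA1 p hp).ne_zero), ?_⟩
    rw [log_prod (hprime A hA1)]
    exact hA2
  · rw [Finset.sum_image]
    · refine le_trans (le_of_eq ?_) (hsum.trans (le_of_eq ?_))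
      · rw [hQ, mul_assoc 2 s, mul_pow]; ring
      · exact Finset.sum_congr rfl fun A _ => by rw [wt_eq, mul_one_div]
    · intro A hA B hB h
      simp only at h
      rw [← Nat.primeFactors_prod (hprime A (Finset.mem_filter.1 hA).1), h,
        Nat.primeFactors_prod (hprime B (Finset.mem_filter.1 hB).1)]

/-! ### Order of magnitude -/

lemma theta_pos : 0 < 1 - deltaEFT := by
  obtain ⟨l1, l2, l3, l4⟩ := log_two_bounds
  have h : -1 < Real.log (Real.log 2) := by
    rw [Real.lt_log_iff_exp_lt l1, Real.exp_neg]
    have he := Real.exp_one_gt_d9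
    have : (Real.exp 1)⁻¹ ≤ 2⁻¹ := inv_anti₀ (by norm_num) (by linarith)
    linarith
  have : 1 - deltaEFT = (1 + Real.log (Real.log 2)) / Real.log 2 := by unfold deltaEFT; ring
  rw [this]
  exact div_pos (by linarith) l1

/-- The identity `2 e log 2 = 2 ^ (2 - δ)`, which is where the constant `δ` comes from. -/
lemma base_pow (V : ℕ) :
    (2 * Real.log 2 * Real.exp 1) ^ V = ((2 : ℝ) ^ V) ^ (1 + (1 - deltaEFT)) := by
  obtain ⟨l1, -⟩ := log_two_bounds
  have h : (2 : ℝ) ^ (1 + (1 - deltaEFT)) = 2 * Real.log 2 * Real.exp 1 := by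
    rw [Real.rpow_add (by norm_num), Real.rpow_one, mul_assoc]
    congr 1
    rw [Real.rpow_def_of_pos (by norm_num)]
    have : Real.log 2 * (1 - deltaEFT) = Real.log (Real.log 2) + 1 := by
      unfold deltaEFT; field_simp; ring
    rw [this, Real.exp_add, Real.exp_log l1]
  rw [← h, ← Real.rpow_natCast, ← Real.rpow_natCast, ← Real.rpow_mul (by norm_num),
    ← Real.rpow_mul (by norm_num), mul_comm]

lemma dd_eq (V : ℕ) : dd V = 1 / ((V : ℝ) + 1) ^ ((3 : ℝ) / 2) := by
  unfold dd
  have h : (0 : ℝ) < V + 1 := by positivity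
  rw [show (3 : ℝ) / 2 = 1 + 1 / 2 by norm_num, Real.rpow_add h, Real.rpow_one,
    ← Real.sqrt_eq_rpow]

/-- The order of magnitude `(log x) ^ (1 - δ) / (log log x) ^ (3 / 2)`. -/
noncomputable def FF (x : ℕ) : ℝ :=
  (Real.log x) ^ (1 - deltaEFT) / (Real.log (Real.log x)) ^ ((3 : ℝ) / 2)

lemma tendsto_log_nat : Tendsto (fun x : ℕ => Real.log x) atTop atTop :=
  Real.tendsto_log_atTop.comp tendsto_natCast_atTop_atTop

lemma tendsto_loglog_nat : Tendsto (fun x : ℕ => Real.log (Real.log x)) atTop atTop :=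
  Real.tendsto_log_atTop.comp tendsto_log_nat

lemma FF_large (A : ℝ) (hA : 0 < A) : ∀ᶠ x : ℕ in atTop, A ≤ FF x := by
  have h1 := (isLittleO_log_rpow_rpow_atTop (s := 1 - deltaEFT) (3 / 2 : ℝ) theta_pos).bound
    (c := 1 / A) (by positivity)
  have h2 := tendsto_log_nat.eventually h1
  filter_upwards [h2, tendsto_log_nat.eventually_ge_atTop 1,
    tendsto_loglog_nat.eventually_ge_atTop 1] with x h3 h4 h5
  have g1 : 0 < (Real.log (Real.log x)) ^ ((3 : ℝ) / 2) := Real.rpow_pos_of_pos (by linarith) _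
  have g2 : 0 < (Real.log x) ^ (1 - deltaEFT) := Real.rpow_pos_of_pos (by linarith) _
  rw [Real.norm_of_nonneg g1.le, Real.norm_of_nonneg g2.le, one_div, inv_mul_eq_div,
    le_div_iff₀ hA] at h3
  unfold FF
  rw [le_div_iff₀ g1]
  linarith

/-- Upper bound for the number of pairs of `n ≤ x` and a dyadic interval occupied by a divisor of `n`. -/
lemma NN_upper : ∃ C : ℝ, 0 < C ∧ ∀ᶠ x : ℕ in atTop,
    ∑ n ∈ Finset.Icc 1 x, (NN n : ℝ) ≤ C * (x * FF x) := by
  obtain ⟨lam, C, hB⟩ := exists_blocks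
  obtain ⟨C₁, hC₁, h1⟩ := upper_reduction
  obtain ⟨C₂, hC₂, h2⟩ := TT_upper hB
  have hC := hB.C_pos
  have hθ := theta_pos
  obtain ⟨l1, l2, -⟩ := log_two_bounds
  set θ := 1 - deltaEFT with hθd
  refine ⟨C₁ * (C₂ * ((2 * C) ^ (1 + θ) * 2 ^ ((3 : ℝ) / 2))), by positivity, ?_⟩
  filter_upwards [eventually_ge_atTop 2, tendsto_log_nat.eventually_ge_atTop 1,
    tendsto_loglog_nat.eventually_ge_atTop 1,
    tendsto_loglog_nat.eventually_ge_atTop (2 * Real.log C)] with x g1 g2 g3 g4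
  set ℓ := Real.log x with hℓ
  have hex : ∃ V, x ≤ lam V :=
    ⟨x, (Nat.lt_two_pow_self).le.trans (hB.two_pow_le x)⟩
  -- The least block endpoint beyond `x`, so that `2 ^ V ≍ log x`.
  obtain ⟨V, hV, hmin⟩ : ∃ V, x ≤ lam V ∧ ∀ m < V, ¬ x ≤ lam m :=
    ⟨Nat.find hex, Nat.find_spec hex, fun m hm => Nat.find_min hex hm⟩
  have hV1 : 1 ≤ V := by
    rcases Nat.eq_zero_or_pos V with h | h
    · rw [h, hB.zero] at hV; omega
    · exact h
  have e1 : (2 : ℝ) ^ V ≤ 2 * C * ℓ := by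
    have a1 := hmin (V - 1) (by omega)
    have a2 := hB.le_log (V - 1)
    have a3 : Real.log ((lam (V - 1) : ℝ) + 1) ≤ ℓ := by
      refine Real.log_le_log (by positivity) ?_
      exact_mod_cast not_le.1 a1
    have a4 : (2 : ℝ) ^ V = 2 * 2 ^ (V - 1) := by
      rw [← pow_succ', Nat.sub_add_cancel hV1]
    have a5 := mul_le_mul_of_nonneg_left a3 hC.le
    rw [a4]; linarith
  have e2 : ℓ ≤ C * 2 ^ V := by
    refine le_trans (Real.log_le_log (by positivity) ?_) (hB.log_le V)
    exact_mod_cast hV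
  have e3 : Real.log ℓ / 2 ≤ (V : ℝ) + 1 := by
    have a1 := Real.log_le_log (by linarith) e2
    rw [Real.log_mul hC.ne' (by positivity), Real.log_pow] at a1
    have : (V : ℝ) * Real.log 2 ≤ V := mul_le_of_le_one_right (by positivity) l2
    linarith
  have hT := h2 V x hV
  rw [base_pow, dd_eq, ← hθd] at hT
  have e4 : ((2 : ℝ) ^ V) ^ (1 + θ) ≤ (2 * C) ^ (1 + θ) * (ℓ * ℓ ^ θ) := by
    have : ℓ * ℓ ^ θ = ℓ ^ (1 + θ) := by rw [Real.rpow_add (by linarith), Real.rpow_one]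
    rw [this, ← Real.mul_rpow (by positivity) (by linarith)]
    exact Real.rpow_le_rpow (by positivity) e1 (by linarith)
  have p0 : 0 < (Real.log ℓ) ^ ((3 : ℝ) / 2) := Real.rpow_pos_of_pos (by linarith) _
  have e5 : 1 / ((V : ℝ) + 1) ^ ((3 : ℝ) / 2) ≤
      2 ^ ((3 : ℝ) / 2) / (Real.log ℓ) ^ ((3 : ℝ) / 2) := by
    have a1 : (Real.log ℓ / 2) ^ ((3 : ℝ) / 2) ≤ ((V : ℝ) + 1) ^ ((3 : ℝ) / 2) :=
      Real.rpow_le_rpow (by linarith) e3 (by norm_num)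
    rw [Real.div_rpow (by linarith) (by norm_num)] at a1
    have a2 := one_div_le_one_div_of_le (by positivity) a1
    rwa [one_div_div] at a2
  have p1 : 0 < ℓ ^ θ := Real.rpow_pos_of_pos (by linarith) _
  have e6 : TT x ≤ C₂ * ((2 * C) ^ (1 + θ) * (ℓ * ℓ ^ θ) *
      (2 ^ ((3 : ℝ) / 2) / (Real.log ℓ) ^ ((3 : ℝ) / 2))) :=
    hT.trans (mul_le_mul_of_nonneg_left (mul_le_mul e4 e5 (by positivity) (by positivity)) hC₂.le)
  have e7 := h1 x (by omega)
  have e8 : 0 ≤ ∑ n ∈ Finset.Icc 1 x, (NN n : ℝ) := Finset.sum_nonneg fun _ _ => by positivity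
  have hx0 : (0 : ℝ) ≤ x := by positivity
  have e9 : (∑ n ∈ Finset.Icc 1 x, (NN n : ℝ)) * ℓ ≤
      C₁ * (C₂ * ((2 * C) ^ (1 + θ) * 2 ^ ((3 : ℝ) / 2))) * (x * FF x) * ℓ := by
    calc _ ≤ (∑ n ∈ Finset.Icc 1 x, (NN n : ℝ)) * (1 + ℓ) := by
          rw [mul_add, mul_one]; linarith
      _ ≤ C₁ * x * TT x := e7
      _ ≤ C₁ * x * _ := mul_le_mul_of_nonneg_left e6 (by positivity)
      _ = _ := by unfold FF; rw [← hℓ, ← hθd]; ring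
  exact le_of_mul_le_mul_right e9 (by linarith)

/-- Lower bound matching `NN_upper` in order of magnitude. -/
lemma NN_lower : ∃ c : ℝ, 0 < c ∧ ∀ᶠ x : ℕ in atTop,
    c * (x * FF x) ≤ ∑ n ∈ Finset.Icc 1 x, (NN n : ℝ) := by
  obtain ⟨lam, C, hB⟩ := exists_blocks
  obtain ⟨c, K, hc, hK, hTT⟩ := TT_lower hB
  have hθ := theta_pos
  obtain ⟨l1, l2, l3, -⟩ := log_two_bounds
  set θ := 1 - deltaEFT with hθd
  refine ⟨1 / 8 * (c * (1 / (6 * K) ^ (1 + θ) * (1 / 3 ^ ((3 : ℝ) / 2)))), by positivity, ?_⟩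
  filter_upwards [eventually_ge_atTop 2, tendsto_log_nat.eventually_ge_atTop 1,
    tendsto_loglog_nat.eventually_ge_atTop 1,
    tendsto_loglog_nat.eventually_ge_atTop (1 - 2 * Real.log (3 * K)),
    tendsto_log_nat.eventually_ge_atTop (6 * K),
    tendsto_log_nat.eventually_ge_atTop (3 * Real.log (50 ^ 4))] with x g1 g2 g3 g4 g5 g6
  set ℓ := Real.log x with hℓ
  have hx0 : (0 : ℝ) < x := by positivity
  -- `2 ^ V ≍ log x`, chosen so that every `a` of logarithm `≤ K * 2 ^ V` is at most `x ^ (1/3)`.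
  obtain ⟨V, hV, hV'⟩ := exists_nat_pow_near (x := ℓ / (3 * K)) (y := 2)
    (by rw [le_div_iff₀ (by positivity)]; linarith) (by norm_num)
  have hV1 : 1 ≤ V := by
    rcases Nat.eq_zero_or_pos V with h | h
    · rw [h, div_lt_iff₀ (by positivity)] at hV'; norm_num at hV'; linarith
    · exact h
  have e1 : ℓ / (6 * K) ≤ 2 ^ V := by
    rw [pow_succ, div_lt_iff₀ (by positivity)] at hV'
    rw [div_le_iff₀ (by positivity)]; linarith
  have e2 : (V : ℝ) + 1 ≤ 3 * Real.log ℓ := by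
    have a1 := Real.log_le_log (by positivity) hV
    rw [Real.log_div (by linarith) (by positivity), Real.log_pow] at a1
    have : (V : ℝ) * 1 ≤ V * (2 * Real.log 2) := mul_le_mul_of_nonneg_left l3.le (by positivity)
    linarith
  obtain ⟨S, hS, hsum⟩ := hTT V hV1
  set M := ⌊Real.exp (ℓ / 3)⌋₊ with hM
  have m1 : 50 ^ 4 ≤ M := by
    refine Nat.le_floor ?_
    rw [show ((50 ^ 4 : ℕ) : ℝ) = 50 ^ 4 by norm_num, ← Real.log_le_iff_le_exp (by norm_num),
      le_div_iff₀ (by norm_num), mul_comm]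
    exact g6
  have m2 : M ^ 3 ≤ x := by
    have a1 : (M : ℝ) ≤ Real.exp (ℓ / 3) := Nat.floor_le (Real.exp_pos _).le
    have a2 : (M : ℝ) ^ 3 ≤ x := by
      calc (M : ℝ) ^ 3 ≤ Real.exp (ℓ / 3) ^ 3 := pow_le_pow_left₀ (by positivity) a1 3
        _ = Real.exp ℓ := by rw [← Real.exp_nat_mul]; congr 1; push_cast; ring
        _ = x := Real.exp_log hx0
    exact_mod_cast a2
  have m3 : ∀ a ∈ S, 1 ≤ a ∧ a ≤ M := by
    intro a ha
    obtain ⟨b1, b2⟩ := hS a ha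
    refine ⟨b1, Nat.le_floor ?_⟩
    rw [← Real.log_le_iff_le_exp (by positivity)]
    rw [le_div_iff₀ (by positivity)] at hV
    linarith
  have hlow := lower_reduction M x m1 m2 S m3
  rw [base_pow, dd_eq, ← hθd] at hsum
  have p0 : 0 < (Real.log ℓ) ^ ((3 : ℝ) / 2) := Real.rpow_pos_of_pos (by linarith) _
  have p1 : 0 < ℓ ^ θ := Real.rpow_pos_of_pos (by linarith) _
  have e4 : ℓ * ℓ ^ θ * (1 / (6 * K) ^ (1 + θ)) ≤ ((2 : ℝ) ^ V) ^ (1 + θ) := by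
    have : ℓ * ℓ ^ θ = ℓ ^ (1 + θ) := by rw [Real.rpow_add (by linarith), Real.rpow_one]
    rw [this, mul_one_div, ← Real.div_rpow (by linarith) (by positivity)]
    exact Real.rpow_le_rpow (by positivity) e1 (by linarith)
  have e5 : 1 / 3 ^ ((3 : ℝ) / 2) * (1 / (Real.log ℓ) ^ ((3 : ℝ) / 2)) ≤
      1 / ((V : ℝ) + 1) ^ ((3 : ℝ) / 2) := by
    rw [one_div_mul_one_div, ← Real.mul_rpow (by norm_num) (by linarith)]
    exact one_div_le_one_div_of_le (by positivity)
      (Real.rpow_le_rpow (by positivity) e2 (by norm_num))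
  have e6 := mul_le_mul e4 e5 (by positivity) (by positivity)
  have e9 : 1 / 8 * (c * (1 / (6 * K) ^ (1 + θ) * (1 / 3 ^ ((3 : ℝ) / 2)))) * (x * FF x) * ℓ ≤
      (∑ n ∈ Finset.Icc 1 x, (NN n : ℝ)) * ℓ := by
    calc _ = (x : ℝ) / 8 * (c * (ℓ * ℓ ^ θ * (1 / (6 * K) ^ (1 + θ)) *
          (1 / 3 ^ ((3 : ℝ) / 2) * (1 / (Real.log ℓ) ^ ((3 : ℝ) / 2))))) := by
          unfold FF; rw [← hℓ, ← hθd]; ring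
      _ ≤ (x : ℝ) / 8 * ∑ a ∈ S, (NN a : ℝ) / a :=
          mul_le_mul_of_nonneg_left
            ((mul_le_mul_of_nonneg_left e6 hc.le).trans hsum) (by positivity)
      _ ≤ _ := by rw [mul_comm _ ℓ]; exact hlow
  exact le_of_mul_le_mul_right e9 (by linarith)

end EFT

theorem Gfun_sum_bounds :
    ∃ c₁ : ℝ, 0 < c₁ ∧ ∃ c₂ : ℝ, 0 < c₂ ∧ ∀ᶠ x : ℕ in atTop,
      c₁ * x * (Real.log x) ^ (1 - deltaEFT) / (Real.log (Real.log x)) ^ ((3 : ℝ) / 2) ≤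
        (x : ℝ) * Real.log x - ∑ n ∈ Finset.Icc 1 x, Gfun n ∧
      (x : ℝ) * Real.log x - ∑ n ∈ Finset.Icc 1 x, Gfun n ≤
        c₂ * x * (Real.log x) ^ (1 - deltaEFT) / (Real.log (Real.log x)) ^ ((3 : ℝ) / 2) := by
  obtain ⟨C, hC, hup⟩ := EFT.NN_upper
  obtain ⟨c, hc, hlo⟩ := EFT.NN_lower
  -- The lower constant is half of `c / 4`; the other half pays for the error `2 * x`.
  refine ⟨c / 8, by positivity, 2 * C + 2, by positivity, ?_⟩
  filter_upwards [hup, hlo, EFT.FF_large (1 + 16 / c) (by positivity), eventually_ge_atTop 1]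
    with x h1 h2 h3 hx
  obtain ⟨r1, r2⟩ := EFT.reduction x hx
  have e : ∀ b : ℝ, b * x * (Real.log x) ^ (1 - deltaEFT) /
      (Real.log (Real.log x)) ^ ((3 : ℝ) / 2) = b * (x * EFT.FF x) := by
    intro b; unfold EFT.FF; ring
  rw [e, e]
  have hx0 : (0 : ℝ) ≤ x := by positivity
  have hc16 : 0 < 16 / c := by positivity
  -- the error terms `± 2 * x` are absorbed because `FF x → ∞`
  have h4 : (x : ℝ) ≤ x * EFT.FF x := le_mul_of_one_le_right hx0 (by linarith)
  have h5 : 16 * (x : ℝ) ≤ c * (x * EFT.FF x) := by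
    have := mul_le_mul_of_nonneg_left (show 16 / c ≤ EFT.FF x by linarith)
      (show 0 ≤ c * x by positivity)
    calc 16 * (x : ℝ) = c * x * (16 / c) := by field_simp
      _ ≤ _ := this
      _ = _ := by ring
  constructor <;> linarith
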